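/- (Triangle diagram in terms of the correlation length.) Suppose d ≥ 1, 0 < α < d and α < 1. Then there is a constant C₁ < ∞ (depending only on d, α, c, C) such that for every β with β_c/2 ≤ β < β_c: if α < d/3 then ∇_β ≤ C₁; if α = d/3 then ∇_β ≤ C₁ (1 + log ξ(β)); and if α > d/3 then ∇_β ≤ C₁ ξ(β)^{3α−d}. -/

import Mathlib

open MeasureTheory ENNReal

namespace LRP

/-- The vertex set `ℤ^d`. -/
abbrev V (d : ℕ) : Type := Fin d → ℤ

/-- The `ℓ^∞` norm of a lattice point, as a natural number. -/
def normInf {d : ℕ} (x : V d) : ℕ := Finset.univ.sup fun i => (x i).natAbs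

/-- A percolation configuration: each (unordered) pair of vertices is open or closed. -/
abbrev Config (d : ℕ) : Type := Sym2 (V d) → Bool

/-- The probability `1 - exp (-β J(x,y))` that the edge `e = {x,y}` is open
(the symmetrization `(J x y + J y x)/2` equals `J x y` for symmetric `J`). -/
noncomputable def edgeProb {d : ℕ} (J : V d → V d → ℝ) (β : ℝ) (e : Sym2 (V d)) : ℝ≥0∞ :=
  ENNReal.ofReal (1 - Real.exp (-β *
    Sym2.lift ⟨fun x y => (J x y + J y x) / 2, fun x y => by dsimp only; rw [add_comm]⟩ e))

/-- `IsLRP J P` asserts that for each `β`, `P β` is the law of long-range percolation on `ℤ^d`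
with kernel `J` at inverse temperature `β`: distinct edges are open independently, edge `{x,y}`
being open with probability `1 - exp (-β J(x,y))`.  This is expressed by prescribing the
probability of every finite cylinder event, which characterizes the measure uniquely. -/
def IsLRP {d : ℕ} (J : V d → V d → ℝ) (P : ℝ → Measure (Config d)) : Prop :=
  ∀ (β : ℝ) (s : Finset (Sym2 (V d))) (f : Sym2 (V d) → Bool),
    P β {ω | ∀ e ∈ s, ω e = f e} =
      ∏ e ∈ s, (if f e then edgeProb J β e else 1 - edgeProb J β e)

/-- Two vertices are adjacent if they are distinct and the edge between them is open. -/
def adj {d : ℕ} (ω : Config d) (x y : V d) : Prop := x ≠ y ∧ ω s(x, y) = true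

/-- `x ↔ y`: the vertices are connected by a path of open edges. -/
def conn {d : ℕ} (ω : Config d) (x y : V d) : Prop := Relation.ReflTransGen (adj ω) x y

/-- `x ↔ y` inside `A`: connected by an open path all of whose vertices lie in `A`. -/
def connIn {d : ℕ} (ω : Config d) (A : Set (V d)) (x y : V d) : Prop :=
  x ∈ A ∧ y ∈ A ∧ Relation.ReflTransGen (fun a b => a ∈ A ∧ b ∈ A ∧ adj ω a b) x y

/-- The cluster of `x`. -/
def cluster {d : ℕ} (ω : Config d) (x : V d) : Set (V d) := {y | conn ω x y}

/-- The critical point `β_c`. -/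
noncomputable def betaC {d : ℕ} (P : ℝ → Measure (Config d)) : ℝ :=
  sInf {β : ℝ | 0 ≤ β ∧ 0 < P β {ω | ∃ x, (cluster ω x).Infinite}}

/-- The two-point function `ℙ_β(x ↔ y)`. -/
noncomputable def twoPoint {d : ℕ} (P : ℝ → Measure (Config d)) (β : ℝ) (x y : V d) : ℝ≥0∞ :=
  P β {ω | conn ω x y}

/-- The susceptibility `χ(β) = Σ_x ℙ_β(0 ↔ x)`. -/
noncomputable def chi {d : ℕ} (P : ℝ → Measure (Config d)) (β : ℝ) : ℝ≥0∞ :=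
  ∑' x : V d, twoPoint P β 0 x

/-- `Σ_{x ∈ [-n,n]^d} ℙ_β(0 ↔ x)`. -/
noncomputable def boxSum {d : ℕ} (P : ℝ → Measure (Config d)) (β : ℝ) (n : ℕ) : ℝ≥0∞ :=
  ∑' x : V d, if normInf x ≤ n then twoPoint P β 0 x else 0

/-- The correlation length `ξ(β) = inf {r ≥ 1 : Σ_{x ∈ [-r,r]^d} ℙ_β(0↔x) ≥ χ(β)/2}`
(`= ∞` if no such `r` exists). -/
noncomputable def xi {d : ℕ} (P : ℝ → Measure (Config d)) (β : ℝ) : ℝ≥0∞ :=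
  sInf {r : ℝ≥0∞ | ∃ n : ℕ, r = (n : ℝ≥0∞) ∧ 1 ≤ n ∧ chi P β ≤ 2 * boxSum P β n}

/-- The triangle diagram `∇_β`. -/
noncomputable def triangle {d : ℕ} (P : ℝ → Measure (Config d)) (β : ℝ) : ℝ≥0∞ :=
  ∑' x : V d, ∑' y : V d, twoPoint P β 0 x * twoPoint P β x y * twoPoint P β y 0

/-- The standing assumptions on the kernel `J`: symmetric, integrable, translation-invariant,
with `c ‖x-y‖^{-d-α} ≤ J(x,y) ≤ C ‖x-y‖^{-d-α}` for distinct `x, y`, where `0 < α < d`. -/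
structure KernelHyp (d : ℕ) (J : V d → V d → ℝ) (α c C : ℝ) : Prop where
  d_pos : 1 ≤ d
  symm : ∀ x y, J x y = J y x
  transInv : ∀ x y z : V d, J (x + z) (y + z) = J x y
  nonneg : ∀ x y, 0 ≤ J x y
  integrable : Summable fun x : V d => J 0 x
  alpha_pos : 0 < α
  alpha_lt_d : α < (d : ℝ)
  c_pos : 0 < c
  c_le_C : c ≤ C
  lower : ∀ x y : V d, x ≠ y → c * (normInf (x - y) : ℝ) ^ (-(d : ℝ) - α) ≤ J x y
  upper : ∀ x y : V d, x ≠ y → J x y ≤ C * (normInf (x - y) : ℝ) ^ (-(d : ℝ) - α)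

/-!
A large cluster splits into two edge-disjoint pieces, so the van den Berg–Kesten inequality shows
that the cluster sizes in a finite set of vertices are tight around a typical scale. If the expected
cluster size in a box of radius `r` were much larger than `r ^ α`, clusters of neighbouring boxes
would merge through the long edges and the susceptibility would be infinite. By the sharpness
argument of Duminil-Copin and Tassion it is finite for `β < β_c`, so the expected cluster size
inside a box is `O(r ^ α)`, uniformly in `β ∈ [β_c / 2, β_c)`.

Averaging the Simon–Lieb inequality over the radii in `[R, 2R)` upgrades this to the pointwise
bound `ℙ(0 ↔ x) = O(‖x‖ ^ (α - d))`: for `α < 1`, short edges cross the boundary of a random box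
too rarely to matter, which makes the inequality a contraction.

Finally, the triangle is at most three times its part in which `‖x‖ ≤ ‖y‖ ≤ 2 ‖y - x‖`. There, for
fixed `y`, the sum over `x` is `O(‖y‖ ^ (2 * α - d))`, and summing this against `ℙ(0 ↔ y)` over
`‖y‖ ≤ ξ` gives the three regimes. The part `‖y‖ > ξ` is at most of order
`ξ ^ (α - d) * χ ^ 2 = O(ξ ^ (3 * α - d))`, since half of `χ` comes from the box of radius `ξ`.
-/

/-! ### Bernoulli percolation on a finite edge set -/

section Events

theorem indicator_one_le_indicator_one {α : Type*} {A B : Set α} {a b : α} (h : a ∈ A → b ∈ B) :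
    A.indicator (1 : α → ℝ) a ≤ B.indicator 1 b := by
  by_cases ha : a ∈ A
  · simp [ha, h ha]
  · rw [Set.indicator_of_notMem ha]
    exact Set.indicator_nonneg (fun _ _ => zero_le_one) b

variable {ι : Type*} {A B : Set (Finset ι)}

theorem monotone_indicator_of_isUpperSet (hA : IsUpperSet A) :
    Monotone (A.indicator (1 : Finset ι → ℝ)) :=
  fun _ _ hST => indicator_one_le_indicator_one fun hS => hA hST hS

/-- The disjoint occurrence `A ∘ B` of two increasing events: they are witnessed by disjoint sets
of open edges. -/
def disjOcc (A B : Set (Finset ι)) : Set (Finset ι) :=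
  {S | ∃ S₁ S₂, S₁ ⊆ S ∧ S₂ ⊆ S ∧ Disjoint S₁ S₂ ∧ S₁ ∈ A ∧ S₂ ∈ B}

theorem disjOcc_subset_disjOcc {A' B' : Set (Finset ι)} (hA : A ⊆ A') (hB : B ⊆ B') :
    disjOcc A B ⊆ disjOcc A' B' := by
  rintro S ⟨S₁, S₂, h₁, h₂, hd, hS₁, hS₂⟩
  exact ⟨S₁, S₂, h₁, h₂, hd, hA hS₁, hB hS₂⟩

theorem isUpperSet_disjOcc (A B : Set (Finset ι)) : IsUpperSet (disjOcc A B) := by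
  rintro S T hST ⟨S₁, S₂, h₁, h₂, h⟩
  exact ⟨S₁, S₂, h₁.trans hST, h₂.trans hST, h⟩

end Events

section Bernoulli

variable {ι : Type*} [DecidableEq ι] {E F : Finset ι} {p : ι → ℝ} {f g : Finset ι → ℝ}

/-- The expectation of `f S`, where `S` is the random subset of `E` containing each `e ∈ E`
independently with probability `p e`.  Finite-volume percolation is handled through such finite
sums, a configuration being encoded as its set of open edges. -/
noncomputable def expect (E : Finset ι) (p : ι → ℝ) (f : Finset ι → ℝ) : ℝ :=
  ∑ S ∈ E.powerset, (∏ e ∈ E, if e ∈ S then p e else 1 - p e) * f S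

theorem expect_empty (p : ι → ℝ) (f : Finset ι → ℝ) : expect ∅ p f = f ∅ := by
  simp [expect]

theorem expect_congr (h : ∀ S ⊆ E, f S = g S) : expect E p f = expect E p g :=
  Finset.sum_congr rfl fun S hS => by rw [h S (Finset.mem_powerset.1 hS)]

theorem expect_insert {e : ι} (he : e ∉ E) (p : ι → ℝ) (f : Finset ι → ℝ) :
    expect (insert e E) p f
      = p e * expect E p (fun S => f (insert e S)) + (1 - p e) * expect E p f := by
  have weight_insert : ∀ S : Finset ι, ∏ x ∈ E, (if x ∈ insert e S then p x else 1 - p x)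
      = ∏ x ∈ E, (if x ∈ S then p x else 1 - p x) := fun S =>
    Finset.prod_congr rfl fun x hx => by simp [ne_of_mem_of_not_mem hx he]
  unfold expect
  rw [Finset.sum_powerset_insert he, add_comm, Finset.mul_sum, Finset.mul_sum]
  congr 1 <;> refine Finset.sum_congr rfl fun S hS => ?_
  · rw [Finset.prod_insert he, weight_insert, if_pos (Finset.mem_insert_self e S), mul_assoc]
  · have heS : e ∉ S := fun h => he (Finset.mem_powerset.1 hS h)
    rw [Finset.prod_insert he, if_neg heS, mul_assoc]

theorem expect_add (E : Finset ι) (p : ι → ℝ) (f g : Finset ι → ℝ) :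
    expect E p (fun S => f S + g S) = expect E p f + expect E p g := by
  simp [expect, mul_add, Finset.sum_add_distrib]

theorem expect_sub (E : Finset ι) (p : ι → ℝ) (f g : Finset ι → ℝ) :
    expect E p (fun S => f S - g S) = expect E p f - expect E p g := by
  simp [expect, mul_sub, Finset.sum_sub_distrib]

theorem expect_const_mul (E : Finset ι) (p : ι → ℝ) (c : ℝ) (f : Finset ι → ℝ) :
    expect E p (fun S => c * f S) = c * expect E p f := by
  simp only [expect, Finset.mul_sum, mul_left_comm]

theorem expect_mul_const (E : Finset ι) (p : ι → ℝ) (c : ℝ) (f : Finset ι → ℝ) :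
    expect E p (fun S => f S * c) = expect E p f * c := by
  simp only [expect, Finset.sum_mul, mul_assoc]

theorem expect_sum {κ : Type*} (E : Finset ι) (p : ι → ℝ) (s : Finset κ)
    (f : κ → Finset ι → ℝ) :
    expect E p (fun S => ∑ k ∈ s, f k S) = ∑ k ∈ s, expect E p (f k) := by
  simp only [expect, Finset.mul_sum]
  rw [Finset.sum_comm]

theorem expect_const (E : Finset ι) (p : ι → ℝ) (c : ℝ) : expect E p (fun _ => c) = c := by
  induction E using Finset.induction_on with
  | empty => rw [expect_empty]
  | insert e E he ih => rw [expect_insert he, ih]; ring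

theorem expect_mono (hp : ∀ e, p e ∈ Set.Icc 0 1) (h : ∀ S ⊆ E, f S ≤ g S) :
    expect E p f ≤ expect E p g := by
  refine Finset.sum_le_sum fun S hS =>
    mul_le_mul_of_nonneg_left (h S (Finset.mem_powerset.1 hS)) (Finset.prod_nonneg fun e _ => ?_)
  split_ifs
  exacts [(hp e).1, sub_nonneg.2 (hp e).2]

theorem expect_nonneg (hp : ∀ e, p e ∈ Set.Icc 0 1) (h : ∀ S ⊆ E, 0 ≤ f S) :
    0 ≤ expect E p f := by
  simpa only [expect_const] using expect_mono (f := fun _ => 0) hp h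

theorem expect_union (h : Disjoint E F) (p : ι → ℝ) (f : Finset ι → ℝ) :
    expect (E ∪ F) p f = expect E p (fun S => expect F p (fun T => f (S ∪ T))) := by
  induction E using Finset.induction_on generalizing f with
  | empty => simp [expect_empty]
  | insert e E he ih =>
    rw [Finset.disjoint_insert_left] at h
    rw [Finset.insert_union, expect_insert (by simp [he, h.1]), expect_insert he, ih h.2, ih h.2]
    simp only [Finset.insert_union]

theorem expect_inter_of_subset (h : F ⊆ E) (p : ι → ℝ) (f : Finset ι → ℝ) :
    expect E p (fun S => f (S ∩ F)) = expect F p f := by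
  rw [← Finset.union_sdiff_of_subset h, expect_union Finset.disjoint_sdiff]
  refine expect_congr fun S hS => ?_
  rw [← expect_const (E \ F) p (f S)]
  refine expect_congr fun T hT => ?_
  have hTF : Disjoint T F := Finset.disjoint_sdiff.symm.mono_left hT
  rw [Finset.union_inter_distrib_right, Finset.inter_eq_left.2 hS,
    Finset.disjoint_iff_inter_eq_empty.1 hTF, Finset.union_empty]

theorem expect_mul_of_disjoint {G : Finset ι} (hEG : E ⊆ G) (hFG : F ⊆ G) (h : Disjoint E F)
    (p : ι → ℝ) (f g : Finset ι → ℝ) :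
    expect G p (fun S => f (S ∩ E) * g (S ∩ F)) = expect E p f * expect F p g := by
  have marginal := expect_inter_of_subset (Finset.union_subset hEG hFG) p
    (fun S => f (S ∩ E) * g (S ∩ F))
  simp only [Finset.inter_assoc, Finset.inter_eq_right.2 Finset.subset_union_left,
    Finset.inter_eq_right.2 Finset.subset_union_right] at marginal
  rw [marginal, expect_union h, ← expect_mul_const]
  refine expect_congr fun S hS => ?_
  rw [← expect_const_mul]
  refine expect_congr fun T hT => ?_
  have hSF : S ∩ F = ∅ := Finset.disjoint_iff_inter_eq_empty.1 (h.mono_left hS)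
  have hTE : T ∩ E = ∅ := Finset.disjoint_iff_inter_eq_empty.1 (h.symm.mono_left hT)
  rw [Finset.union_inter_distrib_right, Finset.union_inter_distrib_right, hSF, hTE,
    Finset.inter_eq_left.2 hS, Finset.inter_eq_left.2 hT, Finset.union_empty, Finset.empty_union]

theorem expect_mono_set (hEF : E ⊆ F) (hp : ∀ e, p e ∈ Set.Icc 0 1) (hf : Monotone f) :
    expect E p f ≤ expect F p f := by
  rw [← expect_inter_of_subset hEF]
  exact expect_mono hp fun S _ => hf Finset.inter_subset_left

theorem expect_mono_weight {p' : ι → ℝ} (hp : ∀ e, p e ∈ Set.Icc 0 1)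
    (hp' : ∀ e, p' e ∈ Set.Icc 0 1) (hpp' : ∀ e, p e ≤ p' e) (hf : Monotone f) :
    expect E p f ≤ expect E p' f := by
  induction E using Finset.induction_on generalizing f with
  | empty => simp only [expect_empty, le_refl]
  | insert e E he ih =>
    rw [expect_insert he, expect_insert he]
    have closed_le := ih hf
    have open_le := ih (f := fun S => f (insert e S))
      fun S T h => hf (Finset.insert_subset_insert e h)
    have closed_le_open : expect E p' f ≤ expect E p' (fun S => f (insert e S)) :=
      expect_mono hp' fun S _ => hf (Finset.subset_insert e S)
    have := hpp' e
    have := hp e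
    have := hp' e
    simp only [Set.mem_Icc] at *
    nlinarith

theorem expect_map {κ : Type*} [DecidableEq κ] (φ : ι ↪ κ) (E : Finset ι) (p : κ → ℝ)
    (f : Finset κ → ℝ) :
    expect (E.map φ) p f = expect E (fun e => p (φ e)) (fun S => f (S.map φ)) := by
  induction E using Finset.induction_on generalizing f with
  | empty => simp [expect_empty]
  | insert e E he ih =>
    rw [Finset.map_insert, expect_insert (by simpa using he), expect_insert he, ih, ih]
    simp only [Finset.map_insert]

/-- The probability of the event `A` for the random subset of `E` described in `expect`.
Increasing events are encoded by Mathlib's `IsUpperSet`. -/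
noncomputable def prob (E : Finset ι) (p : ι → ℝ) (A : Set (Finset ι)) : ℝ :=
  expect E p (A.indicator 1)

variable {A B : Set (Finset ι)}

theorem prob_mono (hp : ∀ e, p e ∈ Set.Icc 0 1) (h : ∀ S ⊆ E, S ∈ A → S ∈ B) :
    prob E p A ≤ prob E p B :=
  expect_mono hp fun S hS => indicator_one_le_indicator_one (h S hS)

theorem prob_nonneg (hp : ∀ e, p e ∈ Set.Icc 0 1) (A : Set (Finset ι)) : 0 ≤ prob E p A :=
  expect_nonneg hp fun S _ => Set.indicator_nonneg (fun _ _ => zero_le_one) S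

theorem prob_univ (E : Finset ι) (p : ι → ℝ) : prob E p Set.univ = 1 := by
  rw [prob, Set.indicator_univ]
  exact expect_const E p 1

theorem prob_le_one (hp : ∀ e, p e ∈ Set.Icc 0 1) (A : Set (Finset ι)) : prob E p A ≤ 1 :=
  (prob_mono hp fun _ _ _ => Set.mem_univ _).trans_eq (prob_univ E p)

theorem prob_insert {e : ι} (he : e ∉ E) (p : ι → ℝ) (A : Set (Finset ι)) :
    prob (insert e E) p A = p e * prob E p (insert e ⁻¹' A) + (1 - p e) * prob E p A :=
  expect_insert he p _

theorem prob_union_add_prob_inter (E : Finset ι) (p : ι → ℝ) (A B : Set (Finset ι)) :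
    prob E p (A ∪ B) + prob E p (A ∩ B) = prob E p A + prob E p B := by
  simp only [prob, ← expect_add, Set.indicator_union_add_inter_apply]

theorem prob_compl (E : Finset ι) (p : ι → ℝ) (A : Set (Finset ι)) :
    prob E p Aᶜ = 1 - prob E p A := by
  have h := prob_union_add_prob_inter E p A Aᶜ
  have h_empty : prob E p ∅ = 0 := by
    simpa only [prob, Set.indicator_empty] using expect_const E p 0
  rw [Set.union_compl_self, Set.inter_compl_self, prob_univ, h_empty] at h
  linarith

theorem prob_union_le (hp : ∀ e, p e ∈ Set.Icc 0 1) (A B : Set (Finset ι)) :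
    prob E p (A ∪ B) ≤ prob E p A + prob E p B := by
  linarith [prob_union_add_prob_inter E p A B, prob_nonneg (E := E) hp (A ∩ B)]

theorem prob_biUnion_le {κ : Type*} (hp : ∀ e, p e ∈ Set.Icc 0 1) (s : Finset κ)
    (A : κ → Set (Finset ι)) :
    prob E p (⋃ k ∈ s, A k) ≤ ∑ k ∈ s, prob E p (A k) := by
  classical
  induction s using Finset.induction_on with
  | empty => simpa [prob] using (expect_const E p 0).le
  | insert k s hk ih =>
    rw [Finset.set_biUnion_insert, Finset.sum_insert hk]
    exact (prob_union_le hp _ _).trans (by gcongr)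

theorem prob_inter_preimage (h : F ⊆ E) (p : ι → ℝ) (A : Set (Finset ι)) :
    prob E p ((· ∩ F) ⁻¹' A) = prob F p A :=
  expect_inter_of_subset h p (A.indicator 1)

theorem prob_congr (h : ∀ S ⊆ E, S ∈ A ↔ S ∈ B) : prob E p A = prob E p B :=
  expect_congr fun S hS => by
    classical simp only [Set.indicator_apply, h S hS]

theorem prob_inter_of_disjoint {G : Finset ι} (hEG : E ⊆ G) (hFG : F ⊆ G) (h : Disjoint E F)
    (p : ι → ℝ) (A B : Set (Finset ι)) :
    prob G p ((· ∩ E) ⁻¹' A ∩ (· ∩ F) ⁻¹' B) = prob E p A * prob F p B := by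
  simp only [prob, Set.inter_indicator_one]
  exact expect_mul_of_disjoint hEG hFG h p (A.indicator 1) (B.indicator 1)

theorem prob_disjoint (h : F ⊆ E) (p : ι → ℝ) :
    prob E p {S | Disjoint S F} = ∏ e ∈ F, (1 - p e) := by
  have disjoint_eq_preimage : {S : Finset ι | Disjoint S F} = (· ∩ F) ⁻¹' {∅} := by
    ext S
    exact Finset.disjoint_iff_inter_eq_empty
  rw [disjoint_eq_preimage, prob_inter_preimage h, prob, expect,
    Finset.sum_eq_single_of_mem ∅ (Finset.empty_mem_powerset F) fun S _ hS => by simp [hS]]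
  simp

theorem prob_mem {e : ι} (he : e ∈ E) (p : ι → ℝ) : prob E p {S | e ∈ S} = p e := by
  have h := prob_disjoint (Finset.singleton_subset_iff.2 he) p
  have disjoint_eq_compl : {S : Finset ι | Disjoint S {e}} = {S | e ∈ S}ᶜ := by
    ext S
    simp
  rw [disjoint_eq_compl, prob_compl, Finset.prod_singleton] at h
  linarith

theorem isUpperSet_insert_preimage (e : ι) (hA : IsUpperSet A) :
    IsUpperSet (insert e ⁻¹' A) :=
  fun _ _ hST hS => hA (Finset.insert_subset_insert e hST) hS

theorem subset_insert_preimage (e : ι) (hA : IsUpperSet A) : A ⊆ insert e ⁻¹' A :=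
  fun S hS => hA (Finset.subset_insert e S) hS

/-! ### The van den Berg–Kesten inequality -/

theorem mem_disjOcc_of_insert {e : ι} (hB : IsUpperSet B) {S : Finset ι}
    (h : insert e S ∈ disjOcc A B) :
    S ∈ disjOcc (insert e ⁻¹' A) B ∪ disjOcc A (insert e ⁻¹' B) := by
  obtain ⟨S₁, S₂, h₁, h₂, hd, hS₁, hS₂⟩ := h
  by_cases heS₁ : e ∈ S₁
  · have heS₂ : e ∉ S₂ := Finset.disjoint_left.1 hd heS₁
    refine Or.inl ⟨S₁.erase e, S₂, Finset.subset_insert_iff.1 h₁,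
      (Finset.subset_insert_iff_of_notMem heS₂).1 h₂, hd.mono_left (Finset.erase_subset _ _),
      ?_, hS₂⟩
    rwa [Set.mem_preimage, Finset.insert_erase heS₁]
  · exact Or.inr ⟨S₁, S₂.erase e, (Finset.subset_insert_iff_of_notMem heS₁).1 h₁,
      Finset.subset_insert_iff.1 h₂, hd.mono_right (Finset.erase_subset _ _), hS₁,
      hB (Finset.insert_erase_subset e S₂) hS₂⟩

theorem mul_add_one_sub_mul_le_of_disjOcc_bounds {q a₀ a₁ b₀ b₁ u v : ℝ} (hq : q ∈ Set.Icc 0 1)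
    (ha : a₀ ≤ a₁) (hb : b₀ ≤ b₁) (hv : v ≤ a₀ * b₀) (huv : u + v ≤ a₁ * b₀ + a₀ * b₁)
    (hu : u ≤ a₁ * b₁) :
    q * u + (1 - q) * v ≤ (q * a₁ + (1 - q) * a₀) * (q * b₁ + (1 - q) * b₀) := by
  obtain ⟨hq₀, hq₁⟩ := hq
  have hab : 0 ≤ (a₁ - a₀) * (b₁ - b₀) := mul_nonneg (by linarith) (by linarith)
  rcases le_total q (1 / 2) with hq | hq
  · have h₁ := mul_le_mul_of_nonneg_left huv hq₀
    have h₂ := mul_le_mul_of_nonneg_left hv (by linarith : 0 ≤ 1 - 2 * q)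
    have h₃ := mul_nonneg (sq_nonneg q) hab
    linarith
  · have h₁ := mul_le_mul_of_nonneg_left huv (by linarith : 0 ≤ 1 - q)
    have h₂ := mul_le_mul_of_nonneg_left hu (by linarith : 0 ≤ 2 * q - 1)
    have h₃ := mul_nonneg (sq_nonneg (1 - q)) hab
    linarith

theorem prob_disjOcc_le (E : Finset ι) (hp : ∀ e, p e ∈ Set.Icc 0 1) (hA : IsUpperSet A)
    (hB : IsUpperSet B) : prob E p (disjOcc A B) ≤ prob E p A * prob E p B := by
  induction E using Finset.induction_on generalizing A B with
  | empty =>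
    simp only [prob, expect_empty]
    have disjOcc_imp : ∅ ∈ disjOcc A B → ∅ ∈ A ∧ ∅ ∈ B := by
      rintro ⟨S₁, S₂, h₁, h₂, -, hS₁, hS₂⟩
      exact ⟨Finset.subset_empty.1 h₁ ▸ hS₁, Finset.subset_empty.1 h₂ ▸ hS₂⟩
    by_cases h : ∅ ∈ disjOcc A B
    · simp [h, disjOcc_imp h]
    · rw [Set.indicator_of_notMem h]
      exact mul_nonneg (Set.indicator_nonneg (fun _ _ => zero_le_one) _)
        (Set.indicator_nonneg (fun _ _ => zero_le_one) _)
  | insert e E he ih =>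
    have hA' := isUpperSet_insert_preimage e hA
    have hB' := isUpperSet_insert_preimage e hB
    have hAA' := subset_insert_preimage e hA
    have hBB' := subset_insert_preimage e hB
    have sum_le : prob E p (insert e ⁻¹' disjOcc A B) + prob E p (disjOcc A B)
        ≤ prob E p (disjOcc (insert e ⁻¹' A) B) + prob E p (disjOcc A (insert e ⁻¹' B)) :=
      (add_le_add (prob_mono hp fun S _ h => mem_disjOcc_of_insert hB h)
        (prob_mono hp fun S _ h => Set.mem_inter
          (disjOcc_subset_disjOcc hAA' subset_rfl h)
          (disjOcc_subset_disjOcc subset_rfl hBB' h))).trans_eq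
        (prob_union_add_prob_inter E p _ _)
    have open_le : prob E p (insert e ⁻¹' disjOcc A B)
        ≤ prob E p (disjOcc (insert e ⁻¹' A) (insert e ⁻¹' B)) :=
      prob_mono hp fun S _ h => (mem_disjOcc_of_insert hB h).elim
        (fun h => disjOcc_subset_disjOcc subset_rfl hBB' h)
        (fun h => disjOcc_subset_disjOcc hAA' subset_rfl h)
    rw [prob_insert he, prob_insert he, prob_insert he]
    exact mul_add_one_sub_mul_le_of_disjOcc_bounds (hp e) (prob_mono hp fun S _ h => hAA' h)
      (prob_mono hp fun S _ h => hBB' h) (ih hA hB)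
      (sum_le.trans (add_le_add (ih hA' hB) (ih hA hB'))) (open_le.trans (ih hA' hB'))

/-! ### Russo's formula -/

/-- The change of `f` when a closed edge `e` is opened (zero if `e` is already open). -/
def increment (e : ι) (f : Finset ι → ℝ) (S : Finset ι) : ℝ :=
  if e ∈ S then 0 else f (insert e S) - f S

theorem expect_increment_of_notMem {e : ι} (he : e ∉ E) (p : ι → ℝ) (f : Finset ι → ℝ) :
    expect E p (increment e f) = expect E p (fun S => f (insert e S)) - expect E p f := by
  rw [← expect_sub]
  exact expect_congr fun S hS => if_neg fun h => he (hS h)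

theorem expect_insert_increment_self {e : ι} (he : e ∉ E) (p : ι → ℝ) (f : Finset ι → ℝ) :
    expect (insert e E) p (increment e f)
      = (1 - p e) * (expect E p (fun S => f (insert e S)) - expect E p f) := by
  have increment_insert : ∀ S, increment e f (insert e S) = 0 := fun S =>
    if_pos (Finset.mem_insert_self e S)
  simp only [expect_insert he, increment_insert, expect_const, expect_increment_of_notMem he,
    mul_zero, zero_add]

theorem increment_insert_of_ne {e e' : ι} (h : e' ≠ e) (f : Finset ι → ℝ) (S : Finset ι) :
    increment e' f (insert e S) = increment e' (fun T => f (insert e T)) S := by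
  simp [increment, h, Finset.insert_comm]

/-- The probability that the edge `e` is open at inverse temperature `β` if `J` is the rate of
opening edges. -/
noncomputable def openProb {ι : Type*} (J : ι → ℝ) (β : ℝ) (e : ι) : ℝ := 1 - Real.exp (-β * J e)

theorem hasDerivAt_openProb {ι : Type*} (J : ι → ℝ) (e : ι) (β : ℝ) :
    HasDerivAt (fun b => openProb J b e) (J e * Real.exp (-β * J e)) β :=
  ((((hasDerivAt_id β).neg.mul_const (J e)).exp).const_sub 1).congr_deriv (by simp; ring)

theorem hasDerivAt_expect (E : Finset ι) (J : ι → ℝ) (f : Finset ι → ℝ) (β : ℝ) :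
    HasDerivAt (fun b => expect E (openProb J b) f)
      (∑ e ∈ E, J e * expect E (openProb J β) (increment e f)) β := by
  induction E using Finset.induction_on generalizing f with
  | empty => simp [expect_empty, hasDerivAt_const]
  | insert e E he ih =>
    have deriv_weight := hasDerivAt_openProb J e β
    simp only [expect_insert he (openProb J _) f]
    refine ((deriv_weight.mul (ih fun S => f (insert e S))).add
      ((deriv_weight.const_sub 1).mul (ih f))).congr_deriv ?_
    rw [Finset.sum_insert he, expect_insert_increment_self he]
    have expect_other : ∀ x ∈ E, ∀ q : ι → ℝ, expect (insert e E) q (increment x f)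
        = q e * expect E q (increment x fun S => f (insert e S))
          + (1 - q e) * expect E q (increment x f) := fun x hx q => by
      simp only [expect_insert he, increment_insert_of_ne (ne_of_mem_of_not_mem hx he)]
    simp only [Finset.sum_congr rfl fun x hx => congrArg (J x * ·) (expect_other x hx _), mul_add,
      Finset.sum_add_distrib, mul_left_comm (J _), ← Finset.mul_sum, openProb]
    ring

end Bernoulli

section OpenProb

variable {ι : Type*} {J : ι → ℝ} {β β' : ℝ}

theorem openProb_mem_Icc (hJ : ∀ e, 0 ≤ J e) (hβ : 0 ≤ β) (e : ι) :
    openProb J β e ∈ Set.Icc 0 1 := by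
  have hle : Real.exp (-β * J e) ≤ 1 :=
    Real.exp_le_one_iff.2 (by linarith [mul_nonneg hβ (hJ e)])
  exact ⟨sub_nonneg.2 hle, sub_le_self _ (Real.exp_pos _).le⟩

theorem openProb_mono (hJ : ∀ e, 0 ≤ J e) (hββ' : β ≤ β') (e : ι) :
    openProb J β e ≤ openProb J β' e := by
  have := mul_le_mul_of_nonneg_right hββ' (hJ e)
  exact sub_le_sub_left (Real.exp_le_exp.2 (by linarith)) 1

theorem openProb_le (J : ι → ℝ) (β : ℝ) (e : ι) : openProb J β e ≤ β * J e := by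
  unfold openProb
  linarith [Real.add_one_le_exp (-β * J e)]

end OpenProb

/-! ### Clusters of a finite set of open edges -/

section Linked

variable {W : Type*} {S T : Finset (Sym2 W)} {u v w x y : W}

/-- `x` and `y` are joined by a path of edges of `S`. -/
def Linked (S : Finset (Sym2 W)) (x y : W) : Prop :=
  Relation.ReflTransGen (fun a b => s(a, b) ∈ S) x y

namespace Linked

theorem refl (x : W) : Linked S x x := Relation.ReflTransGen.refl

theorem trans {z : W} (hxy : Linked S x y) (hyz : Linked S y z) : Linked S x z :=
  Relation.ReflTransGen.trans hxy hyz

theorem of_mem (h : s(x, y) ∈ S) : Linked S x y := Relation.ReflTransGen.single h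

theorem symm (h : Linked S x y) : Linked S y x := by
  induction h with
  | refl => exact refl _
  | tail _ h ih => exact (of_mem (Sym2.eq_swap ▸ h)).trans ih

theorem mono (hST : S ⊆ T) (h : Linked S x y) : Linked T x y :=
  Relation.ReflTransGen.mono (fun _ _ h => hST h) _ _ h

theorem mem_of_subset_sym2 {B : Finset W} (hS : S ⊆ B.sym2) (h : Linked S x y) (hx : x ∈ B) :
    y ∈ B := by
  induction h with
  | refl => exact hx
  | tail _ h _ => exact (Finset.mk_mem_sym2_iff.1 (hS h)).2

theorem restrict (h : Linked S x y)
    (hT : ∀ a b, Linked S x a → s(a, b) ∈ S → s(a, b) ∈ T) : Linked T x y := by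
  induction h with
  | refl => exact refl _
  | tail hxa hab ih => exact ih.trans (of_mem (hT _ _ hxa hab))

theorem erase_or [DecidableEq W] (h : Linked S u y) :
    Linked (S.erase s(u, w)) u y ∨ Linked (S.erase s(u, w)) w y := by
  induction h with
  | refl => exact Or.inl (refl _)
  | @tail b c _ hbc ih =>
    by_cases he : s(b, c) = s(u, w)
    · rcases Sym2.eq_iff.1 he with ⟨_, rfl⟩ | ⟨_, rfl⟩
      exacts [Or.inr (refl _), Or.inl (refl _)]
    · have hbc' : Linked (S.erase s(u, w)) b c := of_mem (Finset.mem_erase.2 ⟨he, hbc⟩)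
      exact ih.imp (·.trans hbc') (·.trans hbc')

open Classical in
theorem last_exit {C : W → Prop} (h : Linked S y x) (hx : ¬ C x) :
    (¬ C y ∧ Linked (S.filter fun e => ∀ v ∈ e, ¬ C v) y x) ∨
      ∃ a b, C a ∧ ¬ C b ∧ s(a, b) ∈ S ∧ Linked (S.filter fun e => ∀ v ∈ e, ¬ C v) b x := by
  induction h using Relation.ReflTransGen.head_induction_on with
  | refl => exact Or.inl ⟨hx, refl _⟩
  | @head a c hac _ ih =>
    rcases ih with ⟨hc, hcx⟩ | h
    · by_cases ha : C a
      · exact Or.inr ⟨a, c, ha, hc, hac, hcx⟩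
      · refine Or.inl ⟨ha, (of_mem ?_).trans hcx⟩
        simp [hac, ha, hc]
    · exact Or.inr h

end Linked

theorem isUpperSet_linked (x y : W) : IsUpperSet {S : Finset (Sym2 W) | Linked S x y} :=
  fun _ _ h h' => h'.mono h

open Classical in
/-- The cluster of `u`, intersected with `B`. -/
noncomputable def clusterIn (B : Finset W) (S : Finset (Sym2 W)) (u : W) : Finset W :=
  B.filter (Linked S u)

open Classical in
/-- The open edges touching the cluster of `u`. -/
noncomputable def clusterEdges (S : Finset (Sym2 W)) (u : W) : Finset (Sym2 W) :=
  S.filter fun e => ∃ v ∈ e, Linked S u v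

variable {B : Finset W}

theorem mem_clusterIn : v ∈ clusterIn B S u ↔ v ∈ B ∧ Linked S u v := by
  simp [clusterIn]

theorem mem_clusterEdges {e : Sym2 W} :
    e ∈ clusterEdges S u ↔ e ∈ S ∧ ∃ v ∈ e, Linked S u v := by
  simp [clusterEdges]

theorem clusterIn_mono (h : S ⊆ T) (u : W) : clusterIn B S u ⊆ clusterIn B T u := fun _ hv =>
  mem_clusterIn.2 ((mem_clusterIn.1 hv).imp_right (·.mono h))

theorem clusterIn_subset_of_linked (h : Linked S u v) : clusterIn B S v ⊆ clusterIn B S u :=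
  fun _ hw => mem_clusterIn.2 ((mem_clusterIn.1 hw).imp_right h.trans)

theorem clusterEdges_subset (S : Finset (Sym2 W)) (u : W) : clusterEdges S u ⊆ S := by
  classical exact Finset.filter_subset _ _

theorem Linked.clusterEdges (h : Linked S u y) : Linked (clusterEdges S u) u y :=
  h.restrict fun a b ha hab =>
    mem_clusterEdges.2 ⟨hab, a, Sym2.mem_mk_left a b, ha⟩

theorem clusterIn_subset_clusterIn_clusterEdges (B : Finset W) (S : Finset (Sym2 W)) (u : W) :
    clusterIn B S u ⊆ clusterIn B (clusterEdges S u) u := fun _ hv =>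
  mem_clusterIn.2 ((mem_clusterIn.1 hv).imp_right Linked.clusterEdges)

theorem linked_of_mem_clusterEdges {a : W} {e : Sym2 W} (he : e ∈ clusterEdges S u)
    (ha : a ∈ e) : Linked S u a := by
  obtain ⟨heS, v, hv, huv⟩ := mem_clusterEdges.1 he
  obtain ⟨b, rfl⟩ := hv
  rcases Sym2.mem_iff.1 ha with rfl | rfl
  exacts [huv, huv.trans (Linked.of_mem heS)]

theorem disjoint_clusterEdges (h : ¬ Linked S u w) :
    Disjoint (clusterEdges S u) (clusterEdges S w) := by
  rw [Finset.disjoint_left]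
  intro e
  induction e using Sym2.ind with
  | _ a b =>
    intro hu hw
    exact h ((linked_of_mem_clusterEdges hu (Sym2.mem_mk_left a b)).trans
      (linked_of_mem_clusterEdges hw (Sym2.mem_mk_left a b)).symm)

/-! ### Universal tightness of cluster sizes -/

variable [DecidableEq W] {m : ℕ}

/-- The cluster of `u` can be covered by a cluster of `u` and a cluster of cardinality between `m`
and `2 * m` that use disjoint sets of edges. -/
def SplitsOff (B : Finset W) (m : ℕ) (S : Finset (Sym2 W)) (u : W) : Prop :=
  ∃ v, ∃ S₁ ⊆ S, ∃ S₂ ⊆ S, Disjoint S₁ S₂ ∧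
    m ≤ (clusterIn B S₂ v).card ∧ (clusterIn B S₂ v).card ≤ 2 * m ∧
    clusterIn B S u ⊆ clusterIn B S₁ u ∪ clusterIn B S₂ v

theorem clusterIn_subset_union_erase (B : Finset W) (S : Finset (Sym2 W)) (u w : W) :
    clusterIn B S u ⊆ clusterIn B (S.erase s(u, w)) u ∪ clusterIn B (S.erase s(u, w)) w := by
  intro z hz
  obtain ⟨hzB, hz⟩ := mem_clusterIn.1 hz
  rw [Finset.mem_union]
  exact hz.erase_or.imp (mem_clusterIn.2 ⟨hzB, ·⟩) (mem_clusterIn.2 ⟨hzB, ·⟩)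

theorem SplitsOff.of_clusterEdges_erase (hxy : s(x, y) ∈ S)
    (hnot : ¬ Linked (S.erase s(x, y)) x y) (hu : u = x ∨ u = y)
    (h : SplitsOff B m (clusterEdges (S.erase s(x, y)) x) x) : SplitsOff B m S u := by
  obtain ⟨v, S₁, hS₁, S₂, hS₂, hd, hle, hge, hcover⟩ := h
  set S' := S.erase s(x, y)
  set T := insert s(x, y) (S₁ ∪ clusterEdges S' y)
  have hS'S : S' ⊆ S := Finset.erase_subset _ _
  have hux : Linked T u x := by
    have hxyT : Linked T x y := Linked.of_mem (Finset.mem_insert_self _ _)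
    rcases hu with rfl | rfl
    exacts [Linked.refl _, hxyT.symm]
  have huy : Linked T u y := hux.trans (Linked.of_mem (Finset.mem_insert_self _ _))
  have cover_x : clusterIn B S' x ⊆ clusterIn B T u ∪ clusterIn B S₂ v := by
    refine (clusterIn_subset_clusterIn_clusterEdges B S' x).trans
      (hcover.trans (Finset.union_subset_union_left ?_))
    exact (clusterIn_mono (Finset.subset_union_left.trans (Finset.subset_insert _ _)) x).trans
      (clusterIn_subset_of_linked hux)
  have cover_y : clusterIn B S' y ⊆ clusterIn B T u :=
    (clusterIn_subset_clusterIn_clusterEdges B S' y).trans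
      ((clusterIn_mono (Finset.subset_union_right.trans (Finset.subset_insert _ _)) y).trans
        (clusterIn_subset_of_linked huy))
  have hSux : Linked S x u := by
    rcases hu with rfl | rfl
    exacts [Linked.refl _, Linked.of_mem hxy]
  refine ⟨v, T, ?_, S₂, hS₂.trans ((clusterEdges_subset _ _).trans hS'S), ?_, hle, hge, ?_⟩
  · exact Finset.insert_subset hxy (Finset.union_subset
      (hS₁.trans ((clusterEdges_subset _ _).trans hS'S)) ((clusterEdges_subset _ _).trans hS'S))
  · rw [Finset.disjoint_insert_left, Finset.disjoint_union_left]
    exact ⟨fun hmem => Finset.notMem_erase _ _ (clusterEdges_subset _ _ (hS₂ hmem)), hd,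
      (disjoint_clusterEdges hnot).symm.mono_right hS₂⟩
  · exact (clusterIn_subset_of_linked hSux).trans ((clusterIn_subset_union_erase B S x y).trans
      (Finset.union_subset cover_x (cover_y.trans Finset.subset_union_left)))

theorem splitsOff_of_le_card_clusterIn (hm : 1 ≤ m) (h : m ≤ (clusterIn B S u).card) :
    SplitsOff B m S u := by
  induction hn : S.card using Nat.strong_induction_on generalizing S u with
  | _ n ih =>
  by_cases hsmall : (clusterIn B S u).card ≤ 2 * m
  · exact ⟨u, ∅, by simp, S, subset_rfl, by simp, h, hsmall, Finset.subset_union_right⟩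
  obtain ⟨y, hy, hyu⟩ := Finset.exists_mem_ne (by omega : 1 < (clusterIn B S u).card) u
  obtain ⟨w, huw, -⟩ := (Relation.ReflTransGen.cases_head (mem_clusterIn.1 hy).2).resolve_left
    hyu.symm
  have herase : (S.erase s(u, w)).card < n := hn ▸ Finset.card_erase_lt_of_mem huw
  have hcover := clusterIn_subset_union_erase B S u w
  by_cases hlinked : Linked (S.erase s(u, w)) u w
  · have hsub : clusterIn B S u ⊆ clusterIn B (S.erase s(u, w)) u :=
      hcover.trans (Finset.union_subset subset_rfl (clusterIn_subset_of_linked hlinked))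
    obtain ⟨v, S₁, hS₁, S₂, hS₂, hd, hle, hge, hsplit⟩ :=
      ih _ herase (h.trans (Finset.card_le_card hsub)) rfl
    exact ⟨v, S₁, hS₁.trans (Finset.erase_subset _ _), S₂, hS₂.trans (Finset.erase_subset _ _), hd,
      hle, hge, hsub.trans hsplit⟩
  have split_at : ∀ z, m ≤ (clusterIn B (S.erase s(u, w)) z).card →
      SplitsOff B m (clusterEdges (S.erase s(u, w)) z) z := fun z hz =>
    ih _ ((Finset.card_le_card (clusterEdges_subset _ z)).trans_lt herase)
      (hz.trans (Finset.card_le_card (clusterIn_subset_clusterIn_clusterEdges B _ z))) rfl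
  by_cases hw : m ≤ (clusterIn B (S.erase s(u, w)) w).card
  · rw [Sym2.eq_swap] at huw split_at hlinked hw
    exact .of_clusterEdges_erase huw (fun h => hlinked h.symm) (Or.inr rfl) (split_at w hw)
  · have hcard := (Finset.card_le_card hcover).trans (Finset.card_union_le _ _)
    exact .of_clusterEdges_erase huw hlinked (Or.inl rfl) (split_at u (by omega))

/-- Some vertex of `B` has a cluster containing at least `m` vertices of `B`. -/
def largeCluster (B : Finset W) (m : ℕ) : Set (Finset (Sym2 W)) :=
  {S | ∃ v ∈ B, m ≤ (clusterIn B S v).card}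

theorem prob_three_mul_le_card_clusterIn_le (B : Finset W) (E : Finset (Sym2 W)) {p : Sym2 W → ℝ}
    (hp : ∀ e, p e ∈ Set.Icc 0 1) (hm : 1 ≤ m) (u : W) :
    prob E p {S | 3 * m ≤ (clusterIn B S u).card} ≤
      prob E p {S | m ≤ (clusterIn B S u).card} * prob E p (largeCluster B m) := by
  refine le_trans (prob_mono hp fun S _ h => ?_) (prob_disjOcc_le E hp ?_ ?_)
  · rw [Set.mem_ofPred_eq] at h
    obtain ⟨v, S₁, hS₁, S₂, hS₂, hd, hle, hge, hcover⟩ :=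
      splitsOff_of_le_card_clusterIn hm (by omega : m ≤ (clusterIn B S u).card)
    have hcard := (Finset.card_le_card hcover).trans (Finset.card_union_le _ _)
    obtain ⟨z, hz⟩ := Finset.card_pos.1 (by omega : 0 < (clusterIn B S₂ v).card)
    obtain ⟨hzB, hvz⟩ := mem_clusterIn.1 hz
    exact ⟨S₁, S₂, hS₁, hS₂, hd, by rw [Set.mem_ofPred_eq]; omega, z, hzB,
      hle.trans (Finset.card_le_card (clusterIn_subset_of_linked hvz.symm))⟩
  · exact fun S T hST h => h.trans (Finset.card_le_card (clusterIn_mono hST u))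
  · rintro S T hST ⟨v, hv, h⟩
    exact ⟨v, hv, h.trans (Finset.card_le_card (clusterIn_mono hST v))⟩

/-! ### The Simon–Lieb inequality -/

/-- The two-point function `ℙ(x ↔ y inside B)` of percolation with edge probabilities `p`. -/
noncomputable def tauIn (B : Finset W) (p : Sym2 W → ℝ) (x y : W) : ℝ :=
  prob B.sym2 p {S | Linked S x y}

variable {p : Sym2 W → ℝ}

theorem tauIn_nonneg (B : Finset W) (hp : ∀ e, p e ∈ Set.Icc 0 1) (x y : W) : 0 ≤ tauIn B p x y :=
  prob_nonneg hp _

theorem tauIn_le_one (B : Finset W) (hp : ∀ e, p e ∈ Set.Icc 0 1) (x y : W) : tauIn B p x y ≤ 1 :=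
  prob_le_one hp _

theorem tauIn_mono {B' : Finset W} (h : B ⊆ B') (hp : ∀ e, p e ∈ Set.Icc 0 1) (x y : W) :
    tauIn B p x y ≤ tauIn B' p x y :=
  expect_mono_set (Finset.sym2_mono h) hp (monotone_indicator_of_isUpperSet (isUpperSet_linked x y))

/-- The event that, disjointly, `o ↔ a` inside `L`, the edge `{a, b}` is open, and `b ↔ x`. -/
def exitEvent (L : Finset W) (o x : W) (k : W × W) : Set (Finset (Sym2 W)) :=
  disjOcc (disjOcc {S | Linked (S ∩ L.sym2) o k.1} {S | s(k.1, k.2) ∈ S}) {S | Linked S k.2 x}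

theorem exists_mem_exitEvent {L Ω : Finset W} {o : W} (ho : o ∈ L) (hS : S ⊆ Ω.sym2)
    (h : Linked S o x) (hnot : ¬ Linked (S ∩ L.sym2) o x) :
    ∃ k ∈ L ×ˢ (Ω \ L), S ∈ exitEvent L o x k := by
  classical
  rcases h.last_exit (C := fun z => Linked (S ∩ L.sym2) o z) hnot with
    ⟨ho', -⟩ | ⟨a, b, ha, hb, hab, hbx⟩
  · exact absurd (Linked.refl o) ho'
  have haL : a ∈ L := ha.mem_of_subset_sym2 Finset.inter_subset_right ho
  have hbΩ : b ∈ Ω := (Finset.mk_mem_sym2_iff.1 (hS hab)).2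
  have hbL : b ∉ L := fun hbL => hb (ha.trans (Linked.of_mem
    (Finset.mem_inter.2 ⟨hab, Finset.mk_mem_sym2_iff.2 ⟨haL, hbL⟩⟩)))
  set inner := clusterEdges (S ∩ L.sym2) o
  have inner_L : inner ⊆ L.sym2 := (clusterEdges_subset _ _).trans Finset.inter_subset_right
  have inner_S : inner ⊆ S := (clusterEdges_subset _ _).trans Finset.inter_subset_left
  refine ⟨(a, b), by simp [haL, hbΩ, hbL], insert s(a, b) inner, _,
    Finset.insert_subset hab inner_S, Finset.filter_subset _ _, ?_, ?_, hbx⟩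
  · rw [Finset.disjoint_right]
    intro e he hmem
    have havoid := (Finset.mem_filter.1 he).2
    rcases Finset.mem_insert.1 hmem with rfl | hmem
    · exact havoid a (Sym2.mem_mk_left a b) ha
    · exact havoid _ e.out_fst_mem (linked_of_mem_clusterEdges hmem e.out_fst_mem)
  · refine ⟨inner, {s(a, b)}, Finset.subset_insert _ _, by simp, ?_, ?_, by simp⟩
    · exact Finset.disjoint_singleton_right.2 fun hmem =>
        hbL (Finset.mk_mem_sym2_iff.1 (inner_L hmem)).2
    · rw [Set.mem_ofPred_eq, Finset.inter_eq_left.2 inner_L]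
      exact ha.clusterEdges

theorem prob_linked_inter_sym2 {L Ω : Finset W} (hL : L ⊆ Ω) (p : Sym2 W → ℝ) (x y : W) :
    prob Ω.sym2 p {S | Linked (S ∩ L.sym2) x y} = tauIn L p x y :=
  prob_inter_preimage (Finset.sym2_mono hL) p {S | Linked S x y}

theorem prob_exitEvent_le {L Ω : Finset W} (hL : L ⊆ Ω) (hp : ∀ e, p e ∈ Set.Icc 0 1) (o x : W)
    {a b : W} (ha : a ∈ Ω) (hb : b ∈ Ω) :
    prob Ω.sym2 p (exitEvent L o x (a, b)) ≤ tauIn L p o a * p s(a, b) * tauIn Ω p b x := by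
  have upper_inner : IsUpperSet {S : Finset (Sym2 W) | Linked (S ∩ L.sym2) o a} :=
    fun S T h h' => h'.mono (Finset.inter_subset_inter_right h)
  have upper_edge : IsUpperSet {S : Finset (Sym2 W) | s(a, b) ∈ S} := fun S T h h' => h h'
  calc prob Ω.sym2 p (exitEvent L o x (a, b))
      ≤ prob Ω.sym2 p (disjOcc {S | Linked (S ∩ L.sym2) o a} {S | s(a, b) ∈ S}) * tauIn Ω p b x :=
        prob_disjOcc_le _ hp (isUpperSet_disjOcc _ _) (isUpperSet_linked b x)
    _ ≤ prob Ω.sym2 p {S | Linked (S ∩ L.sym2) o a} * prob Ω.sym2 p {S | s(a, b) ∈ S}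
          * tauIn Ω p b x :=
        mul_le_mul_of_nonneg_right (prob_disjOcc_le _ hp upper_inner upper_edge)
          (tauIn_nonneg Ω hp b x)
    _ = _ := by rw [prob_linked_inter_sym2 hL, prob_mem (Finset.mk_mem_sym2_iff.2 ⟨ha, hb⟩)]

theorem simon_lieb {L Ω : Finset W} (hL : L ⊆ Ω) (hp : ∀ e, p e ∈ Set.Icc 0 1) {o : W}
    (ho : o ∈ L) (x : W) :
    tauIn Ω p o x ≤ tauIn L p o x +
      ∑ a ∈ L, ∑ b ∈ Ω \ L, tauIn L p o a * p s(a, b) * tauIn Ω p b x := by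
  calc tauIn Ω p o x
      ≤ prob Ω.sym2 p ({S | Linked (S ∩ L.sym2) o x} ∪
          ⋃ k ∈ L ×ˢ (Ω \ L), exitEvent L o x k) := by
        refine prob_mono hp fun S hS h => or_iff_not_imp_left.2 fun hnot => ?_
        simpa only [Set.mem_iUnion, exists_prop] using exists_mem_exitEvent ho hS h hnot
    _ ≤ tauIn L p o x + ∑ k ∈ L ×ˢ (Ω \ L), prob Ω.sym2 p (exitEvent L o x k) := by
        rw [← prob_linked_inter_sym2 hL]
        exact (prob_union_le hp _ _).trans (add_le_add_right (prob_biUnion_le hp _ _) _)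
    _ ≤ _ := by
        rw [Finset.sum_product]
        gcongr with a ha b hb
        exact prob_exitEvent_le hL hp o x (hL ha) (Finset.mem_sdiff.1 hb).1

end Linked

section Truncation

variable {W : Type*} {B : Finset W} {p : Sym2 W → ℝ} {m : ℕ}

theorem sum_indicator_one_apply {α κ : Type*} (s : Finset κ) (A : κ → Set α) (a : α)
    [DecidablePred fun k => a ∈ A k] :
    ∑ k ∈ s, (A k).indicator (1 : α → ℝ) a = ((s.filter fun k => a ∈ A k).card : ℝ) := by
  classical
  simp [Set.indicator_apply, Finset.sum_boole]

theorem card_clusterIn_le (B : Finset W) (S : Finset (Sym2 W)) (u : W) :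
    (clusterIn B S u).card ≤ B.card := by
  classical exact Finset.card_filter_le _ _

theorem sq_le_sum_card_clusterIn {S : Finset (Sym2 W)} (h : S ∈ largeCluster B m) :
    m ^ 2 ≤ ∑ u ∈ B, (clusterIn B S u).card := by
  obtain ⟨v, -, hm⟩ := h
  calc m ^ 2 ≤ (clusterIn B S v).card * m := by rw [sq]; gcongr
    _ = ∑ _u ∈ clusterIn B S v, m := by simp
    _ ≤ ∑ u ∈ clusterIn B S v, (clusterIn B S u).card :=
        Finset.sum_le_sum fun u hu => hm.trans
          (Finset.card_le_card (clusterIn_subset_of_linked (mem_clusterIn.1 hu).2.symm))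
    _ ≤ _ := Finset.sum_le_sum_of_subset fun u hu => (mem_clusterIn.1 hu).1

variable [DecidableEq W]

/-- The expected number of vertices of `B` connected to `u` inside `B`. -/
noncomputable def meanCluster (B : Finset W) (p : Sym2 W → ℝ) (u : W) : ℝ :=
  expect B.sym2 p fun S => ((clusterIn B S u).card : ℝ)

/-- The analogue of `meanCluster` with the number of vertices truncated at `N`. -/
noncomputable def truncMeanCluster (B : Finset W) (p : Sym2 W → ℝ) (N : ℕ) (u : W) : ℝ :=
  expect B.sym2 p fun S => ((min (clusterIn B S u).card N : ℕ) : ℝ)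

theorem sq_mul_prob_largeCluster_le (hp : ∀ e, p e ∈ Set.Icc 0 1) (B : Finset W) (m : ℕ) :
    (m : ℝ) ^ 2 * prob B.sym2 p (largeCluster B m) ≤ ∑ u ∈ B, meanCluster B p u := by
  simp only [meanCluster]
  rw [← expect_sum, prob, ← expect_const_mul]
  refine expect_mono hp fun S _ => ?_
  by_cases h : S ∈ largeCluster B m
  · simpa [Set.indicator_of_mem h] using mod_cast sq_le_sum_card_clusterIn h
  · simpa [Set.indicator_of_notMem h] using
      Finset.sum_nonneg fun u _ => (Nat.cast_nonneg (clusterIn B S u).card : (0 : ℝ) ≤ _)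

theorem prob_largeCluster_one (hB : B.Nonempty) (hm : m ≤ 1) (p : Sym2 W → ℝ) :
    prob B.sym2 p (largeCluster B m) = 1 := by
  obtain ⟨v, hv⟩ := hB
  rw [← prob_univ B.sym2 p]
  congr 1
  refine Set.eq_univ_of_forall fun S => ⟨v, hv, hm.trans (Finset.card_pos.2 ⟨v, ?_⟩)⟩
  exact mem_clusterIn.2 ⟨hv, Linked.refl v⟩

theorem prob_largeCluster_of_card_lt (hm : B.card < m) (p : Sym2 W → ℝ) :
    prob B.sym2 p (largeCluster B m) = 0 := by
  have hempty : largeCluster B m = ∅ := Set.eq_empty_of_forall_notMem fun S ⟨v, _, h⟩ =>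
    (hm.trans_le h).not_ge (card_clusterIn_le B S v)
  simpa [hempty, prob] using expect_const B.sym2 p 0

theorem exists_prob_largeCluster_threshold (hB : B.Nonempty) (p : Sym2 W → ℝ) :
    ∃ m, 1 ≤ m ∧ 1 / 6 < prob B.sym2 p (largeCluster B m) ∧
      prob B.sym2 p (largeCluster B (m + 1)) ≤ 1 / 6 := by
  classical
  have hex : ∃ m, prob B.sym2 p (largeCluster B m) ≤ 1 / 6 :=
    ⟨B.card + 1, by rw [prob_largeCluster_of_card_lt (Nat.lt_succ_self _)]; norm_num⟩
  have hfind : 2 ≤ Nat.find hex := (Nat.le_find_iff _ _).2 fun m hm => by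
    rw [prob_largeCluster_one hB (by omega)]; norm_num
  refine ⟨Nat.find hex - 1, by omega, not_le.1 (Nat.find_min hex (by omega)), ?_⟩
  rw [Nat.sub_add_cancel (by omega)]
  exact Nat.find_spec hex

theorem le_min_add_three_mul_card_filter {k M : ℕ} (hk : k ≤ M) (m : ℕ) :
    k ≤ min k (3 * m) + 3 * ((Finset.Icc m M).filter fun j => 3 * j ≤ k).card := by
  rcases le_or_gt k (3 * m) with h | h
  · simp [h]
  have hsub : Finset.Icc m (k / 3) ⊆ (Finset.Icc m M).filter fun j => 3 * j ≤ k := by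
    intro j hj
    simp only [Finset.mem_filter, Finset.mem_Icc] at *
    omega
  have hcard := Finset.card_le_card hsub
  rw [Nat.card_Icc] at hcard
  omega

theorem meanCluster_le_truncMeanCluster_add (hp : ∀ e, p e ∈ Set.Icc 0 1) (m : ℕ) (u : W) :
    meanCluster B p u ≤ truncMeanCluster B p (3 * m) u +
      3 * ∑ j ∈ Finset.Icc m B.card, prob B.sym2 p {S | 3 * j ≤ (clusterIn B S u).card} := by
  simp only [prob, meanCluster, truncMeanCluster]
  rw [← expect_sum, ← expect_const_mul, ← expect_add]
  refine expect_mono hp fun S _ => ?_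
  classical
  rw [sum_indicator_one_apply]
  exact mod_cast le_min_add_three_mul_card_filter (card_clusterIn_le B S u) m

theorem sum_prob_le_meanCluster (hp : ∀ e, p e ∈ Set.Icc 0 1) (hm : 1 ≤ m) (u : W) :
    ∑ j ∈ Finset.Icc m B.card, prob B.sym2 p {S | j ≤ (clusterIn B S u).card} ≤
      meanCluster B p u := by
  simp only [prob, meanCluster]
  rw [← expect_sum]
  refine expect_mono hp fun S _ => ?_
  classical
  rw [sum_indicator_one_apply]
  have hsub : ((Finset.Icc m B.card).filter fun j => j ≤ (clusterIn B S u).card) ⊆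
      Finset.Icc 1 (clusterIn B S u).card := by
    intro j hj
    simp only [Finset.mem_filter, Finset.mem_Icc] at *
    omega
  have hcard := Finset.card_le_card hsub
  rw [Nat.card_Icc, Nat.add_sub_cancel] at hcard
  exact mod_cast hcard

theorem meanCluster_le_two_mul_truncMeanCluster (hp : ∀ e, p e ∈ Set.Icc 0 1) (hm : 1 ≤ m)
    (hlarge : prob B.sym2 p (largeCluster B m) ≤ 1 / 6) (u : W) :
    meanCluster B p u ≤ 2 * truncMeanCluster B p (3 * m) u := by
  have tail_le : ∑ j ∈ Finset.Icc m B.card, prob B.sym2 p {S | 3 * j ≤ (clusterIn B S u).card} ≤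
      ∑ j ∈ Finset.Icc m B.card, prob B.sym2 p {S | j ≤ (clusterIn B S u).card} * (1 / 6) := by
    refine Finset.sum_le_sum fun j hj => ?_
    have hmj := (Finset.mem_Icc.1 hj).1
    refine (prob_three_mul_le_card_clusterIn_le B B.sym2 hp (hm.trans hmj) u).trans
      (mul_le_mul_of_nonneg_left (le_trans (prob_mono hp ?_) hlarge) (prob_nonneg hp _))
    exact fun S _ ⟨v, hv, h⟩ => ⟨v, hv, hmj.trans h⟩
  rw [← Finset.sum_mul] at tail_le
  linarith [meanCluster_le_truncMeanCluster_add hp m u (B := B),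
    sum_prob_le_meanCluster hp hm u (B := B)]

theorem exists_truncation (hB : B.Nonempty) (hp : ∀ e, p e ∈ Set.Icc 0 1) :
    ∃ N : ℕ, (N : ℝ) ^ 2 ≤ 216 * ∑ u ∈ B, meanCluster B p u ∧
      ∀ u, meanCluster B p u ≤ 2 * truncMeanCluster B p N u := by
  obtain ⟨m, hm, hlt, hle⟩ := exists_prob_largeCluster_threshold hB p
  refine ⟨3 * (m + 1), ?_, meanCluster_le_two_mul_truncMeanCluster hp (by omega) hle⟩
  have hm' : (1 : ℝ) ≤ m := mod_cast hm
  calc ((3 * (m + 1) : ℕ) : ℝ) ^ 2 ≤ 216 * ((m : ℝ) ^ 2 * (1 / 6)) := by push_cast; nlinarith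
    _ ≤ 216 * ((m : ℝ) ^ 2 * prob B.sym2 p (largeCluster B m)) := by gcongr
    _ ≤ _ := by gcongr; exact sq_mul_prob_largeCluster_le hp B m

end Truncation

/-! ### Merging clusters of two disjoint sets of vertices -/

section Merge

variable {W : Type*} {B C L : Finset W} {p : Sym2 W → ℝ} {q : ℝ}

theorem disjoint_sym2_sym2 (hd : Disjoint B C) : Disjoint B.sym2 C.sym2 := by
  rw [Finset.disjoint_left]
  intro e heB heC
  exact Finset.disjoint_left.1 hd (Finset.mem_sym2_iff.1 heB _ e.out_fst_mem)
    (Finset.mem_sym2_iff.1 heC _ e.out_fst_mem)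

variable [DecidableEq W]

/-- The edges between `B` and `C`. -/
def crossEdges (B C : Finset W) : Finset (Sym2 W) :=
  (B ×ˢ C).image fun k => s(k.1, k.2)

theorem mem_crossEdges {e : Sym2 W} :
    e ∈ crossEdges B C ↔ ∃ a ∈ B, ∃ b ∈ C, s(a, b) = e := by
  simp [crossEdges, and_assoc]

theorem crossEdges_subset_crossEdges {B' C' : Finset W} (hB : B ⊆ B') (hC : C ⊆ C') :
    crossEdges B C ⊆ crossEdges B' C' :=
  Finset.image_subset_image (Finset.product_subset_product hB hC)

theorem crossEdges_subset_sym2 (hB : B ⊆ L) (hC : C ⊆ L) : crossEdges B C ⊆ L.sym2 := by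
  intro e he
  obtain ⟨a, ha, b, hb, rfl⟩ := mem_crossEdges.1 he
  exact Finset.mk_mem_sym2_iff.2 ⟨hB ha, hC hb⟩

theorem sum_crossEdges {M : Type*} [AddCommMonoid M] (hd : Disjoint B C) (f : Sym2 W → M) :
    ∑ e ∈ crossEdges B C, f e = ∑ a ∈ B, ∑ b ∈ C, f s(a, b) := by
  rw [crossEdges, Finset.sum_image, Finset.sum_product]
  rintro ⟨a, b⟩ h ⟨a', b'⟩ h' he
  simp only [Finset.coe_product, Set.mem_prod, Finset.mem_coe] at h h'
  rcases Sym2.eq_iff.1 he with ⟨rfl, rfl⟩ | ⟨rfl, rfl⟩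
  · rfl
  · exact absurd h'.2 (Finset.disjoint_left.1 hd h.1)

theorem card_crossEdges (hd : Disjoint B C) : (crossEdges B C).card = B.card * C.card := by
  rw [Finset.card_eq_sum_ones, sum_crossEdges hd]
  simp

theorem disjoint_sym2_crossEdges_left (hd : Disjoint B C) : Disjoint B.sym2 (crossEdges B C) := by
  rw [Finset.disjoint_right]
  intro e he heB
  obtain ⟨a, -, b, hb, rfl⟩ := mem_crossEdges.1 he
  exact Finset.disjoint_right.1 hd hb (Finset.mk_mem_sym2_iff.1 heB).2

theorem disjoint_sym2_crossEdges_right (hd : Disjoint B C) : Disjoint C.sym2 (crossEdges B C) := by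
  rw [Finset.disjoint_right]
  intro e he heC
  obtain ⟨a, ha, b, -, rfl⟩ := mem_crossEdges.1 he
  exact Finset.disjoint_left.1 hd ha (Finset.mk_mem_sym2_iff.1 heC).1

theorem linked_of_not_disjoint_crossEdges {S T U : Finset (Sym2 W)} {u v : W}
    (h : ¬ Disjoint U (crossEdges (clusterIn B S u) (clusterIn C T v))) :
    Linked (S ∪ (T ∪ U)) u v := by
  obtain ⟨e, heU, he⟩ := Finset.not_disjoint_iff.1 h
  obtain ⟨a, ha, b, hb, rfl⟩ := mem_crossEdges.1 he
  have hua : Linked (S ∪ (T ∪ U)) u a := (mem_clusterIn.1 ha).2.mono Finset.subset_union_left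
  have hvb : Linked (S ∪ (T ∪ U)) v b :=
    (mem_clusterIn.1 hb).2.mono (Finset.subset_union_left.trans Finset.subset_union_right)
  have hab : Linked (S ∪ (T ∪ U)) a b := Linked.of_mem (by simp [heU])
  exact hua.trans (hab.trans hvb.symm)

theorem prob_disjoint_crossEdges_le {F : Finset (Sym2 W)} (hp : ∀ e, p e ∈ Set.Icc 0 1)
    (hd : Disjoint B C) (hF : crossEdges B C ⊆ F)
    (hq : ∀ a ∈ B, ∀ b ∈ C, 1 - p s(a, b) ≤ Real.exp (-q)) :
    prob F p {U | Disjoint U (crossEdges B C)} ≤ Real.exp (-(q * (B.card * C.card))) := by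
  calc prob F p {U | Disjoint U (crossEdges B C)}
      = ∏ e ∈ crossEdges B C, (1 - p e) := prob_disjoint hF p
    _ ≤ ∏ _e ∈ crossEdges B C, Real.exp (-q) := by
        refine Finset.prod_le_prod (fun e _ => sub_nonneg.2 (hp e).2) fun e he => ?_
        obtain ⟨a, ha, b, hb, rfl⟩ := mem_crossEdges.1 he
        exact hq a ha b hb
    _ = _ := by
        rw [Finset.prod_const, card_crossEdges hd, ← Real.exp_nat_mul]
        push_cast
        ring_nf

theorem div_one_add_le_one_sub_exp_neg {x : ℝ} (hx : 0 ≤ x) :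
    x / (1 + x) ≤ 1 - Real.exp (-x) := by
  have hexp : Real.exp (-x) ≤ (1 + x)⁻¹ := by
    rw [Real.exp_neg]
    exact inv_anti₀ (by linarith) (by linarith [Real.add_one_le_exp x])
  calc x / (1 + x) = 1 - (1 + x)⁻¹ := by field_simp; ring
    _ ≤ 1 - Real.exp (-x) := by linarith

theorem div_mul_min_mul_min_le_one_sub_exp (hq : 0 ≤ q) (N k l : ℕ) :
    q / (1 + q * (N : ℝ) ^ 2) * (((min k N : ℕ) : ℝ) * (min l N : ℕ)) ≤
      1 - Real.exp (-(q * (k * l))) := by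
  have hx : 0 ≤ ((min k N : ℕ) : ℝ) * (min l N : ℕ) := by positivity
  have hx_le : ((min k N : ℕ) : ℝ) * (min l N : ℕ) ≤ k * l :=
    mod_cast Nat.mul_le_mul (min_le_left k N) (min_le_left l N)
  have hxN : ((min k N : ℕ) : ℝ) * (min l N : ℕ) ≤ (N : ℝ) ^ 2 := by
    rw [sq]; exact mod_cast Nat.mul_le_mul (min_le_right k N) (min_le_right l N)
  set x : ℝ := ((min k N : ℕ) : ℝ) * (min l N : ℕ)
  calc q / (1 + q * (N : ℝ) ^ 2) * x ≤ q * x / (1 + q * x) := by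
        rw [div_mul_eq_mul_div]; gcongr
    _ ≤ 1 - Real.exp (-(q * x)) := div_one_add_le_one_sub_exp_neg (mul_nonneg hq hx)
    _ ≤ _ := by gcongr

theorem truncMeanCluster_mul_le_tauIn (hd : Disjoint B C) (hB : B ⊆ L) (hC : C ⊆ L)
    (hp : ∀ e, p e ∈ Set.Icc 0 1) (hq : 0 ≤ q)
    (hpq : ∀ a ∈ B, ∀ b ∈ C, 1 - p s(a, b) ≤ Real.exp (-q)) (N : ℕ) (u v : W) :
    q / (1 + q * (N : ℝ) ^ 2) * (truncMeanCluster B p N u * truncMeanCluster C p N v) ≤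
      tauIn L p u v := by
  have hsub : B.sym2 ∪ (C.sym2 ∪ crossEdges B C) ⊆ L.sym2 :=
    Finset.union_subset (Finset.sym2_mono hB)
      (Finset.union_subset (Finset.sym2_mono hC) (crossEdges_subset_sym2 hB hC))
  refine le_trans ?_ (expect_mono_set hsub hp
    (monotone_indicator_of_isUpperSet (isUpperSet_linked u v)))
  rw [expect_union (Finset.disjoint_union_right.2
      ⟨disjoint_sym2_sym2 hd, disjoint_sym2_crossEdges_left hd⟩),
    truncMeanCluster, truncMeanCluster, ← expect_mul_const, ← expect_const_mul]
  refine expect_mono hp fun S _ => ?_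
  rw [expect_union (disjoint_sym2_crossEdges_right hd), ← expect_const_mul, ← expect_const_mul]
  refine expect_mono hp fun T _ => ?_
  have hBS : clusterIn B S u ⊆ B := fun _ hz => (mem_clusterIn.1 hz).1
  have hCT : clusterIn C T v ⊆ C := fun _ hz => (mem_clusterIn.1 hz).1
  have hnot := prob_disjoint_crossEdges_le hp (hd.mono hBS hCT)
    (crossEdges_subset_crossEdges hBS hCT) fun a ha b hb => hpq a (hBS ha) b (hCT hb)
  calc _ ≤ 1 - Real.exp (-(q * ((clusterIn B S u).card * (clusterIn C T v).card))) :=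
        div_mul_min_mul_min_le_one_sub_exp hq N _ _
    _ ≤ prob (crossEdges B C) p
          {U | Disjoint U (crossEdges (clusterIn B S u) (clusterIn C T v))}ᶜ := by
        rw [prob_compl]; linarith
    _ ≤ _ := expect_mono hp fun U _ => indicator_one_le_indicator_one
        (B := {S | Linked S u v}) fun h => linked_of_not_disjoint_crossEdges (by simpa using h)

end Merge

/-! ### The Duminil-Copin–Tassion differential inequality -/

section Escape

variable {W : Type*} [DecidableEq W] {L Ω T : Finset W} {S : Finset (Sym2 W)} {o x y : W}

/-- The event that `x` is connected to a vertex of `Ω \ L`. -/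
def escape (L Ω : Finset W) (x : W) : Set (Finset (Sym2 W)) :=
  {S | ∃ y ∈ Ω \ L, Linked S x y}

theorem isUpperSet_escape (L Ω : Finset W) (x : W) : IsUpperSet (escape L Ω x) :=
  fun _ _ hST ⟨y, hy, h⟩ => ⟨y, hy, h.mono hST⟩

theorem mem_escape_of_linked (h : Linked S x y) (hy : S ∈ escape L Ω y) : S ∈ escape L Ω x :=
  let ⟨z, hz, hyz⟩ := hy
  ⟨z, hz, h.trans hyz⟩

open Classical in
/-- The vertices of `L` that are not connected to `Ω \ L`. -/
noncomputable def nonEscaping (L Ω : Finset W) (S : Finset (Sym2 W)) : Finset W :=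
  L.filter fun x => S ∉ escape L Ω x

theorem mem_nonEscaping : x ∈ nonEscaping L Ω S ↔ x ∈ L ∧ S ∉ escape L Ω x := by
  simp [nonEscaping]

theorem nonEscaping_subset (L Ω : Finset W) (S : Finset (Sym2 W)) : nonEscaping L Ω S ⊆ L :=
  fun _ h => (mem_nonEscaping.1 h).1

theorem mem_escape_of_notMem_nonEscaping (hx : x ∈ Ω) (h : x ∉ nonEscaping L Ω S) :
    S ∈ escape L Ω x := by
  by_cases hxL : x ∈ L
  · by_contra h'
    exact h (mem_nonEscaping.2 ⟨hxL, h'⟩)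
  · exact ⟨x, Finset.mem_sdiff.2 ⟨hx, hxL⟩, Linked.refl x⟩

theorem nonEscaping_sdiff_sym2_self (hL : L ⊆ Ω) (S : Finset (Sym2 W)) :
    nonEscaping L Ω (S \ (nonEscaping L Ω S).sym2) = nonEscaping L Ω S := by
  ext x
  refine ⟨fun hx => ?_, fun hx => ?_⟩
  · obtain ⟨hxL, hx⟩ := mem_nonEscaping.1 hx
    by_contra hxT
    obtain ⟨y, hy, hxy⟩ := mem_escape_of_notMem_nonEscaping (hL hxL) hxT
    refine hx ⟨y, hy, hxy.restrict fun a b ha hab => Finset.mem_sdiff.2 ⟨hab, fun hT => ?_⟩⟩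
    have haT := (Finset.mk_mem_sym2_iff.1 hT).1
    exact (mem_nonEscaping.1 haT).2 ⟨y, hy, ha.symm.trans hxy⟩
  · exact mem_nonEscaping.2 ((mem_nonEscaping.1 hx).imp_right fun h h' =>
      h (isUpperSet_escape L Ω x Finset.sdiff_subset h'))

theorem nonEscaping_eq_of_sdiff_sym2 (hS : S ⊆ Ω.sym2) (h : nonEscaping L Ω (S \ T.sym2) = T) :
    nonEscaping L Ω S = T := by
  have stay_in_T : ∀ {x y}, Linked S x y → x ∈ T → y ∈ T := by
    intro x y hxy hx
    induction hxy with
    | refl => exact hx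
    | @tail a b _ hab ha =>
      by_contra hb
      have hab' : s(a, b) ∈ S \ T.sym2 :=
        Finset.mem_sdiff.2 ⟨hab, fun hT => hb (Finset.mk_mem_sym2_iff.1 hT).2⟩
      rw [← h] at ha hb
      exact (mem_nonEscaping.1 ha).2 (mem_escape_of_linked (Linked.of_mem (h.symm ▸ hab'))
        (mem_escape_of_notMem_nonEscaping (Finset.mk_mem_sym2_iff.1 (hS hab)).2 hb))
  have hTL : T ⊆ L := h ▸ nonEscaping_subset L Ω _
  ext x
  refine ⟨fun hx => ?_, fun hx => mem_nonEscaping.2 ⟨hTL hx, fun ⟨y, hy, hxy⟩ => ?_⟩⟩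
  · rw [← h]
    exact mem_nonEscaping.2 ((mem_nonEscaping.1 hx).imp_right fun hx h' =>
      hx (isUpperSet_escape L Ω x Finset.sdiff_subset h'))
  · exact (Finset.mem_sdiff.1 hy).2 (hTL (stay_in_T hxy hx))

theorem nonEscaping_eq_iff_sdiff_sym2 (hL : L ⊆ Ω) (hS : S ⊆ Ω.sym2) :
    nonEscaping L Ω S = T ↔ nonEscaping L Ω (S \ T.sym2) = T :=
  ⟨fun h => by simpa only [h] using nonEscaping_sdiff_sym2_self hL S,
    nonEscaping_eq_of_sdiff_sym2 hS⟩

theorem prob_linked_inter_nonEscaping_eq (hL : L ⊆ Ω) (hT : T ⊆ L) (p : Sym2 W → ℝ) (o x : W) :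
    prob Ω.sym2 p ({S | Linked (S ∩ T.sym2) o x} ∩ {S | nonEscaping L Ω S = T}) =
      tauIn T p o x * prob Ω.sym2 p {S | nonEscaping L Ω S = T} := by
  have hsdiff : ∀ S ⊆ Ω.sym2, nonEscaping L Ω S = T ↔
      nonEscaping L Ω (S ∩ (Ω.sym2 \ T.sym2)) = T := fun S hS => by
    rw [← Finset.inter_sdiff_assoc, Finset.inter_eq_left.2 hS]
    exact nonEscaping_eq_iff_sdiff_sym2 hL hS
  have hprob : prob Ω.sym2 p {S | nonEscaping L Ω S = T} =
      prob (Ω.sym2 \ T.sym2) p {S | nonEscaping L Ω S = T} := by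
    rw [← prob_inter_preimage Finset.sdiff_subset]
    exact prob_congr hsdiff
  rw [hprob, tauIn, ← prob_inter_of_disjoint (Finset.sym2_mono (hT.trans hL)) Finset.sdiff_subset
    Finset.disjoint_sdiff]
  exact prob_congr fun S hS => and_congr_right fun _ => hsdiff S hS

theorem prob_escape_compl (ho : o ∈ L) (Ω : Finset W) (p : Sym2 W → ℝ) :
    prob Ω.sym2 p (escape L Ω o)ᶜ =
      ∑ T ∈ L.powerset with o ∈ T, prob Ω.sym2 p {S | nonEscaping L Ω S = T} := by
  classical
  simp only [prob]
  rw [← expect_sum]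
  refine expect_congr fun S _ => ?_
  simp [Set.indicator_apply, Finset.sum_ite_eq, mem_nonEscaping, ho, nonEscaping_subset]

theorem increment_escape_eq_one (ho : o ∈ nonEscaping L Ω S) (hx : x ∈ nonEscaping L Ω S)
    (hy : y ∈ Ω \ nonEscaping L Ω S) (hox : Linked S o x) :
    increment s(x, y) ((escape L Ω o).indicator (1 : Finset (Sym2 W) → ℝ)) S = 1 := by
  obtain ⟨hyΩ, hyT⟩ := Finset.mem_sdiff.1 hy
  have hyesc := mem_escape_of_notMem_nonEscaping hyΩ hyT
  have hclosed : s(x, y) ∉ S := fun h =>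
    (mem_nonEscaping.1 hx).2 (mem_escape_of_linked (Linked.of_mem h) hyesc)
  have hopened : insert s(x, y) S ∈ escape L Ω o :=
    mem_escape_of_linked ((hox.mono (Finset.subset_insert _ _)).trans
      (Linked.of_mem (Finset.mem_insert_self _ _)))
      (isUpperSet_escape L Ω y (Finset.subset_insert _ _) hyesc)
  simp [increment, hclosed, hopened, (mem_nonEscaping.1 ho).2]

theorem increment_escape_nonneg (L Ω : Finset W) (S : Finset (Sym2 W)) (o : W) (e : Sym2 W) :
    0 ≤ increment e ((escape L Ω o).indicator (1 : Finset (Sym2 W) → ℝ)) S := by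
  unfold increment
  split_ifs
  · exact le_rfl
  · exact sub_nonneg.2 (monotone_indicator_of_isUpperSet (isUpperSet_escape L Ω o)
      (Finset.subset_insert _ _))

variable {J : Sym2 W → ℝ}

theorem sum_le_sum_increment_escape (hL : L ⊆ Ω) (hJ : ∀ e, 0 ≤ J e)
    (ho : o ∈ nonEscaping L Ω S) :
    ∑ x ∈ nonEscaping L Ω S, ∑ y ∈ Ω \ nonEscaping L Ω S,
      J s(x, y) * {R | Linked (R ∩ (nonEscaping L Ω S).sym2) o x}.indicator 1 S ≤
    ∑ e ∈ Ω.sym2, J e * increment e ((escape L Ω o).indicator 1) S := by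
  set T := nonEscaping L Ω S
  calc _ ≤ ∑ x ∈ T, ∑ y ∈ Ω \ T,
        J s(x, y) * increment s(x, y) ((escape L Ω o).indicator 1) S := by
        refine Finset.sum_le_sum fun x hx => Finset.sum_le_sum fun y hy =>
          mul_le_mul_of_nonneg_left ?_ (hJ _)
        by_cases hox : Linked (S ∩ T.sym2) o x
        · rw [increment_escape_eq_one ho hx hy (hox.mono Finset.inter_subset_left)]
          exact Set.indicator_le_self' (fun _ _ => zero_le_one) S
        · rw [Set.indicator_of_notMem (by exact hox)]
          exact increment_escape_nonneg L Ω S o _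
    _ = ∑ e ∈ crossEdges T (Ω \ T), J e * increment e ((escape L Ω o).indicator 1) S :=
        (sum_crossEdges Finset.disjoint_sdiff fun e =>
          J e * increment e ((escape L Ω o).indicator 1) S).symm
    _ ≤ _ := Finset.sum_le_sum_of_subset_of_nonneg
        (crossEdges_subset_sym2 ((nonEscaping_subset L Ω S).trans hL) Finset.sdiff_subset)
        fun e _ _ => mul_nonneg (hJ e) (increment_escape_nonneg L Ω S o e)

/-- The functional `φ_T` of Duminil-Copin and Tassion, up to the factor `β`: the total rate of the
edges from vertices connected to `o` inside `T` to vertices of `Ω \ T`. -/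
noncomputable def exitRate (Ω : Finset W) (J p : Sym2 W → ℝ) (o : W) (T : Finset W) : ℝ :=
  ∑ x ∈ T, ∑ y ∈ Ω \ T, J s(x, y) * tauIn T p o x

theorem sum_exitRate_mul_prob_le (hL : L ⊆ Ω) (hJ : ∀ e, 0 ≤ J e) {p : Sym2 W → ℝ}
    (hp : ∀ e, p e ∈ Set.Icc 0 1) (o : W) :
    ∑ T ∈ L.powerset with o ∈ T, exitRate Ω J p o T * prob Ω.sym2 p {S | nonEscaping L Ω S = T} ≤
      ∑ e ∈ Ω.sym2, J e * expect Ω.sym2 p (increment e ((escape L Ω o).indicator 1)) := by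
  classical
  calc _ = ∑ T ∈ L.powerset with o ∈ T, ∑ x ∈ T, ∑ y ∈ Ω \ T, J s(x, y) *
        prob Ω.sym2 p ({S | Linked (S ∩ T.sym2) o x} ∩ {S | nonEscaping L Ω S = T}) := by
        refine Finset.sum_congr rfl fun T hT => ?_
        rw [Finset.mem_filter, Finset.mem_powerset] at hT
        simp only [prob_linked_inter_nonEscaping_eq hL hT.1, exitRate, Finset.sum_mul, mul_assoc]
    _ = expect Ω.sym2 p fun S => ∑ T ∈ L.powerset with o ∈ T, if nonEscaping L Ω S = T then
          ∑ x ∈ T, ∑ y ∈ Ω \ T, J s(x, y) * {R | Linked (R ∩ T.sym2) o x}.indicator 1 S else 0 := by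
        simp only [prob, ← expect_const_mul, ← expect_sum]
        refine expect_congr fun S _ => Finset.sum_congr rfl fun T _ => ?_
        split_ifs with h <;> simp [Set.indicator_apply, h]
    _ ≤ expect Ω.sym2 p fun S =>
          ∑ e ∈ Ω.sym2, J e * increment e ((escape L Ω o).indicator 1) S := by
        refine expect_mono hp fun S _ => ?_
        rw [Finset.sum_ite_eq]
        split_ifs with ho
        · exact sum_le_sum_increment_escape hL hJ (Finset.mem_filter.1 ho).2
        · exact Finset.sum_nonneg fun e _ =>
            mul_nonneg (hJ e) (increment_escape_nonneg L Ω S o e)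
    _ = _ := by simp only [expect_sum, expect_const_mul]

theorem mul_prob_escape_compl_le (hL : L ⊆ Ω) (hJ : ∀ e, 0 ≤ J e) (ho : o ∈ L)
    {p : Sym2 W → ℝ} (hp : ∀ e, p e ∈ Set.Icc 0 1) {κ : ℝ}
    (hκ : ∀ T ⊆ L, o ∈ T → κ ≤ exitRate Ω J p o T) :
    κ * (1 - prob Ω.sym2 p (escape L Ω o)) ≤
      ∑ e ∈ Ω.sym2, J e * expect Ω.sym2 p (increment e ((escape L Ω o).indicator 1)) := by
  refine le_trans ?_ (sum_exitRate_mul_prob_le hL hJ hp o)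
  rw [← prob_compl, prob_escape_compl ho, Finset.mul_sum]
  refine Finset.sum_le_sum fun T hT => ?_
  rw [Finset.mem_filter, Finset.mem_powerset] at hT
  exact mul_le_mul_of_nonneg_right (hκ T hT.1 hT.2) (prob_nonneg hp _)

theorem tauIn_openProb_mono (B : Finset W) (hJ : ∀ e, 0 ≤ J e) {b b' : ℝ} (hb : 0 ≤ b)
    (hbb' : b ≤ b') (x y : W) : tauIn B (openProb J b) x y ≤ tauIn B (openProb J b') x y :=
  expect_mono_weight (openProb_mem_Icc hJ hb) (openProb_mem_Icc hJ (hb.trans hbb'))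
    (openProb_mono hJ hbb') (monotone_indicator_of_isUpperSet (isUpperSet_linked x y))

theorem one_sub_le_exp_of_mul_one_sub_le_deriv {f D : ℝ → ℝ} {κ b₀ b₁ : ℝ} (hb : b₀ ≤ b₁)
    (hf : ∀ b, b₀ ≤ b → HasDerivAt f (D b) b) (hD : ∀ b, b₀ ≤ b → κ * (1 - f b) ≤ D b)
    (hf₀ : 0 ≤ f b₀) : 1 - f b₁ ≤ Real.exp (-(κ * (b₁ - b₀))) := by
  set g : ℝ → ℝ := fun b => (1 - f b) * Real.exp (κ * b)
  have hg : ∀ b, b₀ ≤ b → HasDerivAt g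
      (-(D b) * Real.exp (κ * b) + (1 - f b) * (Real.exp (κ * b) * κ)) b := fun b hb =>
    ((hf b hb).const_sub 1).mul (by simpa using ((hasDerivAt_id b).const_mul κ).exp)
  have hanti : AntitoneOn g (Set.Icc b₀ b₁) := by
    refine antitoneOn_of_hasDerivWithinAt_nonpos (convex_Icc _ _)
      (fun b hb => (hg b hb.1).continuousAt.continuousWithinAt)
      (fun b hb => (hg b (interior_subset hb).1).hasDerivWithinAt) fun b hb => ?_
    have hpos := Real.exp_pos (κ * b)
    nlinarith [hD b (interior_subset hb).1]
  have hle : g b₁ ≤ g b₀ := hanti (Set.left_mem_Icc.2 hb) (Set.right_mem_Icc.2 hb) hb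
  calc 1 - f b₁ = g b₁ * Real.exp (-(κ * b₁)) := by simp [g, mul_assoc, ← Real.exp_add]
    _ ≤ Real.exp (κ * b₀) * Real.exp (-(κ * b₁)) := by
        gcongr
        exact hle.trans (mul_le_of_le_one_left (Real.exp_pos _).le (by linarith))
    _ = _ := by rw [← Real.exp_add]; ring_nf

theorem one_sub_exp_le_prob_escape (hL : L ⊆ Ω) (hJ : ∀ e, 0 ≤ J e) (ho : o ∈ L)
    {b₀ b₁ κ : ℝ} (hb₀ : 0 ≤ b₀) (hb : b₀ ≤ b₁)
    (hκ : ∀ T ⊆ L, o ∈ T → κ ≤ exitRate Ω J (openProb J b₀) o T) :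
    1 - Real.exp (-(κ * (b₁ - b₀))) ≤ prob Ω.sym2 (openProb J b₁) (escape L Ω o) := by
  have hdiff := one_sub_le_exp_of_mul_one_sub_le_deriv
    (f := fun b => prob Ω.sym2 (openProb J b) (escape L Ω o)) (κ := κ) hb
    (fun b _ => hasDerivAt_expect Ω.sym2 J ((escape L Ω o).indicator 1) b)
    (fun b hb' => mul_prob_escape_compl_le hL hJ ho (openProb_mem_Icc hJ (hb₀.trans hb'))
      fun T hTL hoT => (hκ T hTL hoT).trans <| Finset.sum_le_sum fun x _ =>
        Finset.sum_le_sum fun y _ =>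
          mul_le_mul_of_nonneg_left (tauIn_openProb_mono T hJ hb₀ hb' o x) (hJ _))
    (prob_nonneg (openProb_mem_Icc hJ hb₀) _)
  linarith

end Escape

/-! ### Infinite-volume percolation as a limit of finite boxes -/

section Symmetry

variable {W : Type*}

theorem Linked.map {S : Finset (Sym2 W)} {x y : W} (φ : W ↪ W) (h : Linked S x y) :
    Linked (S.map φ.sym2Map) (φ x) (φ y) :=
  Relation.ReflTransGen.lift φ (fun a b hab => Finset.mem_map.2 ⟨s(a, b), hab, rfl⟩) _ _ h

theorem exists_linked_of_linked_map {S : Finset (Sym2 W)} {x z : W} {φ : W ↪ W}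
    (h : Linked (S.map φ.sym2Map) (φ x) z) : ∃ y, φ y = z ∧ Linked S x y := by
  induction h with
  | refl => exact ⟨x, rfl, Linked.refl x⟩
  | @tail b c _ hbc ih =>
    obtain ⟨y, rfl, hxy⟩ := ih
    obtain ⟨e, he, hbc⟩ := Finset.mem_map.1 hbc
    induction e using Sym2.ind with
    | _ a a' =>
      rcases Sym2.eq_iff.1 hbc with ⟨hay, rfl⟩ | ⟨rfl, hay⟩
      · rw [φ.injective hay] at he
        exact ⟨a', rfl, hxy.trans (Linked.of_mem he)⟩
      · rw [φ.injective hay, Sym2.eq_swap] at he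
        exact ⟨a, rfl, hxy.trans (Linked.of_mem he)⟩

theorem linked_map_iff {S : Finset (Sym2 W)} {x y : W} (φ : W ↪ W) :
    Linked (S.map φ.sym2Map) (φ x) (φ y) ↔ Linked S x y := by
  refine ⟨fun h => ?_, Linked.map φ⟩
  obtain ⟨z, hz, hxz⟩ := exists_linked_of_linked_map h
  rwa [← φ.injective hz]

variable [DecidableEq W]

theorem tauIn_map (φ : W ↪ W) (B : Finset W) {p : Sym2 W → ℝ}
    (hp : ∀ a b, p s(φ a, φ b) = p s(a, b)) (x y : W) :
    tauIn (B.map φ) p (φ x) (φ y) = tauIn B p x y := by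
  classical
  have hpφ : (fun e => p (φ.sym2Map e)) = p := by
    funext e
    induction e using Sym2.ind with
    | _ a b => exact hp a b
  unfold tauIn prob
  rw [Finset.sym2_map, expect_map, hpφ]
  exact expect_congr fun S _ => by
    simp only [Set.indicator_apply, Set.mem_ofPred_eq, linked_map_iff, Pi.one_apply]

theorem tauIn_eq_zero {B : Finset W} {x y : W} (hx : x ∈ B) (hy : y ∉ B) (p : Sym2 W → ℝ) :
    tauIn B p x y = 0 := by
  rw [← expect_const B.sym2 p 0]
  exact expect_congr fun S hS =>
    Set.indicator_of_notMem (s := {S | Linked S x y}) (fun h => hy (h.mem_of_subset_sym2 hS hx)) _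

theorem tauIn_symm (B : Finset W) (p : Sym2 W → ℝ) (x y : W) : tauIn B p x y = tauIn B p y x :=
  prob_congr fun _ _ => ⟨Linked.symm, Linked.symm⟩

end Symmetry

section Lattice

variable {d : ℕ}

/-- The symmetrized kernel, as a function of unordered pairs. -/
noncomputable def edgeRate (J : V d → V d → ℝ) (e : Sym2 (V d)) : ℝ :=
  Sym2.lift ⟨fun x y => (J x y + J y x) / 2, fun x y => by dsimp only; rw [add_comm]⟩ e

theorem edgeProb_eq_ofReal (J : V d → V d → ℝ) (β : ℝ) (e : Sym2 (V d)) :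
    edgeProb J β e = ENNReal.ofReal (openProb (edgeRate J) β e) := rfl

/-- The box `[-r, r]^d`. -/
noncomputable def box (d r : ℕ) : Finset (V d) := Fintype.piFinset fun _ => Finset.Icc (-(r : ℤ)) r

theorem mem_box {r : ℕ} {x : V d} : x ∈ box d r ↔ normInf x ≤ r := by
  simp only [box, Fintype.mem_piFinset, Finset.mem_Icc, normInf, Finset.sup_le_iff,
    Finset.mem_univ, true_imp_iff]
  exact forall_congr' fun i => by omega

theorem box_mono {r s : ℕ} (h : r ≤ s) : box d r ⊆ box d s := fun _ hx =>
  mem_box.2 ((mem_box.1 hx).trans h)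

theorem exists_subset_box (B : Finset (V d)) : ∃ r, B ⊆ box d r :=
  ⟨B.sup normInf, fun _ hx => mem_box.2 (Finset.le_sup (f := normInf) hx)⟩

/-- The set of open edges of `ω` in the finite set `E`. -/
def openEdges (E : Finset (Sym2 (V d))) (ω : Config d) : Finset (Sym2 (V d)) :=
  E.filter fun e => ω e = true

theorem mem_openEdges {E : Finset (Sym2 (V d))} {ω : Config d} {e : Sym2 (V d)} :
    e ∈ openEdges E ω ↔ e ∈ E ∧ ω e = true :=
  Finset.mem_filter

theorem openEdges_subset (E : Finset (Sym2 (V d))) (ω : Config d) : openEdges E ω ⊆ E :=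
  Finset.filter_subset _ _

theorem openEdges_mono {E F : Finset (Sym2 (V d))} (h : E ⊆ F) (ω : Config d) :
    openEdges E ω ⊆ openEdges F ω :=
  Finset.filter_subset_filter _ h

theorem openEdges_eq_iff {E S : Finset (Sym2 (V d))} (hS : S ⊆ E) (ω : Config d) :
    openEdges E ω = S ↔ ∀ e ∈ E, ω e = decide (e ∈ S) := by
  refine ⟨?_, fun h => Finset.ext fun e => ?_⟩
  · rintro rfl e he
    simp [mem_openEdges, he]
  · rw [mem_openEdges]
    exact ⟨fun ⟨he, hω⟩ => by simpa [h e he] using hω,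
      fun he => ⟨hS he, by simpa [h e (hS he)] using he⟩⟩

theorem measurableSet_openEdges_eq {E S : Finset (Sym2 (V d))} (hS : S ⊆ E) :
    MeasurableSet {ω : Config d | openEdges E ω = S} := by
  simp only [openEdges_eq_iff hS, Set.ofPred_forall]
  exact Finset.measurableSet_biInter E fun e _ =>
    measurableSet_eq_fun (measurable_pi_apply e) measurable_const

theorem setOf_openEdges_mem (E : Finset (Sym2 (V d))) (A : Set (Finset (Sym2 (V d))))
    [DecidablePred (· ∈ A)] : {ω : Config d | openEdges E ω ∈ A} =
      ⋃ S ∈ E.powerset.filter (· ∈ A), {ω : Config d | openEdges E ω = S} := by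
  ext ω
  simp [openEdges_subset]

theorem measurableSet_openEdges_mem (E : Finset (Sym2 (V d))) (A : Set (Finset (Sym2 (V d)))) :
    MeasurableSet {ω : Config d | openEdges E ω ∈ A} := by
  classical
  rw [setOf_openEdges_mem]
  exact Finset.measurableSet_biUnion _ fun S hS => measurableSet_openEdges_eq
    (Finset.mem_powerset.1 (Finset.mem_filter.1 hS).1)

variable {J : V d → V d → ℝ} {P : ℝ → Measure (Config d)} {β : ℝ}

theorem measure_openEdges_eq (hP : IsLRP J P) (hp : ∀ e, openProb (edgeRate J) β e ∈ Set.Icc 0 1)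
    {E S : Finset (Sym2 (V d))} (hS : S ⊆ E) :
    P β {ω | openEdges E ω = S} = ENNReal.ofReal (∏ e ∈ E,
      if e ∈ S then openProb (edgeRate J) β e else 1 - openProb (edgeRate J) β e) := by
  simp only [openEdges_eq_iff hS]
  rw [hP, ENNReal.ofReal_prod_of_nonneg fun e _ => by
    split_ifs
    exacts [(hp e).1, sub_nonneg.2 (hp e).2]]
  refine Finset.prod_congr rfl fun e _ => ?_
  by_cases he : e ∈ S <;> simp [he, edgeProb_eq_ofReal, ENNReal.ofReal_sub _ (hp e).1]

theorem measure_openEdges_mem (hP : IsLRP J P)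
    (hp : ∀ e, openProb (edgeRate J) β e ∈ Set.Icc 0 1) (E : Finset (Sym2 (V d)))
    (A : Set (Finset (Sym2 (V d)))) :
    P β {ω | openEdges E ω ∈ A} = ENNReal.ofReal (prob E (openProb (edgeRate J) β) A) := by
  classical
  rw [setOf_openEdges_mem, measure_biUnion_finset
    (fun S _ T _ hST => Set.disjoint_left.2 fun ω hS hT => hST (hS.symm.trans hT))
    fun S hS => measurableSet_openEdges_eq (Finset.mem_powerset.1 (Finset.mem_filter.1 hS).1)]
  rw [Finset.sum_congr rfl fun S hS => measure_openEdges_eq hP hp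
    (Finset.mem_powerset.1 (Finset.mem_filter.1 hS).1),
    ← ENNReal.ofReal_sum_of_nonneg fun S _ => Finset.prod_nonneg fun e _ => by
      split_ifs
      exacts [(hp e).1, sub_nonneg.2 (hp e).2]]
  simp [prob, expect, Finset.sum_filter, Set.indicator_apply]

theorem measure_univ_of_isLRP (hP : IsLRP J P) (β : ℝ) : P β Set.univ = 1 := by
  simpa using hP β ∅ fun _ => true

theorem conn_of_linked_openEdges {E : Finset (Sym2 (V d))} {ω : Config d} {x y : V d}
    (h : Linked (openEdges E ω) x y) : conn ω x y := by
  induction h with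
  | refl => exact Relation.ReflTransGen.refl
  | @tail b c _ hbc ih =>
    by_cases hne : b = c
    · rwa [← hne]
    · exact ih.tail ⟨hne, (mem_openEdges.1 hbc).2⟩

theorem conn_iff_exists_linked {ω : Config d} {x y : V d} :
    conn ω x y ↔ ∃ N, Linked (openEdges (box d N).sym2 ω) x y := by
  refine ⟨fun h => ?_, fun ⟨N, h⟩ => conn_of_linked_openEdges h⟩
  induction h with
  | refl => exact ⟨0, Linked.refl x⟩
  | @tail b c _ hbc ih =>
    obtain ⟨N, hN⟩ := ih
    refine ⟨N + normInf b + normInf c, (hN.mono (openEdges_mono (Finset.sym2_mono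
      (box_mono (by omega))) ω)).trans (Linked.of_mem (mem_openEdges.2 ⟨?_, hbc.2⟩))⟩
    rw [Finset.mk_mem_sym2_iff, mem_box, mem_box]
    omega

theorem setOf_conn (x y : V d) : {ω : Config d | conn ω x y} =
    ⋃ N, {ω | openEdges (box d N).sym2 ω ∈ {S | Linked S x y}} := by
  ext ω
  simp [conn_iff_exists_linked]

theorem measurableSet_conn (x y : V d) : MeasurableSet {ω : Config d | conn ω x y} := by
  rw [setOf_conn]
  exact MeasurableSet.iUnion fun N => measurableSet_openEdges_mem _ _

/-- The infinite-volume two-point function, as the limit of the two-point functions of boxes. -/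
noncomputable def tau (p : Sym2 (V d) → ℝ) (x y : V d) : ℝ := ⨆ N, tauIn (box d N) p x y

section TwoPoint

variable {p : Sym2 (V d) → ℝ}

theorem bddAbove_range_tauIn_box (hp : ∀ e, p e ∈ Set.Icc 0 1) (x y : V d) :
    BddAbove (Set.range fun N => tauIn (box d N) p x y) :=
  ⟨1, Set.forall_mem_range.2 fun _ => tauIn_le_one _ hp x y⟩

theorem tauIn_le_tau (hp : ∀ e, p e ∈ Set.Icc 0 1) (B : Finset (V d)) (x y : V d) :
    tauIn B p x y ≤ tau p x y := by
  obtain ⟨N, hN⟩ := exists_subset_box B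
  exact (tauIn_mono hN hp x y).trans (le_ciSup (bddAbove_range_tauIn_box hp x y) N)

theorem tau_nonneg (hp : ∀ e, p e ∈ Set.Icc 0 1) (x y : V d) : 0 ≤ tau p x y :=
  (tauIn_nonneg ∅ hp x y).trans (tauIn_le_tau hp ∅ x y)

theorem tau_le_one (hp : ∀ e, p e ∈ Set.Icc 0 1) (x y : V d) : tau p x y ≤ 1 :=
  ciSup_le fun _ => tauIn_le_one _ hp x y

theorem tendsto_tauIn_box (hp : ∀ e, p e ∈ Set.Icc 0 1) (x y : V d) :
    Filter.Tendsto (fun N => tauIn (box d N) p x y) Filter.atTop (nhds (tau p x y)) :=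
  tendsto_atTop_ciSup (fun _ _ h => tauIn_mono (box_mono h) hp x y)
    (bddAbove_range_tauIn_box hp x y)

theorem tau_symm (p : Sym2 (V d) → ℝ) (x y : V d) : tau p x y = tau p y x := by
  simp only [tau, tauIn_symm _ p x y]

theorem twoPoint_eq_ofReal (hP : IsLRP J P) (hp : ∀ e, openProb (edgeRate J) β e ∈ Set.Icc 0 1)
    (x y : V d) : twoPoint P β x y = ENNReal.ofReal (tau (openProb (edgeRate J) β) x y) := by
  have hmono : Monotone fun N =>
      {ω : Config d | openEdges (box d N).sym2 ω ∈ {S | Linked S x y}} :=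
    fun M N h ω hω => Linked.mono (openEdges_mono (Finset.sym2_mono (box_mono h)) ω) hω
  unfold twoPoint
  rw [setOf_conn]
  refine tendsto_nhds_unique (tendsto_measure_iUnion_atTop hmono) ?_
  simp only [Function.comp_def, measure_openEdges_mem hP hp]
  exact (ENNReal.continuous_ofReal.tendsto _).comp (tendsto_tauIn_box hp x y)

/-- Invariance of the edge probabilities under the translations of `ℤ^d`. -/
def TranslationInvariant (p : Sym2 (V d) → ℝ) : Prop :=
  ∀ a b z : V d, p s(a + z, b + z) = p s(a, b)

theorem tauIn_map_add (hT : TranslationInvariant p) (B : Finset (V d)) (x y z : V d) :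
    tauIn (B.map (addRightEmbedding z)) p (x + z) (y + z) = tauIn B p x y :=
  tauIn_map (addRightEmbedding z) B (fun a b => hT a b z) x y

theorem tau_add_right (hp : ∀ e, p e ∈ Set.Icc 0 1) (hT : TranslationInvariant p) (x y z : V d) :
    tau p (x + z) (y + z) = tau p x y := by
  have tau_le_shift : ∀ x y z : V d, tau p x y ≤ tau p (x + z) (y + z) := fun x y z =>
    ciSup_le fun N => (tauIn_map_add hT _ x y z).symm.trans_le (tauIn_le_tau hp _ _ _)
  refine le_antisymm ?_ (tau_le_shift x y z)
  simpa using tau_le_shift (x + z) (y + z) (-z)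

theorem tau_eq_tau_zero_sub (hp : ∀ e, p e ∈ Set.Icc 0 1) (hT : TranslationInvariant p)
    (x y : V d) : tau p x y = tau p 0 (y - x) := by
  simpa using tau_add_right hp hT 0 (y - x) x

theorem tau_zero_neg (hp : ∀ e, p e ∈ Set.Icc 0 1) (hT : TranslationInvariant p) (x : V d) :
    tau p 0 (-x) = tau p 0 x := by
  rw [tau_symm, tau_eq_tau_zero_sub hp hT, zero_sub, neg_neg]

end TwoPoint

end Lattice

/-! ### Finite susceptibility below the critical point -/

section ExitRate

variable {W : Type*} [DecidableEq W] {J p : Sym2 W → ℝ}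

theorem exitRate_map (φ : W ↪ W) (hJ : ∀ a b, J s(φ a, φ b) = J s(a, b))
    (hp : ∀ a b, p s(φ a, φ b) = p s(a, b)) (Ω T : Finset W) (o : W) :
    exitRate (Ω.map φ) J p (φ o) (T.map φ) = exitRate Ω J p o T := by
  simp only [exitRate, ← Finset.map_sdiff, Finset.sum_map, tauIn_map φ T hp, hJ]

theorem exitRate_inter_le (hJ : ∀ e, 0 ≤ J e) (hp : ∀ e, p e ∈ Set.Icc 0 1) (Ω T : Finset W)
    (o : W) : exitRate Ω J p o (T ∩ Ω) ≤ exitRate Ω J p o T := by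
  unfold exitRate
  rw [Finset.sdiff_inter_self_right]
  calc _ ≤ ∑ x ∈ T ∩ Ω, ∑ y ∈ Ω \ T, J s(x, y) * tauIn T p o x := by
        gcongr with x _ y
        exacts [hJ _, tauIn_mono Finset.inter_subset_left hp o x]
    _ ≤ _ := Finset.sum_le_sum_of_subset_of_nonneg Finset.inter_subset_left fun x _ _ =>
        Finset.sum_nonneg fun y _ => mul_nonneg (hJ _) (tauIn_nonneg T hp o x)

theorem exitRate_le_exitRate_mul {Ω Ω' T : Finset W} {o : W} (hΩ : Ω ⊆ Ω') {b : ℝ}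
    (hpJ : ∀ e, p e ≤ b * J e) (hp : ∀ e, p e ∈ Set.Icc 0 1) :
    exitRate Ω p p o T ≤ b * exitRate Ω' J p o T := by
  simp only [exitRate, Finset.mul_sum, ← mul_assoc]
  refine Finset.sum_le_sum fun x _ => (Finset.sum_le_sum_of_subset_of_nonneg
    (Finset.sdiff_subset_sdiff hΩ le_rfl) fun y _ _ =>
      mul_nonneg (hp _).1 (tauIn_nonneg T hp o x)).trans (Finset.sum_le_sum fun y _ => ?_)
  exact mul_le_mul_of_nonneg_right (hpJ _) (tauIn_nonneg T hp o x)

theorem sum_tauIn_le_card {T L : Finset W} (hTL : T ⊆ L) (hp : ∀ e, p e ∈ Set.Icc 0 1) {o : W}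
    (ho : o ∈ T) : ∑ x ∈ L, tauIn T p o x ≤ T.card := by
  rw [← Finset.sum_subset hTL fun x _ hx => tauIn_eq_zero ho hx p]
  simpa using Finset.sum_le_card_nsmul T _ 1 fun x _ => tauIn_le_one T hp o x

theorem sum_tauIn_le_card_add_exitRate_mul {T L : Finset W} (hTL : T ⊆ L)
    (hp : ∀ e, p e ∈ Set.Icc 0 1) {o : W} (ho : o ∈ T) {M : ℝ}
    (hM : ∀ b ∈ L, ∑ x ∈ L, tauIn L p b x ≤ M) :
    ∑ x ∈ L, tauIn L p o x ≤ T.card + exitRate L p p o T * M := by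
  calc ∑ x ∈ L, tauIn L p o x
      ≤ ∑ x ∈ L, tauIn T p o x +
        ∑ x ∈ L, ∑ a ∈ T, ∑ b ∈ L \ T, tauIn T p o a * p s(a, b) * tauIn L p b x := by
        rw [← Finset.sum_add_distrib]
        exact Finset.sum_le_sum fun x _ => simon_lieb hTL hp ho x
    _ = ∑ x ∈ L, tauIn T p o x +
        ∑ a ∈ T, ∑ b ∈ L \ T, p s(a, b) * tauIn T p o a * ∑ x ∈ L, tauIn L p b x := by
        rw [Finset.sum_comm]
        congr! 2 with a _
        rw [Finset.sum_comm]
        simp only [Finset.mul_sum, mul_comm (tauIn T p o a)]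
    _ ≤ T.card + exitRate L p p o T * M := by
        simp only [exitRate, Finset.sum_mul]
        gcongr with a _ b hb
        · exact sum_tauIn_le_card hTL hp ho
        · exact mul_nonneg (hp _).1 (tauIn_nonneg T hp o a)
        · exact hM b (Finset.mem_sdiff.1 hb).1

end ExitRate

section Sharpness

variable {d : ℕ}

theorem zero_mem_box (d r : ℕ) : (0 : V d) ∈ box d r := mem_box.2 (by simp [normInf])

theorem exitRate_inter_map_add_le {p : Sym2 (V d) → ℝ} (hp : ∀ e, p e ∈ Set.Icc 0 1)
    (hT : TranslationInvariant p) {T : Finset (V d)} {κ : ℝ}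
    (hκ : ∀ Ω : Finset (V d), exitRate Ω p p 0 T ≤ κ) (L : Finset (V d)) (m : V d) :
    exitRate L p p m (T.map (addRightEmbedding m) ∩ L) ≤ κ := by
  have hL : (L.map (addRightEmbedding (-m))).map (addRightEmbedding m) = L := by
    ext z
    simp
  have hinv : ∀ a b, p s(addRightEmbedding m a, addRightEmbedding m b) = p s(a, b) :=
    fun a b => hT a b m
  calc _ ≤ exitRate L p p m (T.map (addRightEmbedding m)) :=
        exitRate_inter_le (fun e => (hp e).1) hp L _ m
    _ = exitRate (L.map (addRightEmbedding (-m))) p p 0 T := by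
        rw [← exitRate_map (addRightEmbedding m) hinv hinv _ T 0, hL, addRightEmbedding_apply,
          zero_add]
    _ ≤ κ := hκ _

theorem sum_tauIn_le_two_mul_card {p : Sym2 (V d) → ℝ} (hp : ∀ e, p e ∈ Set.Icc 0 1)
    (hT : TranslationInvariant p) {T : Finset (V d)} (h0 : (0 : V d) ∈ T)
    (hexit : ∀ Ω : Finset (V d), exitRate Ω p p 0 T ≤ 1 / 2) {L : Finset (V d)} {y : V d}
    (hy : y ∈ L) : ∑ x ∈ L, tauIn L p y x ≤ 2 * T.card := by
  obtain ⟨m, hm, hmax⟩ := Finset.exists_max_image L (fun y => ∑ x ∈ L, tauIn L p y x) ⟨y, hy⟩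
  refine (hmax y hy).trans ?_
  have hmT : m ∈ T.map (addRightEmbedding m) := Finset.mem_map.2 ⟨0, h0, by simp⟩
  have hstep := sum_tauIn_le_card_add_exitRate_mul Finset.inter_subset_right hp
    (Finset.mem_inter.2 ⟨hmT, hm⟩) hmax
  have hcard : ((T.map (addRightEmbedding m) ∩ L).card : ℝ) ≤ T.card := by
    rw [← Finset.card_map (addRightEmbedding m) (s := T)]
    exact_mod_cast Finset.card_le_card Finset.inter_subset_left
  have hhalf := mul_le_mul_of_nonneg_right (exitRate_inter_map_add_le hp hT hexit L m)
    (Finset.sum_nonneg (s := L) fun x _ => tauIn_nonneg L hp m x)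
  linarith

theorem summable_tau_of_sum_tauIn_box_le {p : Sym2 (V d) → ℝ} (hp : ∀ e, p e ∈ Set.Icc 0 1)
    {M : ℝ} (h : ∀ N, ∑ x ∈ box d N, tauIn (box d N) p 0 x ≤ M) :
    Summable fun x => tau p 0 x := by
  refine summable_of_sum_le (fun x => tau_nonneg hp 0 x) (c := M) fun u => ?_
  have hlim := tendsto_finsetSum u fun x _ => tendsto_tauIn_box hp 0 x
  obtain ⟨r, hr⟩ := exists_subset_box u
  refine le_of_tendsto hlim ?_
  filter_upwards [Filter.eventually_ge_atTop r] with N hN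
  exact (Finset.sum_le_sum_of_subset_of_nonneg (hr.trans (box_mono hN))
    fun x _ _ => tauIn_nonneg _ hp 0 x).trans (h N)

theorem exists_half_lt_exitRate {p : Sym2 (V d) → ℝ} (hp : ∀ e, p e ∈ Set.Icc 0 1)
    (hT : TranslationInvariant p) (hns : ¬ Summable fun x => tau p 0 x) {T : Finset (V d)}
    (h0 : (0 : V d) ∈ T) : ∃ Ω : Finset (V d), 1 / 2 < exitRate Ω p p 0 T := by
  by_contra! hexit
  exact hns (summable_tau_of_sum_tauIn_box_le hp fun N =>
    sum_tauIn_le_two_mul_card hp hT h0 hexit (zero_mem_box d N))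

variable {J : V d → V d → ℝ} {P : ℝ → Measure (Config d)} {β β₁ : ℝ}

theorem edgeRate_nonneg (hJ : ∀ x y, 0 ≤ J x y) (e : Sym2 (V d)) : 0 ≤ edgeRate J e := by
  induction e using Sym2.ind with
  | _ x y => exact div_nonneg (add_nonneg (hJ x y) (hJ y x)) zero_le_two

theorem translationInvariant_openProb (hJ : ∀ x y z, J (x + z) (y + z) = J x y) (β : ℝ) :
    TranslationInvariant (openProb (edgeRate J) β) := fun a b z => by
  simp only [openProb, edgeRate, Sym2.lift_mk, hJ]

theorem infinite_of_forall_not_subset_box {s : Set (V d)} (h : ∀ n, ∃ y ∉ box d n, y ∈ s) :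
    s.Infinite := fun hs => by
  obtain ⟨n, hn⟩ := exists_subset_box hs.toFinset
  obtain ⟨y, hy, hys⟩ := h n
  exact hy (hn (hs.mem_toFinset.2 hys))

theorem le_measure_infinite_cluster (hP : IsLRP J P) {δ : ℝ≥0∞}
    (h : ∀ n, δ ≤ P β {ω | ∃ y ∉ box d n, conn ω 0 y}) :
    δ ≤ P β {ω | (cluster ω 0).Infinite} := by
  set A : ℕ → Set (Config d) := fun n => {ω | ∃ y ∉ box d n, conn ω 0 y}
  have hmeas : ∀ n, MeasurableSet (A n) := fun n => by
    have hA : A n = ⋃ y ∉ box d n, {ω | conn ω 0 y} := by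
      ext ω
      simp [A]
    rw [hA]
    exact MeasurableSet.iUnion fun y => MeasurableSet.iUnion fun _ => measurableSet_conn 0 y
  have hanti : Antitone A := fun m n hmn ω ⟨y, hy, hc⟩ => ⟨y, fun h' => hy (box_mono hmn h'), hc⟩
  have hfin : P β (A 0) ≠ ∞ := ((measure_mono (Set.subset_univ _)).trans_lt
    (by rw [measure_univ_of_isLRP hP]; exact one_lt_top)).ne
  calc δ ≤ ⨅ n, P β (A n) := le_iInf h
    _ = P β (⋂ n, A n) :=
        (hanti.measure_iInter (fun n => (hmeas n).nullMeasurableSet) ⟨0, hfin⟩).symm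
    _ ≤ _ := measure_mono fun ω hω => infinite_of_forall_not_subset_box (Set.mem_iInter.1 hω)

theorem one_sub_exp_le_measure_exit_box (hP : IsLRP J P) (hJ : ∀ x y, 0 ≤ J x y)
    (hJT : ∀ x y z, J (x + z) (y + z) = J x y) (hβ : 0 < β) (hββ₁ : β ≤ β₁)
    (hns : ¬ Summable fun x => tau (openProb (edgeRate J) β) 0 x) (n : ℕ) :
    ENNReal.ofReal (1 - Real.exp (-(1 / (2 * β) * (β₁ - β)))) ≤
      P β₁ {ω | ∃ y ∉ box d n, conn ω 0 y} := by
  have hp := openProb_mem_Icc (edgeRate_nonneg hJ) hβ.le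
  choose! Ω₀ hΩ₀ using fun T : Finset (V d) =>
    exists_half_lt_exitRate hp (translationInvariant_openProb hJT β) hns (T := T)
  set Ω := box d n ∪ (box d n).powerset.biUnion Ω₀
  have hexit : ∀ T ⊆ box d n, (0 : V d) ∈ T →
      1 / (2 * β) ≤ exitRate Ω (edgeRate J) (openProb (edgeRate J) β) 0 T := fun T hTL h0 => by
    have hsub : Ω₀ T ⊆ Ω := (Finset.subset_biUnion_of_mem Ω₀ (Finset.mem_powerset.2 hTL)).trans
      Finset.subset_union_right
    have := (hΩ₀ T h0).le.trans (exitRate_le_exitRate_mul hsub (openProb_le (edgeRate J) β) hp)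
    rw [div_le_iff₀ (by positivity)]
    linarith
  have hescape := one_sub_exp_le_prob_escape Finset.subset_union_left (edgeRate_nonneg hJ)
    (zero_mem_box d n) hβ.le hββ₁ hexit
  refine (ENNReal.ofReal_le_ofReal hescape).trans ?_
  rw [← measure_openEdges_mem hP (openProb_mem_Icc (edgeRate_nonneg hJ) (hβ.le.trans hββ₁))]
  refine measure_mono ?_
  rintro ω ⟨y, hy, hlinked⟩
  exact ⟨y, (Finset.mem_sdiff.1 hy).2, conn_of_linked_openEdges hlinked⟩

theorem summable_tau_of_lt_betaC (hP : IsLRP J P) (hJ : ∀ x y, 0 ≤ J x y)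
    (hJT : ∀ x y z, J (x + z) (y + z) = J x y) (hβ : 0 ≤ β) (hβc : β < betaC P) :
    Summable fun x => tau (openProb (edgeRate J) β) 0 x := by
  by_contra hns
  have hβ₀ : 0 < β := by
    refine hβ.lt_of_ne fun h => ?_
    obtain ⟨Ω, hΩ⟩ := exists_half_lt_exitRate (openProb_mem_Icc (edgeRate_nonneg hJ) hβ)
      (translationInvariant_openProb hJT β) hns (Finset.mem_singleton_self 0)
    norm_num [exitRate, openProb, ← h] at hΩ
  obtain ⟨β₁, hββ₁, hβ₁c⟩ := exists_between hβc
  have hδ : 0 < ENNReal.ofReal (1 - Real.exp (-(1 / (2 * β) * (β₁ - β)))) := by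
    have : 0 < 1 / (2 * β) * (β₁ - β) := mul_pos (by positivity) (sub_pos.2 hββ₁)
    rw [ENNReal.ofReal_pos, sub_pos, Real.exp_lt_one_iff]
    linarith
  have hinf := le_measure_infinite_cluster hP
    (one_sub_exp_le_measure_exit_box hP hJ hJT hβ₀ hββ₁.le hns)
  have hmem : 0 < P β₁ {ω | ∃ x, (cluster ω x).Infinite} :=
    (hδ.trans_le hinf).trans_le (measure_mono fun ω hω => ⟨0, hω⟩)
  exact hβ₁c.not_ge (csInf_le ⟨0, fun b hb => hb.1⟩ ⟨hβ.trans hββ₁.le, hmem⟩)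

end Sharpness

/-! ### Averaged two-point bound -/

section PairConnectivity

variable {W : Type*} [DecidableEq W] {B C L : Finset W} {p : Sym2 W → ℝ} {q : ℝ}

theorem meanCluster_eq_sum_tauIn (B : Finset W) (p : Sym2 W → ℝ) (u : W) :
    meanCluster B p u = ∑ v ∈ B, tauIn B p u v := by
  classical
  simp only [meanCluster, tauIn, prob]
  rw [← expect_sum]
  refine expect_congr fun S _ => ?_
  rw [sum_indicator_one_apply]
  congr 2

theorem truncMeanCluster_mono (hp : ∀ e, p e ∈ Set.Icc 0 1) {M N : ℕ} (h : M ≤ N) (u : W) :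
    truncMeanCluster B p M u ≤ truncMeanCluster B p N u :=
  expect_mono hp fun _ _ => mod_cast min_le_min_left _ h

/-- The expected number of ordered pairs of vertices of `B` that are connected inside `B`. -/
noncomputable def pairConnectivity (B : Finset W) (p : Sym2 W → ℝ) : ℝ :=
  ∑ u ∈ B, ∑ v ∈ B, tauIn B p u v

theorem pairConnectivity_nonneg (hp : ∀ e, p e ∈ Set.Icc 0 1) (B : Finset W) :
    0 ≤ pairConnectivity B p :=
  Finset.sum_nonneg fun _ _ => Finset.sum_nonneg fun _ _ => tauIn_nonneg _ hp _ _

theorem sum_meanCluster (B : Finset W) (p : Sym2 W → ℝ) :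
    ∑ u ∈ B, meanCluster B p u = pairConnectivity B p :=
  Finset.sum_congr rfl fun _ _ => meanCluster_eq_sum_tauIn _ _ _

theorem pairConnectivity_map (φ : W ↪ W) (B : Finset W)
    (hφ : ∀ a b, p s(φ a, φ b) = p s(a, b)) :
    pairConnectivity (B.map φ) p = pairConnectivity B p := by
  simp only [pairConnectivity, Finset.sum_map, tauIn_map φ B hφ]

theorem half_pairConnectivity_le_sum_truncMeanCluster (hp : ∀ e, p e ∈ Set.Icc 0 1) {M N : ℕ}
    (hM : ∀ u, meanCluster B p u ≤ 2 * truncMeanCluster B p M u) (hMN : M ≤ N) :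
    pairConnectivity B p / 2 ≤ ∑ u ∈ B, truncMeanCluster B p N u := by
  rw [div_le_iff₀' two_pos, ← sum_meanCluster, Finset.mul_sum]
  exact Finset.sum_le_sum fun u _ =>
    (hM u).trans (mul_le_mul_of_nonneg_left (truncMeanCluster_mono hp hMN u) zero_le_two)

theorem le_sum_sum_tauIn_of_disjoint (hBne : B.Nonempty) (hCne : C.Nonempty)
    (hd : Disjoint B C) (hB : B ⊆ L) (hC : C ⊆ L) (hp : ∀ e, p e ∈ Set.Icc 0 1) (hq : 0 ≤ q)
    (hpq : ∀ a ∈ B, ∀ b ∈ C, 1 - p s(a, b) ≤ Real.exp (-q))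
    (hBC : pairConnectivity C p = pairConnectivity B p) :
    q / (1 + q * (216 * pairConnectivity B p)) * (pairConnectivity B p / 2) ^ 2 ≤
      ∑ u ∈ B, ∑ v ∈ C, tauIn L p u v := by
  obtain ⟨M, hM, hMB⟩ := exists_truncation hBne hp
  obtain ⟨N, hN, hNC⟩ := exists_truncation hCne hp
  rw [sum_meanCluster] at hM hN
  rw [hBC] at hN
  have hX := pairConnectivity_nonneg hp B
  have hsumB := half_pairConnectivity_le_sum_truncMeanCluster hp hMB (le_max_left M N)
  have hsumC := half_pairConnectivity_le_sum_truncMeanCluster hp hNC (le_max_right M N)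
  rw [hBC] at hsumC
  have hmax : ((max M N : ℕ) : ℝ) ^ 2 ≤ 216 * pairConnectivity B p := by
    rcases max_cases M N with h | h <;> rw [h.1] <;> assumption
  calc _ ≤ q / (1 + q * ((max M N : ℕ) : ℝ) ^ 2) * ((∑ u ∈ B, truncMeanCluster B p (max M N) u) *
          ∑ v ∈ C, truncMeanCluster C p (max M N) v) := by
        rw [sq (pairConnectivity B p / 2)]
        have hhalf : 0 ≤ pairConnectivity B p / 2 := by positivity
        gcongr
        exact hhalf.trans hsumB
    _ = ∑ u ∈ B, ∑ v ∈ C, q / (1 + q * ((max M N : ℕ) : ℝ) ^ 2) *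
          (truncMeanCluster B p (max M N) u * truncMeanCluster C p (max M N) v) := by
        simp only [← Finset.mul_sum, ← Finset.sum_mul]
    _ ≤ _ := Finset.sum_le_sum fun u _ => Finset.sum_le_sum fun v _ =>
        truncMeanCluster_mul_le_tauIn hd hB hC hp hq hpq _ u v

theorem sum_sum_sum_tauIn_le_pairConnectivity {κ : Type*} {I : Finset κ} {block : κ → Finset W}
    (hdisj : (I : Set κ).PairwiseDisjoint block) (hsub : ∀ k ∈ I, block k ⊆ L)
    (hp : ∀ e, p e ∈ Set.Icc 0 1) :
    ∑ k ∈ I, ∑ l ∈ I, ∑ u ∈ block k, ∑ v ∈ block l, tauIn L p u v ≤ pairConnectivity L p := by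
  have hunion : I.biUnion block ⊆ L := Finset.biUnion_subset.2 hsub
  calc ∑ k ∈ I, ∑ l ∈ I, ∑ u ∈ block k, ∑ v ∈ block l, tauIn L p u v
      = ∑ u ∈ I.biUnion block, ∑ v ∈ I.biUnion block, tauIn L p u v := by
        simp only [Finset.sum_biUnion hdisj]
        exact Finset.sum_congr rfl fun k _ => Finset.sum_comm
    _ ≤ ∑ u ∈ I.biUnion block, ∑ v ∈ L, tauIn L p u v := Finset.sum_le_sum fun u _ =>
        Finset.sum_le_sum_of_subset_of_nonneg hunion fun _ _ _ => tauIn_nonneg _ hp _ _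
    _ ≤ pairConnectivity L p := Finset.sum_le_sum_of_subset_of_nonneg hunion fun _ _ _ =>
        Finset.sum_nonneg fun _ _ => tauIn_nonneg _ hp _ _

end PairConnectivity

theorem sum_sum_ite_eq_zero {κ : Type*} [DecidableEq κ] (I : Finset κ) (w : ℝ) :
    ∑ k ∈ I, ∑ l ∈ I, (if k = l then 0 else w) = I.card * (I.card - 1) * w := by
  have hrow : ∀ k ∈ I, ∑ l ∈ I, (if k = l then 0 else w) = (I.card - 1) * w := fun k hk => by
    rw [Finset.sum_ite, Finset.sum_const_zero, zero_add, Finset.sum_const, nsmul_eq_mul,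
      Finset.filter_ne, Finset.card_erase_of_mem hk, Nat.cast_pred (Finset.card_pos.2 ⟨k, hk⟩)]
  rw [Finset.sum_congr rfl hrow, Finset.sum_const, nsmul_eq_mul, mul_assoc]

section Cube

variable {d : ℕ}

theorem normInf_le {x : V d} {n : ℕ} : normInf x ≤ n ↔ ∀ i, (x i).natAbs ≤ n := by
  simp [normInf, Finset.sup_le_iff]

theorem one_le_normInf {x : V d} (h : x ≠ 0) : 1 ≤ normInf x := by
  contrapose! h
  exact funext fun i => Int.natAbs_eq_zero.1 (Nat.le_zero.1 (normInf_le.1 (by omega) i))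

/-- The cube `[0, r)^d`. -/
noncomputable def cube (d r : ℕ) : Finset (V d) := Fintype.piFinset fun _ => Finset.Ico (0 : ℤ) r

theorem mem_cube {r : ℕ} {x : V d} : x ∈ cube d r ↔ ∀ i, 0 ≤ x i ∧ x i < r := by
  simp [cube, Fintype.mem_piFinset]

theorem card_cube (d r : ℕ) : (cube d r).card = r ^ d := by
  simp [cube, Fintype.card_piFinset]

/-- The translate `r k + [0, r)^d` of the cube of side `r`. -/
noncomputable def cubeBlock (r : ℕ) (k : V d) : Finset (V d) :=
  (cube d r).map (addRightEmbedding ((r : ℤ) • k))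

theorem mem_cubeBlock {r : ℕ} {k z : V d} :
    z ∈ cubeBlock r k ↔ ∀ i, (r : ℤ) * k i ≤ z i ∧ z i < r * k i + r := by
  simp only [cubeBlock, Finset.mem_map, addRightEmbedding_apply, mem_cube]
  constructor
  · rintro ⟨a, ha, rfl⟩ i
    have := ha i
    simp only [Pi.add_apply, Pi.smul_apply, smul_eq_mul]
    constructor <;> linarith
  · refine fun h => ⟨z - (r : ℤ) • k, fun i => ?_, by simp⟩
    have := h i
    simp only [Pi.sub_apply, Pi.smul_apply, smul_eq_mul]
    constructor <;> linarith

theorem cubeBlock_nonempty {r : ℕ} (hr : 1 ≤ r) (k : V d) : (cubeBlock r k).Nonempty :=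
  ⟨(r : ℤ) • k, mem_cubeBlock.2 fun i => ⟨le_rfl, by
    simp only [Pi.smul_apply, smul_eq_mul]; omega⟩⟩

theorem cubeBlock_subset_cube {b r : ℕ} {k : V d} (hk : k ∈ cube d b) :
    cubeBlock r k ⊆ cube d (b * r) := fun z hz => mem_cube.2 fun i => by
  obtain ⟨hk0, hkb⟩ := mem_cube.1 hk i
  obtain ⟨hz0, hzr⟩ := mem_cubeBlock.1 hz i
  have hle : (r : ℤ) * k i ≤ r * (b - 1) := mul_le_mul_of_nonneg_left (by omega) (by positivity)
  have hnonneg : 0 ≤ (r : ℤ) * k i := mul_nonneg (by positivity) hk0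
  push_cast
  constructor <;> linarith

theorem disjoint_cubeBlock {r : ℕ} {k l : V d} (hkl : k ≠ l) :
    Disjoint (cubeBlock r k) (cubeBlock r l) := by
  refine Finset.disjoint_left.2 fun z hzk hzl => hkl (funext fun i => ?_)
  obtain ⟨hk0, hkr⟩ := mem_cubeBlock.1 hzk i
  obtain ⟨hl0, hlr⟩ := mem_cubeBlock.1 hzl i
  have hlt : k i < l i + 1 := lt_of_mul_lt_mul_left (a := (r : ℤ)) (by linarith) (by positivity)
  have hgt : l i < k i + 1 := lt_of_mul_lt_mul_left (a := (r : ℤ)) (by linarith) (by positivity)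
  omega

theorem normInf_sub_le_of_mem_cube {r : ℕ} {x y : V d} (hx : x ∈ cube d r) (hy : y ∈ cube d r) :
    normInf (x - y) ≤ r := normInf_le.2 fun i => by
  have := mem_cube.1 hx i
  have := mem_cube.1 hy i
  rw [Pi.sub_apply]
  omega

variable {p : Sym2 (V d) → ℝ}

theorem le_pairConnectivity_cube_mul (hp : ∀ e, p e ∈ Set.Icc 0 1) (hT : TranslationInvariant p)
    (hd : 1 ≤ d) {b r : ℕ} (hb : 2 ≤ b) (hr : 1 ≤ r) {q : ℝ} (hq : 0 ≤ q)
    (hpq : ∀ x ∈ cube d (b * r), ∀ y ∈ cube d (b * r), x ≠ y → 1 - p s(x, y) ≤ Real.exp (-q)) :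
    ((b : ℝ) ^ d) ^ 2 / 2 * (q / (1 + q * (216 * pairConnectivity (cube d r) p)) *
      (pairConnectivity (cube d r) p / 2) ^ 2) ≤ pairConnectivity (cube d (b * r)) p := by
  have hX (k : V d) : pairConnectivity (cubeBlock r k) p = pairConnectivity (cube d r) p :=
    pairConnectivity_map _ _ fun x y => hT x y _
  have hX0 := pairConnectivity_nonneg hp (cube d r)
  set w := q / (1 + q * (216 * pairConnectivity (cube d r) p)) *
    (pairConnectivity (cube d r) p / 2) ^ 2
  have hpair : ∀ k ∈ cube d b, ∀ l ∈ cube d b, (if k = l then 0 else w) ≤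
      ∑ u ∈ cubeBlock r k, ∑ v ∈ cubeBlock r l, tauIn (cube d (b * r)) p u v := by
    intro k hk l hl
    split_ifs with hkl
    · exact Finset.sum_nonneg fun _ _ => Finset.sum_nonneg fun _ _ => tauIn_nonneg _ hp _ _
    · have hmerge := le_sum_sum_tauIn_of_disjoint (cubeBlock_nonempty hr k)
        (cubeBlock_nonempty hr l) (disjoint_cubeBlock hkl) (cubeBlock_subset_cube hk)
        (cubeBlock_subset_cube hl) hp hq (fun x hx y hy => hpq x (cubeBlock_subset_cube hk hx) y
          (cubeBlock_subset_cube hl hy) fun hxy =>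
            Finset.disjoint_left.1 (disjoint_cubeBlock hkl) hx (hxy ▸ hy))
        ((hX l).trans (hX k).symm)
      rwa [hX] at hmerge
  have hbd : (2 : ℝ) ≤ (b : ℝ) ^ d := by
    have hb' : (2 : ℝ) ≤ b := mod_cast hb
    exact hb'.trans (le_self_pow₀ (by linarith) (by omega))
  calc ((b : ℝ) ^ d) ^ 2 / 2 * w ≤ (b : ℝ) ^ d * ((b : ℝ) ^ d - 1) * w :=
        mul_le_mul_of_nonneg_right (by nlinarith) (by positivity)
    _ = ∑ k ∈ cube d b, ∑ l ∈ cube d b, (if k = l then 0 else w) := by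
        rw [sum_sum_ite_eq_zero, card_cube, Nat.cast_pow]
    _ ≤ _ := Finset.sum_le_sum fun k hk => Finset.sum_le_sum fun l hl => hpair k hk l hl
    _ ≤ _ := sum_sum_sum_tauIn_le_pairConnectivity (fun k _ l _ hkl => disjoint_cubeBlock hkl)
        (fun k hk => cubeBlock_subset_cube hk) hp

theorem sum_tau_le_tsum (hp : ∀ e, p e ∈ Set.Icc 0 1) (hT : TranslationInvariant p)
    (hs : Summable fun x => tau p 0 x) (B : Finset (V d)) (u : V d) :
    ∑ v ∈ B, tau p u v ≤ ∑' x, tau p 0 x := by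
  have hshift : ∑ v ∈ B, tau p u v = ∑ v ∈ B.map (addRightEmbedding (-u)), tau p 0 v := by
    simp [Finset.sum_map, tau_eq_tau_zero_sub hp hT u, sub_eq_add_neg]
  rw [hshift]
  exact hs.sum_le_tsum _ fun x _ => tau_nonneg hp 0 x

theorem pairConnectivity_cube_le (hp : ∀ e, p e ∈ Set.Icc 0 1) (hT : TranslationInvariant p)
    (hs : Summable fun x => tau p 0 x) (r : ℕ) :
    pairConnectivity (cube d r) p ≤ (r : ℝ) ^ d * ∑' x, tau p 0 x := by
  rw [← Nat.cast_pow, ← card_cube, ← nsmul_eq_mul]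
  exact Finset.sum_le_card_nsmul _ _ _ fun u _ =>
    (Finset.sum_le_sum fun v _ => tauIn_le_tau hp _ u v).trans (sum_tau_le_tsum hp hT hs _ u)

end Cube

section Growth

theorem div_868_le {q X : ℝ} (hq : 0 < q) (hX : 0 < X) (h : 1 ≤ q * X) :
    X / 868 ≤ q / (1 + q * (216 * X)) * (X / 2) ^ 2 := by
  rw [div_mul_eq_mul_div, le_div_iff₀ (by positivity)]
  nlinarith [mul_le_mul_of_nonneg_left h hX.le]

variable {X : ℕ → ℝ} {b r : ℕ} {D K : ℝ}

theorem pow_mul_le_of_growth (hb : 1 ≤ b) (hr : 1 ≤ r) (hK : 0 ≤ K)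
    (hgrow : ∀ r : ℕ, 1 ≤ r → ((b * r : ℕ) : ℝ) ^ D ≤ K * X r →
      2 * (b : ℝ) ^ D * X r ≤ X (b * r))
    (hr0 : ((b * r : ℕ) : ℝ) ^ D ≤ K * X r) (k : ℕ) :
    (2 * (b : ℝ) ^ D) ^ k * X r ≤ X (b ^ k * r) := by
  induction k with
  | zero => simp
  | succ k ih =>
    have hbD : 0 < (b : ℝ) ^ D := by positivity
    have hlarge : ((b * (b ^ k * r) : ℕ) : ℝ) ^ D ≤ K * X (b ^ k * r) := calc
      ((b * (b ^ k * r) : ℕ) : ℝ) ^ D = ((b : ℝ) ^ D) ^ k * ((b * r : ℕ) : ℝ) ^ D := by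
          rw [show ((b * (b ^ k * r) : ℕ) : ℝ) = (b : ℝ) ^ k * ((b * r : ℕ) : ℝ) by
            push_cast; ring, Real.mul_rpow (by positivity) (by positivity),
            ← Real.rpow_natCast_mul (by positivity), mul_comm (k : ℝ),
            Real.rpow_mul_natCast (by positivity)]
      _ ≤ (2 * (b : ℝ) ^ D) ^ k * (K * X r) := by gcongr; linarith
      _ = K * ((2 * (b : ℝ) ^ D) ^ k * X r) := by ring
      _ ≤ K * X (b ^ k * r) := by gcongr
    calc (2 * (b : ℝ) ^ D) ^ (k + 1) * X r = 2 * (b : ℝ) ^ D * ((2 * (b : ℝ) ^ D) ^ k * X r) := by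
          ring
      _ ≤ 2 * (b : ℝ) ^ D * X (b ^ k * r) := by gcongr
      _ ≤ X (b * (b ^ k * r)) := hgrow _ (Nat.mul_pos (by positivity) hr) hlarge
      _ = X (b ^ (k + 1) * r) := by rw [pow_succ', mul_assoc]

theorem mul_le_rpow_of_growth {d : ℕ} {χ : ℝ} (hb : 1 ≤ b) (hr : 1 ≤ r) (hK : 0 ≤ K) (hD : d ≤ D)
    (hgrow : ∀ r : ℕ, 1 ≤ r → ((b * r : ℕ) : ℝ) ^ D ≤ K * X r →
      2 * (b : ℝ) ^ D * X r ≤ X (b * r))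
    (hX : ∀ r : ℕ, X r ≤ (r : ℝ) ^ d * χ) :
    K * X r ≤ ((b * r : ℕ) : ℝ) ^ D := by
  by_contra! hr0
  have hXr : 0 < X r := pos_of_mul_pos_right (lt_of_le_of_lt (by positivity) hr0) hK
  have hbound (k : ℕ) : (2 : ℝ) ^ k * X r ≤ (r : ℝ) ^ d * χ := by
    have hbd : (b : ℝ) ^ d ≤ (b : ℝ) ^ D := by
      rw [← Real.rpow_natCast]
      exact Real.rpow_le_rpow_of_exponent_le (mod_cast hb) hD
    refine le_of_mul_le_mul_left (a := ((b : ℝ) ^ d) ^ k) ?_ (by positivity)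
    calc ((b : ℝ) ^ d) ^ k * (2 ^ k * X r) ≤ ((b : ℝ) ^ D) ^ k * (2 ^ k * X r) := by gcongr
      _ = (2 * (b : ℝ) ^ D) ^ k * X r := by rw [mul_pow]; ring
      _ ≤ X (b ^ k * r) := pow_mul_le_of_growth hb hr hK hgrow hr0.le k
      _ ≤ ((b ^ k * r : ℕ) : ℝ) ^ d * χ := hX _
      _ = ((b : ℝ) ^ d) ^ k * ((r : ℝ) ^ d * χ) := by push_cast; rw [mul_pow, pow_right_comm]; ring
  obtain ⟨k, hk⟩ := pow_unbounded_of_one_lt ((r : ℝ) ^ d * χ / X r) one_lt_two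
  rw [div_lt_iff₀ hXr] at hk
  exact (hbound k).not_gt hk

end Growth

section KernelBound

variable {d : ℕ} {J : V d → V d → ℝ} {α c C β : ℝ}

theorem edgeRate_mk (hJ : ∀ x y, J x y = J y x) (x y : V d) : edgeRate J s(x, y) = J x y := by
  simp [edgeRate, hJ y x]

theorem one_sub_openProb_le_exp (hJ : KernelHyp d J α c C) (hβ : 0 ≤ β) {x y : V d} (hxy : x ≠ y)
    {n : ℕ} (hn : normInf (x - y) ≤ n) :
    1 - openProb (edgeRate J) β s(x, y) ≤
      Real.exp (-(β * c * (n : ℝ) ^ (-(d : ℝ) - α))) := by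
  rw [openProb, edgeRate_mk hJ.symm, _root_.sub_sub_cancel, Real.exp_le_exp, neg_mul,
    neg_le_neg_iff, mul_assoc]
  have hpos : (1 : ℝ) ≤ normInf (x - y) := mod_cast one_le_normInf (sub_ne_zero.2 hxy)
  have hpow : (n : ℝ) ^ (-(d : ℝ) - α) ≤ (normInf (x - y) : ℝ) ^ (-(d : ℝ) - α) :=
    Real.rpow_le_rpow_of_nonpos (by linarith) (mod_cast hn)
      (by linarith [hJ.alpha_pos, d.cast_nonneg (α := ℝ)])
  have hlower := (mul_le_mul_of_nonneg_left hpow hJ.c_pos.le).trans (hJ.lower x y hxy)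
  exact mul_le_mul_of_nonneg_left hlower hβ

theorem two_mul_pairConnectivity_cube_le (hJ : KernelHyp d J α c C) {b : ℕ} (hb : 2 ≤ b)
    (hbα : 3472 ≤ (b : ℝ) ^ ((d : ℝ) - α)) (hβ : 0 < β) {r : ℕ} (hr : 1 ≤ r)
    (hlarge : ((b * r : ℕ) : ℝ) ^ (d + α) ≤
      β * c * pairConnectivity (cube d r) (openProb (edgeRate J) β)) :
    2 * (b : ℝ) ^ (d + α) * pairConnectivity (cube d r) (openProb (edgeRate J) β) ≤
      pairConnectivity (cube d (b * r)) (openProb (edgeRate J) β) := by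
  have hp := openProb_mem_Icc (edgeRate_nonneg hJ.nonneg) hβ.le
  have hc := hJ.c_pos
  have hM : 0 < ((b * r : ℕ) : ℝ) ^ (d + α) := by positivity
  have hgrow := le_pairConnectivity_cube_mul hp (translationInvariant_openProb hJ.transInv β)
    hJ.d_pos hb hr (q := β * c * ((b * r : ℕ) : ℝ) ^ (-(d : ℝ) - α)) (by positivity)
    fun x hx y hy hxy => one_sub_openProb_le_exp hJ hβ.le hxy (normInf_sub_le_of_mem_cube hx hy)
  set X := pairConnectivity (cube d r) (openProb (edgeRate J) β)
  rw [show -(d : ℝ) - α = -(d + α) by ring, Real.rpow_neg (by positivity)] at hgrow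
  have hX : 0 < X := pos_of_mul_pos_right (hM.trans_le hlarge) (by positivity)
  have hqX : 1 ≤ β * c * (((b * r : ℕ) : ℝ) ^ (d + α))⁻¹ * X := by
    rw [mul_right_comm, ← div_eq_mul_inv]
    exact (one_le_div hM).2 hlarge
  have hbpow : ((b : ℝ) ^ d) ^ 2 = (b : ℝ) ^ ((d : ℝ) - α) * (b : ℝ) ^ (d + α) := by
    rw [← Real.rpow_add (by positivity), ← pow_mul, ← Real.rpow_natCast]
    congr 1
    push_cast
    ring
  refine le_trans ?_ hgrow
  clear_value X
  calc 2 * (b : ℝ) ^ (d + α) * X = 3472 * (b : ℝ) ^ (d + α) / 2 * (X / 868) := by ring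
    _ ≤ ((b : ℝ) ^ d) ^ 2 / 2 * (X / 868) := by rw [hbpow]; gcongr
    _ ≤ _ := mul_le_mul_of_nonneg_left (div_868_le (by positivity) hX hqX) (by positivity)

theorem pairConnectivity_cube_le_rpow (hJ : KernelHyp d J α c C) {b : ℕ} (hb : 2 ≤ b)
    (hbα : 3472 ≤ (b : ℝ) ^ ((d : ℝ) - α)) (hβ : 0 < β)
    (hs : Summable fun x => tau (openProb (edgeRate J) β) 0 x) {r : ℕ} (hr : 1 ≤ r) :
    β * c * pairConnectivity (cube d r) (openProb (edgeRate J) β) ≤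
      ((b * r : ℕ) : ℝ) ^ (d + α) :=
  mul_le_rpow_of_growth (d := d) (χ := ∑' x, tau (openProb (edgeRate J) β) 0 x)
    (one_le_two.trans hb) hr (mul_pos hβ hJ.c_pos).le (by linarith [hJ.alpha_pos])
    (fun _ => two_mul_pairConnectivity_cube_le hJ hb hbα hβ)
    (pairConnectivity_cube_le (openProb_mem_Icc (edgeRate_nonneg hJ.nonneg) hβ.le)
      (translationInvariant_openProb hJ.transInv β) hs)

theorem sum_tauIn_le_sum_tauIn_of_map_subset {p : Sym2 (V d) → ℝ} (hp : ∀ e, p e ∈ Set.Icc 0 1)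
    (hT : TranslationInvariant p) {B L : Finset (V d)} {z : V d}
    (hsub : B.map (addRightEmbedding z) ⊆ L) :
    ∑ a ∈ B, tauIn B p 0 a ≤ ∑ v ∈ L, tauIn L p z v := by
  calc ∑ a ∈ B, tauIn B p 0 a
      = ∑ v ∈ B.map (addRightEmbedding z), tauIn (B.map (addRightEmbedding z)) p z v := by
        rw [Finset.sum_map]
        refine Finset.sum_congr rfl fun a _ => ?_
        rw [addRightEmbedding_apply, ← tauIn_map_add hT B 0 a z, zero_add]
    _ ≤ ∑ v ∈ B.map (addRightEmbedding z), tauIn L p z v :=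
        Finset.sum_le_sum fun v _ => tauIn_mono hsub hp _ _
    _ ≤ ∑ v ∈ L, tauIn L p z v :=
        Finset.sum_le_sum_of_subset_of_nonneg hsub fun _ _ _ => tauIn_nonneg _ hp _ _

theorem pow_mul_sum_tauIn_box_le_pairConnectivity {p : Sym2 (V d) → ℝ}
    (hp : ∀ e, p e ∈ Set.Icc 0 1) (hT : TranslationInvariant p) (r : ℕ) :
    (r : ℝ) ^ d * ∑ a ∈ box d r, tauIn (box d r) p 0 a ≤
      pairConnectivity (cube d (4 * r + 1)) p := by
  set shift : V d := fun _ => (r : ℤ) with hshift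
  have hcube : (cube d r).map (addRightEmbedding shift) ⊆ cube d (4 * r + 1) := fun z hz => by
    obtain ⟨w, hw, rfl⟩ := Finset.mem_map.1 hz
    refine mem_cube.2 fun i => ?_
    have := mem_cube.1 hw i
    simp only [addRightEmbedding_apply, Pi.add_apply, hshift]
    omega
  have hbox : ∀ w ∈ (cube d r).map (addRightEmbedding shift),
      (box d r).map (addRightEmbedding w) ⊆ cube d (4 * r + 1) := fun w hw z hz => by
    obtain ⟨w', hw', rfl⟩ := Finset.mem_map.1 hw
    obtain ⟨a, ha, rfl⟩ := Finset.mem_map.1 hz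
    refine mem_cube.2 fun i => ?_
    have := normInf_le.1 (mem_box.1 ha) i
    have := mem_cube.1 hw' i
    simp only [addRightEmbedding_apply, Pi.add_apply, hshift]
    omega
  rw [← Nat.cast_pow, ← card_cube, ← Finset.card_map (addRightEmbedding shift), ← nsmul_eq_mul]
  exact (Finset.card_nsmul_le_sum _ _ _ fun w hw =>
    sum_tauIn_le_sum_tauIn_of_map_subset hp hT (hbox w hw)).trans
      (Finset.sum_le_sum_of_subset_of_nonneg hcube fun _ _ _ =>
        Finset.sum_nonneg fun _ _ => tauIn_nonneg _ hp _ _)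

theorem exists_sum_tauIn_box_le (hJ : KernelHyp d J α c C) {β₀ : ℝ} (hβ₀ : 0 < β₀) :
    ∃ A : ℝ, 0 < A ∧ ∀ β, β₀ ≤ β → Summable (fun x => tau (openProb (edgeRate J) β) 0 x) →
      ∀ r : ℕ, 1 ≤ r →
        ∑ a ∈ box d r, tauIn (box d r) (openProb (edgeRate J) β) 0 a ≤ A * (r : ℝ) ^ α := by
  have hα := hJ.alpha_pos
  have hc := hJ.c_pos
  obtain ⟨b, hbα, hb⟩ : ∃ b : ℕ, 3472 ≤ (b : ℝ) ^ ((d : ℝ) - α) ∧ 2 ≤ b :=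
    ((((tendsto_rpow_atTop (sub_pos.2 hJ.alpha_lt_d)).comp
      tendsto_natCast_atTop_atTop).eventually_ge_atTop 3472).and
      (Filter.eventually_ge_atTop 2)).exists
  refine ⟨(b * 5 : ℝ) ^ (d + α) / (β₀ * c), by positivity, fun β hβ hs r hr => ?_⟩
  have hβ0 : 0 < β := hβ₀.trans_le hβ
  have hp := openProb_mem_Icc (edgeRate_nonneg hJ.nonneg) hβ0.le
  have hT := translationInvariant_openProb hJ.transInv β
  have hr' : (1 : ℝ) ≤ r := mod_cast hr
  rw [div_mul_eq_mul_div, le_div_iff₀ (by positivity)]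
  refine le_of_mul_le_mul_left (a := (r : ℝ) ^ d) ?_ (by positivity)
  calc _ = β₀ * c * ((r : ℝ) ^ d * ∑ a ∈ box d r, tauIn (box d r) _ 0 a) := by ring
    _ ≤ β * c * pairConnectivity (cube d (4 * r + 1)) (openProb (edgeRate J) β) := by
        have hsum := Finset.sum_nonneg fun a (_ : a ∈ box d r) => tauIn_nonneg (box d r) hp 0 a
        gcongr
        exact pow_mul_sum_tauIn_box_le_pairConnectivity hp hT r
    _ ≤ ((b * (4 * r + 1) : ℕ) : ℝ) ^ (d + α) :=
        pairConnectivity_cube_le_rpow hJ hb hbα hβ0 hs (by omega)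
    _ ≤ (b * 5 * r : ℝ) ^ (d + α) := by
        gcongr
        push_cast
        nlinarith [b.cast_nonneg (α := ℝ)]
    _ = (r : ℝ) ^ d * ((b * 5 : ℝ) ^ (d + α) * (r : ℝ) ^ α) := by
        rw [Real.mul_rpow (by positivity) (by positivity), Real.rpow_add (x := (r : ℝ))
          (by positivity), Real.rpow_natCast]
        ring

end KernelBound

/-! ### Power-weighted sums over boxes -/

section WeightedSums

variable {d : ℕ}

theorem normInf_zero : normInf (0 : V d) = 0 := by simp [normInf]

theorem normInf_neg (x : V d) : normInf (-x) = normInf x := by simp [normInf]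

theorem normInf_sub_comm (x y : V d) : normInf (x - y) = normInf (y - x) := by
  rw [← normInf_neg, neg_sub]

theorem normInf_add_le (x y : V d) : normInf (x + y) ≤ normInf x + normInf y :=
  normInf_le.2 fun i => (Int.natAbs_add_le _ _).trans
    (add_le_add (normInf_le.1 le_rfl i) (normInf_le.1 le_rfl i))

theorem normInf_sub_le (x y : V d) : normInf (x - y) ≤ normInf x + normInf y := by
  simpa only [sub_eq_add_neg, normInf_neg] using normInf_add_le x (-y)

theorem card_box (d r : ℕ) : (box d r).card = (2 * r + 1) ^ d := by
  simp only [box, Fintype.card_piFinset, Int.card_Icc, Finset.prod_const, Finset.card_univ,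
    Fintype.card_fin]
  congr 1
  omega

/-- `g` is nonnegative and its sum over the box of radius `r` is at most `G * r ^ γ`. -/
structure BoxGrowth (g : V d → ℝ) (G γ : ℝ) : Prop where
  nonneg : ∀ v, 0 ≤ g v
  sum_le : ∀ r : ℕ, 1 ≤ r → ∑ v ∈ box d r, g v ≤ G * (r : ℝ) ^ γ

variable {g : V d → ℝ} {G γ s : ℝ}

theorem BoxGrowth.bound_nonneg (h : BoxGrowth g G γ) : 0 ≤ G := by
  simpa using (Finset.sum_nonneg fun v _ => h.nonneg v).trans (h.sum_le 1 le_rfl)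

theorem boxGrowth_const {Q : ℝ} (hQ : 0 ≤ Q) : BoxGrowth (fun _ : V d => Q) (3 ^ d * Q) d where
  nonneg _ := hQ
  sum_le r hr := by
    have hr1 : (1 : ℝ) ≤ r := mod_cast hr
    rw [Finset.sum_const, nsmul_eq_mul, card_box, Real.rpow_natCast, mul_right_comm, ← mul_pow]
    push_cast
    exact mul_le_mul_of_nonneg_right (pow_le_pow_left₀ (by positivity) (by linarith) d) hQ

theorem rpow_neg_le_of_mem_Icc {m x : ℝ} (hm : 0 < m) (hx : x ∈ Set.Icc m (2 * m)) (s : ℝ) :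
    x ^ (-s) ≤ 2 ^ |s| * m ^ (-s) := by
  rcases le_total 0 s with hs | hs
  · calc x ^ (-s) ≤ m ^ (-s) := Real.rpow_le_rpow_of_nonpos hm hx.1 (by linarith)
      _ ≤ 2 ^ |s| * m ^ (-s) := le_mul_of_one_le_left (by positivity)
        (Real.one_le_rpow one_le_two (abs_nonneg s))
  · rw [abs_of_nonpos hs, ← Real.mul_rpow zero_le_two hm.le]
    exact Real.rpow_le_rpow (hm.le.trans hx.1) hx.2 (by linarith)

theorem BoxGrowth.weighted_nonneg (h : BoxGrowth g G γ) (s : ℝ) (v : V d) :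
    0 ≤ (normInf v : ℝ) ^ (-s) * g v :=
  mul_nonneg (by positivity) (h.nonneg v)

theorem BoxGrowth.sum_shell_le (h : BoxGrowth g G γ) {m : ℕ} (hm : 1 ≤ m) (s : ℝ) :
    ∑ v ∈ box d (2 * m) \ box d m, (normInf v : ℝ) ^ (-s) * g v ≤
      2 ^ (|s| + γ) * G * (m : ℝ) ^ (γ - s) := by
  have hm0 : (0 : ℝ) < m := mod_cast hm
  calc _ ≤ ∑ v ∈ box d (2 * m) \ box d m, (2 ^ |s| * (m : ℝ) ^ (-s)) * g v :=
        Finset.sum_le_sum fun v hv => by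
          rw [Finset.mem_sdiff, mem_box, mem_box, not_le] at hv
          exact mul_le_mul_of_nonneg_right (rpow_neg_le_of_mem_Icc hm0
            ⟨mod_cast hv.2.le, mod_cast hv.1⟩ s) (h.nonneg v)
    _ ≤ (2 ^ |s| * (m : ℝ) ^ (-s)) * (G * ((2 * m : ℕ) : ℝ) ^ γ) := by
        rw [← Finset.mul_sum]
        refine mul_le_mul_of_nonneg_left ((Finset.sum_le_sum_of_subset_of_nonneg
          Finset.sdiff_subset fun v _ _ => h.nonneg v).trans (h.sum_le _ (by omega)))
          (by positivity)
    _ = _ := by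
        push_cast
        rw [Real.mul_rpow zero_le_two hm0.le, Real.rpow_add two_pos, sub_eq_add_neg,
          Real.rpow_add hm0]
        ring

theorem BoxGrowth.sum_annulus_le (h : BoxGrowth g G γ) {m : ℕ} (hm : 1 ≤ m) (s : ℝ) (n : ℕ) :
    ∑ v ∈ box d (2 ^ n * m) \ box d m, (normInf v : ℝ) ^ (-s) * g v ≤
      2 ^ (|s| + γ) * G * (m : ℝ) ^ (γ - s) * ∑ k ∈ Finset.range n, ((2 : ℝ) ^ (γ - s)) ^ k := by
  induction n with
  | zero => simp
  | succ n ih =>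
    have hscale :
        ((2 ^ n * m : ℕ) : ℝ) ^ (γ - s) = (m : ℝ) ^ (γ - s) * ((2 : ℝ) ^ (γ - s)) ^ n := by
      push_cast
      rw [Real.mul_rpow (by positivity) (by positivity), Real.rpow_pow_comm zero_le_two, mul_comm]
    have hshell := h.sum_shell_le (m := 2 ^ n * m) (Nat.mul_pos (by positivity) hm) s
    have hle : 1 * m ≤ 2 ^ n * m := Nat.mul_le_mul_right m Nat.one_le_two_pow
    rw [← Finset.sum_sdiff (Finset.sdiff_subset_sdiff (box_mono
        (Nat.mul_le_mul_right m (Nat.pow_le_pow_right two_pos n.le_succ))) le_rfl),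
      sdiff_sdiff_sdiff_cancel_right (box_mono (by omega)),
      Finset.sum_range_succ, mul_add, add_comm, pow_succ', mul_assoc 2 (2 ^ n),
      mul_assoc _ _ (((2 : ℝ) ^ (γ - s)) ^ n), ← hscale]
    exact add_le_add ih hshell

theorem geom_sum_le_inv {q : ℝ} (h0 : 0 ≤ q) (h1 : q < 1) (n : ℕ) :
    ∑ k ∈ Finset.range n, q ^ k ≤ (1 - q)⁻¹ := by
  rw [← tsum_geometric_of_lt_one h0 h1]
  exact (summable_geometric_of_lt_one h0 h1).sum_le_tsum _ fun _ _ => by positivity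

theorem exists_sum_outside_box_le (d : ℕ) (h : γ < s) :
    ∃ K : ℝ, 0 < K ∧ ∀ (g : V d → ℝ) (G : ℝ), BoxGrowth g G γ → ∀ l N : ℕ, 1 ≤ l →
      ∑ v ∈ box d N \ box d l, (normInf v : ℝ) ^ (-s) * g v ≤ K * G * (l : ℝ) ^ (γ - s) := by
  have hq : (2 : ℝ) ^ (γ - s) < 1 := Real.rpow_lt_one_of_one_lt_of_neg one_lt_two (by linarith)
  refine ⟨2 ^ (|s| + γ) * (1 - 2 ^ (γ - s))⁻¹,
    mul_pos (by positivity) (inv_pos.2 (sub_pos.2 hq)), fun g G hg l N hl => ?_⟩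
  have hG := hg.bound_nonneg
  have hN : N ≤ 2 ^ N * l := Nat.lt_two_pow_self.le.trans (Nat.le_mul_of_pos_right _ hl)
  calc _ ≤ ∑ v ∈ box d (2 ^ N * l) \ box d l, (normInf v : ℝ) ^ (-s) * g v :=
        Finset.sum_le_sum_of_subset_of_nonneg (Finset.sdiff_subset_sdiff (box_mono hN) le_rfl)
          fun v _ _ => hg.weighted_nonneg s v
    _ ≤ _ := hg.sum_annulus_le hl s N
    _ ≤ 2 ^ (|s| + γ) * G * (l : ℝ) ^ (γ - s) * (1 - 2 ^ (γ - s))⁻¹ :=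
        mul_le_mul_of_nonneg_left (geom_sum_le_inv (by positivity) hq N) (by positivity)
    _ = _ := by ring

theorem BoxGrowth.sum_punctured_box_one_le (h : BoxGrowth g G γ) (s : ℝ) :
    ∑ v ∈ box d 1 \ box d 0, (normInf v : ℝ) ^ (-s) * g v ≤ G := by
  calc _ ≤ ∑ v ∈ box d 1 \ box d 0, g v := Finset.sum_le_sum fun v hv => by
        rw [Finset.mem_sdiff, mem_box, mem_box] at hv
        rw [show normInf v = 1 by omega, Nat.cast_one, Real.one_rpow, one_mul]
    _ ≤ ∑ v ∈ box d 1, g v :=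
        Finset.sum_le_sum_of_subset_of_nonneg Finset.sdiff_subset fun v _ _ => h.nonneg v
    _ ≤ G := by simpa using h.sum_le 1 le_rfl

theorem BoxGrowth.sum_punctured_box_le (h : BoxGrowth g G γ) (s : ℝ) {l n : ℕ} (hl : l ≤ 2 ^ n) :
    ∑ v ∈ box d l \ box d 0, (normInf v : ℝ) ^ (-s) * g v ≤
      G + 2 ^ (|s| + γ) * G * ∑ k ∈ Finset.range n, ((2 : ℝ) ^ (γ - s)) ^ k := by
  have hann := h.sum_annulus_le le_rfl s n
  rw [mul_one, Nat.cast_one, Real.one_rpow, mul_one] at hann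
  have hdisj : Disjoint (box d 1 \ box d 0) (box d (2 ^ n) \ box d 1) :=
    Finset.sdiff_disjoint.symm.mono_left Finset.sdiff_subset
  calc _ ≤ ∑ v ∈ (box d 1 \ box d 0) ∪ (box d (2 ^ n) \ box d 1), (normInf v : ℝ) ^ (-s) * g v :=
        Finset.sum_le_sum_of_subset_of_nonneg (fun v => by
          simp only [Finset.mem_union, Finset.mem_sdiff, mem_box]
          omega) fun v _ _ => h.weighted_nonneg s v
    _ ≤ _ := by
        rw [Finset.sum_union hdisj]
        exact add_le_add (h.sum_punctured_box_one_le s) hann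

theorem exists_le_two_pow_le_two_mul {l : ℕ} (hl : 1 ≤ l) : ∃ n : ℕ, l ≤ 2 ^ n ∧ 2 ^ n ≤ 2 * l := by
  refine ⟨Nat.log 2 l + 1, (Nat.lt_pow_succ_log_self one_lt_two l).le, ?_⟩
  rw [pow_succ']
  exact Nat.mul_le_mul_left 2 (Nat.pow_log_le_self 2 (by omega))

/-- The order of magnitude of `∑ 2 ^ (k * e)` over `2 ^ k ≤ l`: bounded for `e < 0`, logarithmic
for `e = 0`, and a power of `l` for `e > 0`. -/
noncomputable def dyadicRate (e : ℝ) (l : ℕ) : ℝ :=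
  if e < 0 then 1 else if e = 0 then 1 + Real.log l else (l : ℝ) ^ e

theorem dyadicRate_of_neg {e : ℝ} (he : e < 0) (l : ℕ) : dyadicRate e l = 1 := if_pos he

theorem dyadicRate_zero (l : ℕ) : dyadicRate 0 l = 1 + Real.log l := by simp [dyadicRate]

theorem dyadicRate_of_pos {e : ℝ} (he : 0 < e) (l : ℕ) : dyadicRate e l = (l : ℝ) ^ e := by
  rw [dyadicRate, if_neg he.le.not_gt, if_neg he.ne']

theorem one_le_dyadicRate (e : ℝ) {l : ℕ} (hl : 1 ≤ l) : 1 ≤ dyadicRate e l := by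
  have hl1 : (1 : ℝ) ≤ l := mod_cast hl
  rcases lt_trichotomy e 0 with he | rfl | he
  · rw [dyadicRate_of_neg he]
  · rw [dyadicRate_zero]
    exact le_add_of_nonneg_right (Real.log_nonneg hl1)
  · rw [dyadicRate_of_pos he]
    exact Real.one_le_rpow hl1 he.le

theorem rpow_le_dyadicRate (e : ℝ) {l : ℕ} (hl : 1 ≤ l) : (l : ℝ) ^ e ≤ dyadicRate e l := by
  rcases le_or_gt e 0 with he | he
  · exact (Real.rpow_le_one_of_one_le_of_nonpos (mod_cast hl) he).trans (one_le_dyadicRate e hl)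
  · rw [dyadicRate_of_pos he]

theorem natCast_le_of_two_pow_le {l n : ℕ} (h : 2 ^ n ≤ 2 * l) :
    (n : ℝ) ≤ 2 * (1 + Real.log l) := by
  have hl : (0 : ℝ) < l := by
    have := n.one_le_two_pow
    exact_mod_cast (by omega : 0 < l)
  have hlog : Real.log ((2 : ℝ) ^ n) ≤ Real.log (2 * l) :=
    Real.log_le_log (by positivity) (mod_cast h)
  rw [Real.log_pow, Real.log_mul two_ne_zero hl.ne'] at hlog
  nlinarith [Real.log_two_gt_d9, Real.log_two_lt_d9, n.cast_nonneg (α := ℝ)]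

theorem geom_sum_two_rpow_le {e : ℝ} (he : 0 < e) {l n : ℕ} (h : 2 ^ n ≤ 2 * l) :
    ∑ k ∈ Finset.range n, ((2 : ℝ) ^ e) ^ k ≤ 2 ^ e / (2 ^ e - 1) * (l : ℝ) ^ e := by
  have hq : (1 : ℝ) < 2 ^ e := Real.one_lt_rpow one_lt_two he
  rw [geom_sum_eq hq.ne', div_mul_eq_mul_div, ← Real.mul_rpow zero_le_two (by positivity),
    Real.rpow_pow_comm zero_le_two]
  refine div_le_div_of_nonneg_right ((sub_le_self _ zero_le_one).trans ?_) (sub_pos.2 hq).le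
  exact Real.rpow_le_rpow (by positivity) (mod_cast h) he.le

theorem exists_geom_sum_le_dyadicRate (e : ℝ) : ∃ K : ℝ, 0 ≤ K ∧ ∀ l n : ℕ, 2 ^ n ≤ 2 * l →
    ∑ k ∈ Finset.range n, ((2 : ℝ) ^ e) ^ k ≤ K * dyadicRate e l := by
  rcases lt_trichotomy e 0 with he | rfl | he
  · have hq : (2 : ℝ) ^ e < 1 := Real.rpow_lt_one_of_one_lt_of_neg one_lt_two he
    refine ⟨(1 - 2 ^ e)⁻¹, (inv_pos.2 (sub_pos.2 hq)).le, fun l n _ => ?_⟩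
    rw [dyadicRate_of_neg he, mul_one]
    exact geom_sum_le_inv (by positivity) hq n
  · refine ⟨2, zero_le_two, fun l n h => ?_⟩
    rw [dyadicRate_zero]
    simpa using natCast_le_of_two_pow_le h
  · have hq : (1 : ℝ) < 2 ^ e := Real.one_lt_rpow one_lt_two he
    refine ⟨2 ^ e / (2 ^ e - 1), div_nonneg (by positivity) (sub_pos.2 hq).le, fun l n h => ?_⟩
    rw [dyadicRate_of_pos he]
    exact geom_sum_two_rpow_le he h

theorem exists_sum_punctured_box_le (d : ℕ) (γ s : ℝ) :
    ∃ K : ℝ, 0 < K ∧ ∀ (g : V d → ℝ) (G : ℝ), BoxGrowth g G γ → ∀ l : ℕ, 1 ≤ l →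
      ∑ v ∈ box d l \ box d 0, (normInf v : ℝ) ^ (-s) * g v ≤ K * G * dyadicRate (γ - s) l := by
  obtain ⟨K, hK, hgeom⟩ := exists_geom_sum_le_dyadicRate (γ - s)
  refine ⟨1 + 2 ^ (|s| + γ) * K, by positivity, fun g G hg l hl => ?_⟩
  obtain ⟨n, hln, hnl⟩ := exists_le_two_pow_le_two_mul hl
  have hG := hg.bound_nonneg
  calc _ ≤ G + 2 ^ (|s| + γ) * G * ∑ k ∈ Finset.range n, ((2 : ℝ) ^ (γ - s)) ^ k :=
        hg.sum_punctured_box_le s hln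
    _ ≤ G * dyadicRate (γ - s) l + 2 ^ (|s| + γ) * G * (K * dyadicRate (γ - s) l) :=
        add_le_add (le_mul_of_one_le_right hG (one_le_dyadicRate _ hl))
          (mul_le_mul_of_nonneg_left (hgeom l n hnl) (by positivity))
    _ = _ := by ring

end WeightedSums

/-! ### Bootstrap to pointwise decay -/

section ExitFraction

variable {d : ℕ} {R : ℕ}

/-- The fraction of the radii `ρ ∈ [R, 2R)` for which a step from `a` to `b` leaves the box of
radius `ρ`. -/
noncomputable def exitFraction (R : ℕ) (a b : V d) : ℝ :=
  {ρ ∈ Finset.Ico R (2 * R) | normInf a ≤ ρ ∧ ρ < normInf b}.card / R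

theorem exitFraction_nonneg (R : ℕ) (a b : V d) : 0 ≤ exitFraction R a b := by
  unfold exitFraction
  positivity

theorem exitFraction_eq_zero {b : V d} (hb : normInf b ≤ R) (a : V d) :
    exitFraction R a b = 0 := by
  rw [exitFraction, Finset.filter_false_of_mem, Finset.card_empty, Nat.cast_zero, zero_div]
  intro ρ hρ
  rw [Finset.mem_Ico] at hρ
  omega

theorem exitFraction_le_one (R : ℕ) (a b : V d) : exitFraction R a b ≤ 1 := by
  have hcard := Finset.card_filter_le (Finset.Ico R (2 * R))
    fun ρ => normInf a ≤ ρ ∧ ρ < normInf b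
  rw [Nat.card_Ico] at hcard
  exact div_le_one_of_le₀ (mod_cast hcard.trans (by omega)) (by positivity)

theorem exitFraction_le (R : ℕ) (a b : V d) :
    exitFraction R a b ≤ (normInf (b - a) : ℝ) / R := by
  have hsub : {ρ ∈ Finset.Ico R (2 * R) | normInf a ≤ ρ ∧ ρ < normInf b} ⊆
      Finset.Ico (normInf a) (normInf b) := fun ρ hρ => Finset.mem_Ico.2 (Finset.mem_filter.1 hρ).2
  have hcard := Finset.card_le_card hsub
  have hnorm := normInf_add_le (b - a) a
  rw [Nat.card_Ico] at hcard
  rw [sub_add_cancel] at hnorm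
  exact div_le_div_of_nonneg_right (mod_cast hcard.trans (by omega)) (by positivity)

theorem le_add_sum_exitFraction (hR : 1 ≤ R) {s s' : Finset (V d)} {F : V d → V d → ℝ} {u v : ℝ}
    (h : ∀ ρ ∈ Finset.Ico R (2 * R),
      u ≤ v + ∑ a ∈ s, ∑ b ∈ s', if normInf a ≤ ρ ∧ ρ < normInf b then F a b else 0) :
    u ≤ v + ∑ a ∈ s, ∑ b ∈ s', exitFraction R a b * F a b := by
  have hR0 : (0 : ℝ) < R := mod_cast hR
  have hcount (a b : V d) : ∑ ρ ∈ Finset.Ico R (2 * R),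
      (if normInf a ≤ ρ ∧ ρ < normInf b then F a b else 0) = R * (exitFraction R a b * F a b) := by
    rw [← Finset.sum_filter, Finset.sum_const, nsmul_eq_mul, ← mul_assoc, exitFraction,
      mul_div_cancel₀ _ hR0.ne']
  have hsum := Finset.sum_le_sum h
  rw [Finset.sum_const, Finset.sum_add_distrib, Finset.sum_const, Nat.card_Ico,
    show 2 * R - R = R by omega, nsmul_eq_mul, nsmul_eq_mul, Finset.sum_comm] at hsum
  simp_rw [Finset.sum_comm (s := Finset.Ico R (2 * R)), hcount, ← Finset.mul_sum] at hsum
  exact le_of_mul_le_mul_left (hsum.trans_eq (mul_add _ _ _).symm) hR0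

end ExitFraction

section AveragedSimonLieb

variable {d : ℕ} {J : V d → V d → ℝ} {α c C β B A : ℝ}

/-- The properties of `τ x = ℙ(0 ↔ x)` and of the connection probability `t n x` inside the box
of radius `n` on which the bootstrap relies. The field `simon_lieb` is the Simon–Lieb inequality
averaged over the radii in `[R, 2R)`. -/
structure TwoPointBounds (α A B : ℝ) (τ : V d → ℝ) (t : ℕ → V d → ℝ) : Prop where
  nonneg : ∀ x, 0 ≤ τ x
  le_one : ∀ x, τ x ≤ 1
  map_neg : ∀ x, τ (-x) = τ x
  box_nonneg : ∀ n x, 0 ≤ t n x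
  box_eq_zero : ∀ n x, n < normInf x → t n x = 0
  sum_box_le : ∀ n, 1 ≤ n → ∑ a ∈ box d n, t n a ≤ A * (n : ℝ) ^ α
  le_of_box_le : ∀ x u, (∀ n, t n x ≤ u) → τ x ≤ u
  simon_lieb : ∀ R : ℕ, 1 ≤ R → ∀ x N, t N x ≤ t (2 * R) x + ∑ a ∈ box d (2 * R), t (2 * R) a *
    ∑ b ∈ box d N, B * ((normInf (b - a) : ℝ) ^ (-((d : ℝ) + α)) *
      (exitFraction R a b * τ (x - b)))

theorem openProb_le_rpow (hJ : KernelHyp d J α c C) (hβ : 0 ≤ β) (hB : β * C ≤ B) {a b : V d}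
    (hab : a ≠ b) :
    openProb (edgeRate J) β s(a, b) ≤ B * (normInf (b - a) : ℝ) ^ (-((d : ℝ) + α)) := by
  have hupper := hJ.upper a b hab
  rw [normInf_sub_comm, ← neg_add'] at hupper
  calc _ ≤ β * edgeRate J s(a, b) := openProb_le _ _ _
    _ ≤ β * (C * (normInf (b - a) : ℝ) ^ (-((d : ℝ) + α))) := by
        rw [edgeRate_mk hJ.symm]
        exact mul_le_mul_of_nonneg_left hupper hβ
    _ = β * C * (normInf (b - a) : ℝ) ^ (-((d : ℝ) + α)) := by ring
    _ ≤ _ := mul_le_mul_of_nonneg_right hB (by positivity)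

theorem tauIn_box_le_add_sum_exit (hJ : KernelHyp d J α c C) (hβ : 0 ≤ β) (hB : β * C ≤ B)
    {ρ n N : ℕ} (hρn : ρ ≤ n) (hρN : ρ ≤ N) (x : V d) :
    tauIn (box d N) (openProb (edgeRate J) β) 0 x ≤
      tauIn (box d n) (openProb (edgeRate J) β) 0 x + ∑ a ∈ box d n, ∑ b ∈ box d N,
        if normInf a ≤ ρ ∧ ρ < normInf b then tauIn (box d n) (openProb (edgeRate J) β) 0 a *
          (B * (normInf (b - a) : ℝ) ^ (-((d : ℝ) + α)) * tau (openProb (edgeRate J) β) 0 (x - b))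
        else 0 := by
  have hp := openProb_mem_Icc (edgeRate_nonneg hJ.nonneg) hβ
  have hT := translationInvariant_openProb hJ.transInv β
  have hB0 : 0 ≤ B := (mul_nonneg hβ (hJ.c_pos.le.trans hJ.c_le_C)).trans hB
  set p := openProb (edgeRate J) β
  have hterm_nonneg (a b : V d) : 0 ≤ if normInf a ≤ ρ ∧ ρ < normInf b then
      tauIn (box d n) p 0 a * (B * (normInf (b - a) : ℝ) ^ (-((d : ℝ) + α)) * tau p 0 (x - b))
      else 0 := by
    split_ifs
    exacts [mul_nonneg (tauIn_nonneg _ hp _ _) (mul_nonneg (by positivity) (tau_nonneg hp _ _)),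
      le_rfl]
  refine (simon_lieb (box_mono hρN) hp (zero_mem_box d ρ) x).trans
    (add_le_add (tauIn_mono (box_mono hρn) hp _ _) ?_)
  refine le_trans (Finset.sum_le_sum fun a ha => le_trans (Finset.sum_le_sum fun b hb => ?_)
    (Finset.sum_le_sum_of_subset_of_nonneg Finset.sdiff_subset fun b _ _ => hterm_nonneg a b))
    (Finset.sum_le_sum_of_subset_of_nonneg (box_mono hρn)
      fun a _ _ => Finset.sum_nonneg fun b _ => hterm_nonneg a b)
  rw [Finset.mem_sdiff, mem_box, mem_box, not_le] at hb
  rw [mem_box] at ha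
  rw [if_pos ⟨ha, hb.2⟩, mul_assoc, ← tau_eq_tau_zero_sub hp hT]
  have hab : a ≠ b := by
    rintro rfl
    omega
  exact mul_le_mul (tauIn_mono (box_mono hρn) hp _ _)
    (mul_le_mul (openProb_le_rpow hJ hβ hB hab) (tauIn_le_tau hp _ _ _) (tauIn_nonneg _ hp _ _)
      (by positivity)) (mul_nonneg (hp _).1 (tauIn_nonneg _ hp _ _)) (tauIn_nonneg _ hp _ _)

theorem tauIn_box_le_add_sum_exitFraction (hJ : KernelHyp d J α c C) (hβ : 0 ≤ β) (hB : β * C ≤ B)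
    {R : ℕ} (hR : 1 ≤ R) (x : V d) (N : ℕ) :
    tauIn (box d N) (openProb (edgeRate J) β) 0 x ≤
      tauIn (box d (2 * R)) (openProb (edgeRate J) β) 0 x + ∑ a ∈ box d (2 * R),
        tauIn (box d (2 * R)) (openProb (edgeRate J) β) 0 a * ∑ b ∈ box d N,
          B * ((normInf (b - a) : ℝ) ^ (-((d : ℝ) + α)) *
            (exitFraction R a b * tau (openProb (edgeRate J) β) 0 (x - b))) := by
  have hp := openProb_mem_Icc (edgeRate_nonneg hJ.nonneg) hβ
  have hB0 : 0 ≤ B := (mul_nonneg hβ (hJ.c_pos.le.trans hJ.c_le_C)).trans hB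
  rcases le_total N (2 * R) with hN | hN
  · exact le_add_of_le_of_nonneg (tauIn_mono (box_mono hN) hp _ _) <|
      Finset.sum_nonneg fun a _ => mul_nonneg (tauIn_nonneg _ hp _ _) <|
        Finset.sum_nonneg fun b _ => mul_nonneg hB0 <| mul_nonneg (by positivity) <|
          mul_nonneg (exitFraction_nonneg _ _ _) (tau_nonneg hp _ _)
  · refine (le_add_sum_exitFraction hR fun ρ hρ => tauIn_box_le_add_sum_exit hJ hβ hB
      (Finset.mem_Ico.1 hρ).2.le ((Finset.mem_Ico.1 hρ).2.le.trans hN) x).trans_eq ?_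
    simp_rw [Finset.mul_sum]
    congr! 3
    ring

theorem twoPointBounds_tau (hJ : KernelHyp d J α c C) (hβ : 0 ≤ β) (hB : β * C ≤ B)
    (hA : ∀ r : ℕ, 1 ≤ r →
      ∑ a ∈ box d r, tauIn (box d r) (openProb (edgeRate J) β) 0 a ≤ A * (r : ℝ) ^ α) :
    TwoPointBounds α A B (fun x => tau (openProb (edgeRate J) β) 0 x)
      (fun n x => tauIn (box d n) (openProb (edgeRate J) β) 0 x) := by
  have hp := openProb_mem_Icc (edgeRate_nonneg hJ.nonneg) hβ
  exact {
    nonneg := tau_nonneg hp 0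
    le_one := tau_le_one hp 0
    map_neg := tau_zero_neg hp (translationInvariant_openProb hJ.transInv β)
    box_nonneg := fun n => tauIn_nonneg (box d n) hp 0
    box_eq_zero := fun n x hx => tauIn_eq_zero (zero_mem_box d n) (mt mem_box.1 hx.not_ge) _
    sum_box_le := hA
    le_of_box_le := fun _ _ => ciSup_le
    simon_lieb := fun R hR => tauIn_box_le_add_sum_exitFraction hJ hβ hB hR }

end AveragedSimonLieb

section KernelSums

variable {d : ℕ} {α γ : ℝ}

theorem exists_sum_box_kernel_mul_norm_le (d : ℕ) (hα : α < 1) :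
    ∃ K : ℝ, 0 < K ∧ ∀ (M : ℝ) (l : ℕ), 0 ≤ M → 1 ≤ l →
      ∑ v ∈ box d l, (normInf v : ℝ) ^ (-((d : ℝ) + α)) * (normInf v * M) ≤
        K * ((l : ℝ) ^ (1 - α) * M) := by
  obtain ⟨K, hK, hsum⟩ := exists_sum_punctured_box_le d d ((d : ℝ) + α - 1)
  rw [show (d : ℝ) - (d + α - 1) = 1 - α by ring] at hsum
  refine ⟨K * 3 ^ d, by positivity, fun M l hM hl => ?_⟩
  calc _ = ∑ v ∈ box d l \ box d 0, (normInf v : ℝ) ^ (-((d : ℝ) + α - 1)) * M := by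
        rw [← Finset.sum_subset (Finset.sdiff_subset (t := box d 0)) fun v hv hv0 => by
          rw [Finset.mem_sdiff, not_and_not_right] at hv0
          simp [Nat.le_zero.1 (mem_box.1 (hv0 hv))]]
        refine Finset.sum_congr rfl fun v hv => ?_
        rw [Finset.mem_sdiff, mem_box, mem_box, not_le] at hv
        rw [show -((d : ℝ) + α - 1) = -((d : ℝ) + α) + 1 by ring,
          Real.rpow_add_one (mod_cast hv.2.ne'), mul_assoc]
    _ ≤ K * (3 ^ d * M) * dyadicRate (1 - α) l := hsum _ _ (boxGrowth_const hM) l hl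
    _ = _ := by
        rw [dyadicRate_of_pos (sub_pos.2 hα)]
        ring

theorem exists_sum_kernel_le (d : ℕ) (hα : α < 1) (hγ : γ < d + α) :
    ∃ K : ℝ, 0 < K ∧ ∀ {f h : V d → ℝ} {G M : ℝ} {l : ℕ}, 1 ≤ l → 0 ≤ M → BoxGrowth h G γ →
      (∀ v, normInf v ≤ l → f v ≤ normInf v * M) → (∀ v, l < normInf v → f v ≤ h v) →
      ∀ s : Finset (V d), ∑ v ∈ s, (normInf v : ℝ) ^ (-((d : ℝ) + α)) * f v ≤
        K * ((l : ℝ) ^ (1 - α) * M + G * (l : ℝ) ^ (γ - (d + α))) := by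
  obtain ⟨K₁, hK₁, hnear⟩ := exists_sum_box_kernel_mul_norm_le d hα
  obtain ⟨K₂, hK₂, hfar⟩ := exists_sum_outside_box_le d hγ
  refine ⟨K₁ + K₂, by positivity, fun {f h G M l} hl hM hh hfnear hffar s => ?_⟩
  obtain ⟨N, hN⟩ := exists_subset_box s
  have hG := hh.bound_nonneg
  have hsum_near : ∑ v ∈ s with normInf v ≤ l, (normInf v : ℝ) ^ (-((d : ℝ) + α)) * f v ≤
      K₁ * ((l : ℝ) ^ (1 - α) * M) :=
    calc _ ≤ ∑ v ∈ s with normInf v ≤ l,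
          (normInf v : ℝ) ^ (-((d : ℝ) + α)) * (normInf v * M) := Finset.sum_le_sum fun v hv =>
          mul_le_mul_of_nonneg_left (hfnear v (Finset.mem_filter.1 hv).2) (by positivity)
      _ ≤ _ := (Finset.sum_le_sum_of_subset_of_nonneg
          (fun v hv => mem_box.2 (Finset.mem_filter.1 hv).2)
          fun v _ _ => by positivity).trans (hnear M l hM hl)
  have hsum_far : ∑ v ∈ s with ¬normInf v ≤ l, (normInf v : ℝ) ^ (-((d : ℝ) + α)) * f v ≤
      K₂ * G * (l : ℝ) ^ (γ - (d + α)) :=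
    calc _ ≤ ∑ v ∈ s with ¬normInf v ≤ l, (normInf v : ℝ) ^ (-((d : ℝ) + α)) * h v :=
          Finset.sum_le_sum fun v hv => mul_le_mul_of_nonneg_left
            (hffar v (not_le.1 (Finset.mem_filter.1 hv).2)) (by positivity)
      _ ≤ _ := (Finset.sum_le_sum_of_subset_of_nonneg
          (fun v hv => Finset.mem_sdiff.2 ⟨hN (Finset.mem_filter.1 hv).1,
            mt mem_box.1 (Finset.mem_filter.1 hv).2⟩)
          fun v _ _ => hh.weighted_nonneg _ v).trans (hfar h G hh l N hl)
  rw [← Finset.sum_filter_add_sum_filter_not s fun v => normInf v ≤ l]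
  calc _ ≤ K₁ * ((l : ℝ) ^ (1 - α) * M) + K₂ * G * (l : ℝ) ^ (γ - (d + α)) :=
        add_le_add hsum_near hsum_far
    _ ≤ _ := by
        have hcross₁ : 0 ≤ K₁ * (G * (l : ℝ) ^ (γ - (d + α))) := by positivity
        have hcross₂ : 0 ≤ K₂ * ((l : ℝ) ^ (1 - α) * M) := by positivity
        linarith

theorem sum_translate {s : Finset (V d)} (f : V d → ℝ) (a : V d) :
    ∑ b ∈ s, f b = ∑ v ∈ s.map (Equiv.subRight a).toEmbedding, f (a + v) := by
  simp [Finset.sum_map]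

theorem two_mul_rpow_le {r : ℝ} (hr : 0 ≤ r) (hα : α ≤ 1) : (2 * r) ^ α ≤ 2 * r ^ α := by
  rw [Real.mul_rpow zero_le_two hr]
  refine mul_le_mul_of_nonneg_right ?_ (by positivity)
  simpa using Real.rpow_le_rpow_of_exponent_le one_le_two hα

end KernelSums

section Bootstrap

variable {d : ℕ} {α γ A B : ℝ} {τ : V d → ℝ} {t : ℕ → V d → ℝ}

theorem TwoPointBounds.bound_nonneg (hτ : TwoPointBounds α A B τ t) : 0 ≤ A := by
  simpa using (Finset.sum_nonneg fun v _ => hτ.box_nonneg 1 v).trans (hτ.sum_box_le 1 le_rfl)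

theorem TwoPointBounds.le_add_mul_of_sum_le (hτ : TwoPointBounds α A B τ t) (hB : 0 ≤ B)
    (hα : α ≤ 1) {R : ℕ} (hR : 1 ≤ R) {x : V d} {S : ℝ} (hS : 0 ≤ S)
    (hsum : ∀ a, normInf a ≤ 2 * R → ∀ s : Finset (V d),
      ∑ v ∈ s, (normInf v : ℝ) ^ (-((d : ℝ) + α)) *
        (exitFraction R a (a + v) * τ (x - (a + v))) ≤ S) :
    τ x ≤ t (2 * R) x + A * B * (2 * (R : ℝ) ^ α * S) := by
  have hA := hτ.bound_nonneg
  refine hτ.le_of_box_le x _ fun N => (hτ.simon_lieb R hR x N).trans (add_le_add le_rfl ?_)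
  calc _ ≤ ∑ a ∈ box d (2 * R), t (2 * R) a * (B * S) := Finset.sum_le_sum fun a ha => by
        rw [← Finset.mul_sum, sum_translate _ a]
        simp only [add_sub_cancel_left]
        exact mul_le_mul_of_nonneg_left (mul_le_mul_of_nonneg_left
          (hsum a (mem_box.1 ha) _) hB) (hτ.box_nonneg _ _)
    _ ≤ A * ((2 * R : ℕ) : ℝ) ^ α * (B * S) := by
        rw [← Finset.sum_mul]
        exact mul_le_mul_of_nonneg_right (hτ.sum_box_le _ (by omega)) (by positivity)
    _ ≤ A * (2 * (R : ℝ) ^ α) * (B * S) := by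
        push_cast
        gcongr
        exact two_mul_rpow_le (by positivity) hα
    _ = _ := by ring

theorem exists_le_box_add (d : ℕ) (hα : α < 1) (hγ : γ < d + α) :
    ∃ K : ℝ, 0 < K ∧ ∀ {A B : ℝ} {τ : V d → ℝ} {t : ℕ → V d → ℝ}, TwoPointBounds α A B τ t →
      0 ≤ B → ∀ {R l : ℕ} {M G : ℝ} {x : V d} {h : V d → V d → ℝ}, 1 ≤ R → 1 ≤ l → 0 ≤ M →
      (∀ a, BoxGrowth (h a) G γ) →
      (∀ a v, normInf a ≤ 2 * R → R < normInf (a + v) →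
        (normInf v ≤ l → τ (x - (a + v)) ≤ M) ∧ (l < normInf v → τ (x - (a + v)) ≤ h a v)) →
      τ x ≤ t (2 * R) x + A * B * K *
        ((R : ℝ) ^ α * ((l : ℝ) ^ (1 - α) / R) * M +
          (R : ℝ) ^ α * (l : ℝ) ^ (γ - (d + α)) * G) := by
  obtain ⟨K, hK, hkernel⟩ := exists_sum_kernel_le d hα hγ
  refine ⟨2 * K, by positivity, fun {A B τ t} hτ hB {R l M G x h} hR hl hM hh hbound => ?_⟩
  have hG := (hh 0).bound_nonneg
  have hnear (a v : V d) (ha : normInf a ≤ 2 * R) (hv : normInf v ≤ l) :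
      exitFraction R a (a + v) * τ (x - (a + v)) ≤ normInf v * (M / R) := by
    rcases le_or_gt (normInf (a + v)) R with hav | hav
    · rw [exitFraction_eq_zero hav, zero_mul]
      positivity
    · have hfrac := exitFraction_le R a (a + v)
      rw [add_sub_cancel_left] at hfrac
      calc _ ≤ (normInf v : ℝ) / R * M := mul_le_mul hfrac ((hbound a v ha hav).1 hv)
            (hτ.nonneg _) (by positivity)
        _ = _ := by ring
  have hfar (a v : V d) (ha : normInf a ≤ 2 * R) (hv : l < normInf v) :
      exitFraction R a (a + v) * τ (x - (a + v)) ≤ h a v := by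
    rcases le_or_gt (normInf (a + v)) R with hav | hav
    · rw [exitFraction_eq_zero hav, zero_mul]
      exact (hh a).nonneg v
    · exact (mul_le_of_le_one_left (hτ.nonneg _) (exitFraction_le_one _ _ _)).trans
        ((hbound a v ha hav).2 hv)
  refine (hτ.le_add_mul_of_sum_le hB hα.le hR
    (S := K * ((l : ℝ) ^ (1 - α) * (M / R) + G * (l : ℝ) ^ (γ - (d + α)))) (by positivity)
    fun a ha => hkernel hl (by positivity) (hh a) (fun v => hnear a v ha)
      fun v => hfar a v ha).trans_eq ?_
  ring

end Bootstrap

section PointwiseDecay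

variable {d : ℕ} {α B : ℝ} {τ : V d → ℝ}

theorem mul_rpow_mul_rpow_div {m l : ℝ} (hm : 0 < m) (hl : 0 < l) (α : ℝ) :
    (m * l) ^ α * (l ^ (1 - α) / (m * l)) = m ^ (-(1 - α)) := by
  rw [Real.mul_rpow hm.le hl.le, neg_sub, Real.rpow_sub hl, Real.rpow_sub hm, Real.rpow_one,
    Real.rpow_one]
  field_simp

theorem mul_rpow_mul_rpow_neg {m l : ℝ} (hm : 0 < m) (hl : 0 < l) (α s : ℝ) :
    (m * l) ^ α * l ^ (-s) = m ^ s * (m * l) ^ (-(s - α)) := by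
  rw [neg_sub, Real.rpow_sub (mul_pos hm hl), Real.mul_rpow hm.le hl.le (z := s),
    Real.rpow_neg hl.le]
  field_simp

theorem rpow_neg_le_of_le_mul {n k r E : ℝ} (hn : 0 < n) (hk : 0 < k) (h : n ≤ k * r)
    (hE : 0 ≤ E) : r ^ (-E) ≤ k ^ E * n ^ (-E) := by
  calc r ^ (-E) ≤ (n / k) ^ (-E) :=
        Real.rpow_le_rpow_of_nonpos (by positivity) ((div_le_iff₀' hk).2 h) (by linarith)
    _ = _ := by
        rw [Real.div_rpow hn.le hk.le, Real.rpow_neg hk.le, div_inv_eq_mul, mul_comm]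

theorem exists_natCast_mul_rpow_neg_le_half (c : ℝ) {e : ℝ} (he : 0 < e) :
    ∃ m : ℕ, 1 ≤ m ∧ c * (m : ℝ) ^ (-e) ≤ 1 / 2 := by
  have hlim : Filter.Tendsto (fun m : ℕ => c * (m : ℝ) ^ (-e)) Filter.atTop (nhds (c * 0)) :=
    ((tendsto_rpow_neg_atTop he).comp tendsto_natCast_atTop_atTop).const_mul c
  rw [mul_zero] at hlim
  obtain ⟨m, hm, hm1⟩ :=
    ((hlim.eventually_le_const one_half_pos).and (Filter.eventually_ge_atTop 1)).exists
  exact ⟨m, hm1, hm⟩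

/-- The sums of `τ` over the translates of the box of radius `r` are at most `G * r ^ γ`,
uniformly in the translate. -/
def UniformBoxGrowth (τ : V d → ℝ) (G γ : ℝ) : Prop := ∀ z, BoxGrowth (fun v => τ (z + v)) G γ

theorem exists_le_of_forall_le (hd : 0 < d) (hα : α < 1) :
    ∃ K : ℝ, 0 < K ∧ ∀ {A B : ℝ} {τ : V d → ℝ} {t : ℕ → V d → ℝ}, TwoPointBounds α A B τ t →
      0 ≤ B → ∀ {G : ℝ}, UniformBoxGrowth τ G α → ∀ {m l n : ℕ} {x : V d} {M : ℝ}, 1 ≤ m → 1 ≤ l →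
      4 * (m * l) ≤ n → n ≤ normInf x → 0 ≤ M → (∀ z, n ≤ 4 * normInf z → τ z ≤ M) →
      τ x ≤ A * B * K * ((m : ℝ) ^ (-(1 - α)) * M +
        (m : ℝ) ^ (d : ℝ) * ((m * l : ℕ) : ℝ) ^ (-((d : ℝ) - α)) * G) := by
  have hd' : (0 : ℝ) < d := mod_cast hd
  obtain ⟨K, hK, hstep⟩ := exists_le_box_add d hα (γ := α) (by linarith)
  refine ⟨K, hK, fun {A B τ t} hτ hB {G} hG {m l n x M} hm hl hmln hx hM hfar => ?_⟩
  have hml : 1 ≤ m * l := Nat.mul_pos hm hl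
  have hl_le : l ≤ m * l := Nat.le_mul_of_pos_left l hm
  have hgrowth (a : V d) : BoxGrowth (fun v => τ (x - (a + v))) G α := by
    convert hG (a - x) using 2 with v
    rw [← hτ.map_neg]
    congr 1
    abel
  have hle := hstep hτ hB (M := M) (x := x) hml hl hM hgrowth fun a v ha _ =>
    ⟨fun hv => hfar _ <| by
      have hdiff := normInf_add_le (x - (a + v)) (a + v)
      have hsum := normInf_add_le a v
      rw [sub_add_cancel] at hdiff
      omega, fun _ => le_rfl⟩
  rwa [hτ.box_eq_zero _ x (by omega), zero_add, show α - (d + α) = -(d : ℝ) by ring, Nat.cast_mul,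
    mul_rpow_mul_rpow_div (mod_cast hm) (mod_cast hl),
    mul_rpow_mul_rpow_neg (mod_cast hm) (mod_cast hl), ← Nat.cast_mul] at hle

theorem exists_four_mul_le_le_eight_mul {m n : ℕ} (hm : 1 ≤ m) (hn : 8 * m < n) :
    ∃ l : ℕ, 1 ≤ l ∧ 4 * (m * l) ≤ n ∧ n ≤ 8 * (m * l) := by
  have hle := Nat.mul_div_le n (4 * m)
  have hlt := Nat.lt_mul_div_succ n (show 0 < 4 * m by omega)
  have hpos : 1 ≤ n / (4 * m) := (Nat.le_div_iff_mul_le (by omega)).2 (by omega)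
  exact ⟨n / (4 * m), hpos, by linarith, by nlinarith⟩

/-- `τ x` decays at least as fast as `H * ‖x‖ ^ (-E)`. -/
def PowerDecay (τ : V d → ℝ) (H E : ℝ) : Prop :=
  ∀ x, x ≠ 0 → τ x ≤ H * (normInf x : ℝ) ^ (-E)

theorem le_of_contraction {H E ε : ℝ} (hτ : ∀ x, τ x ≤ 1) (hE : 0 ≤ E) (hε : ε * 4 ^ E ≤ 1 / 2)
    {n₀ : ℕ} (hn₀ : 1 ≤ n₀) (hH : (n₀ : ℝ) ^ E ≤ H)
    (hstep : ∀ n x M, n₀ < n → n ≤ normInf x → 0 ≤ M → (∀ z, n ≤ 4 * normInf z → τ z ≤ M) →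
      τ x ≤ ε * M + H / 2 * (n : ℝ) ^ (-E)) (n : ℕ) (hn : 1 ≤ n) (x : V d) (hx : n ≤ normInf x) :
    τ x ≤ H * (n : ℝ) ^ (-E) := by
  have hH0 : 0 ≤ H := le_trans (by positivity) hH
  induction n using Nat.strong_induction_on generalizing x with
  | _ n ih =>
    have hn0 : (0 : ℝ) < n := mod_cast hn
    rcases le_or_gt n n₀ with hsmall | hlarge
    · calc τ x ≤ 1 := hτ x
        _ = (n : ℝ) ^ E * (n : ℝ) ^ (-E) := by
          rw [← Real.rpow_add hn0, add_neg_cancel, Real.rpow_zero]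
        _ ≤ H * (n : ℝ) ^ (-E) := mul_le_mul_of_nonneg_right
          ((Real.rpow_le_rpow hn0.le (mod_cast hsmall) hE).trans hH) (by positivity)
    · have hquarter (z : V d) (hz : n ≤ 4 * normInf z) : τ z ≤ H * (4 ^ E * (n : ℝ) ^ (-E)) :=
        (ih ((n + 3) / 4) (by omega) (by omega) z (by omega)).trans <|
          mul_le_mul_of_nonneg_left (rpow_neg_le_of_le_mul hn0 four_pos
            (mod_cast (by omega : n ≤ 4 * ((n + 3) / 4))) hE) hH0
      calc τ x ≤ ε * (H * (4 ^ E * (n : ℝ) ^ (-E))) + H / 2 * (n : ℝ) ^ (-E) :=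
            hstep n x _ hlarge hx (by positivity) hquarter
        _ = ε * 4 ^ E * (H * (n : ℝ) ^ (-E)) + H / 2 * (n : ℝ) ^ (-E) := by ring
        _ ≤ 1 / 2 * (H * (n : ℝ) ^ (-E)) + H / 2 * (n : ℝ) ^ (-E) :=
            add_le_add (mul_le_mul_of_nonneg_right hε (by positivity)) le_rfl
        _ = H * (n : ℝ) ^ (-E) := by ring

theorem exists_powerDecay_of_uniformBoxGrowth (hα : α < 1) (hαd : α < d) (hd : 0 < d) (A : ℝ)
    (hB : 0 ≤ B) :
    ∃ C₁ : ℝ, 0 < C₁ ∧ ∀ {τ : V d → ℝ} {t : ℕ → V d → ℝ}, TwoPointBounds α A B τ t →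
      ∀ {G : ℝ}, UniformBoxGrowth τ G α → PowerDecay τ (C₁ * (1 + G)) (d - α) := by
  obtain ⟨K, hK, hstep⟩ := exists_le_of_forall_le hd hα
  have hE : 0 ≤ (d : ℝ) - α := (sub_pos.2 hαd).le
  obtain ⟨m, hm, hm_half⟩ :=
    exists_natCast_mul_rpow_neg_le_half (A * B * K * 4 ^ ((d : ℝ) - α)) (sub_pos.2 hα)
  set D := |A| * B * K * (m : ℝ) ^ (d : ℝ) * 8 ^ ((d : ℝ) - α) with hD
  refine ⟨((8 * m : ℕ) : ℝ) ^ ((d : ℝ) - α) + 2 * D, by positivity, fun {τ t} hτ {G} hG x hx => ?_⟩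
  have hA := hτ.bound_nonneg
  have hG0 := (hG 0).bound_nonneg
  have hD0 : 0 ≤ D := by positivity
  have hmE : 0 ≤ ((8 * m : ℕ) : ℝ) ^ ((d : ℝ) - α) := by positivity
  refine le_of_contraction (ε := A * B * K * (m : ℝ) ^ (-(1 - α))) (n₀ := 8 * m) hτ.le_one hE
    (by linarith) (by omega) (by nlinarith) (fun n x M hn hx hM hfar => ?_) _
    (one_le_normInf hx) x le_rfl
  obtain ⟨l, hl, hln, hnl⟩ := exists_four_mul_le_le_eight_mul hm hn
  have hscale : ((m * l : ℕ) : ℝ) ^ (-((d : ℝ) - α)) ≤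
      8 ^ ((d : ℝ) - α) * (n : ℝ) ^ (-((d : ℝ) - α)) :=
    rpow_neg_le_of_le_mul (mod_cast (by omega : 0 < n)) (by norm_num) (mod_cast hnl) hE
  calc τ x ≤ _ := hstep hτ hB hG hm hl hln hx hM hfar
    _ ≤ A * B * K * ((m : ℝ) ^ (-(1 - α)) * M + (m : ℝ) ^ (d : ℝ) *
          (8 ^ ((d : ℝ) - α) * (n : ℝ) ^ (-((d : ℝ) - α))) * G) := by gcongr
    _ = A * B * K * (m : ℝ) ^ (-(1 - α)) * M + D * G * (n : ℝ) ^ (-((d : ℝ) - α)) := by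
        rw [hD, abs_of_nonneg hA]
        ring
    _ ≤ _ := by
        gcongr
        nlinarith

end PointwiseDecay

section UniformGrowth

variable {d : ℕ} {α A B H : ℝ} {τ : V d → ℝ}

theorem exists_le_box_add_const (hα0 : 0 < α) (hα : α < 1) (d : ℕ) :
    ∃ K : ℝ, 0 < K ∧ ∀ {A B : ℝ} {τ : V d → ℝ} {t : ℕ → V d → ℝ}, TwoPointBounds α A B τ t →
      0 ≤ B → ∀ {R : ℕ} {Q : ℝ} {x : V d}, 1 ≤ R → 0 ≤ Q → 2 * normInf x ≤ R →
      (∀ y, R ≤ 2 * normInf y → τ y ≤ Q) → τ x ≤ t (2 * R) x + A * B * K * Q := by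
  obtain ⟨K, hK, hstep⟩ := exists_le_box_add d hα (γ := d) (by linarith)
  refine ⟨K * (1 + 3 ^ d), by positivity, fun {A B τ t} hτ hB {R Q x} hR hQ hx hfar => ?_⟩
  have hR0 : (0 : ℝ) < R := mod_cast hR
  have hfar' (a v : V d) (hav : R < normInf (a + v)) : τ (x - (a + v)) ≤ Q := by
    have hdiff := normInf_sub_le x (x - (a + v))
    rw [_root_.sub_sub_cancel] at hdiff
    exact hfar _ (by omega)
  have hle := hstep hτ hB hR hR hQ (fun _ => boxGrowth_const hQ) fun a v _ hav =>
    ⟨fun _ => hfar' a v hav, fun _ => hfar' a v hav⟩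
  rw [← mul_div_assoc, ← Real.rpow_add hR0, ← Real.rpow_add hR0, add_sub_cancel, Real.rpow_one,
    div_self hR0.ne', show α + (d - (d + α)) = 0 by ring, Real.rpow_zero] at hle
  linarith

theorem sum_add_le_of_box {f : V d → ℝ} (hf : ∀ x, 0 ≤ f x) {z : V d} {r R : ℕ}
    (h : normInf z + r ≤ R) : ∑ v ∈ box d r, f (z + v) ≤ ∑ v ∈ box d R, f v := by
  rw [show ∑ v ∈ box d r, f (z + v) = ∑ v ∈ (box d r).map (addLeftEmbedding z), f v by
    simp [Finset.sum_map]]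
  refine Finset.sum_le_sum_of_subset_of_nonneg (fun y hy => ?_) fun x _ _ => hf x
  obtain ⟨v, hv, rfl⟩ := Finset.mem_map.1 hy
  rw [mem_box] at hv ⊢
  exact (normInf_add_le z v).trans (by omega)

theorem PowerDecay.le_of_le_mul {E : ℝ} (h : PowerDecay τ H E) (hH : 0 ≤ H) (hE : 0 ≤ E) {n : ℕ}
    (hn : 1 ≤ n) {k : ℝ} (hk : 0 < k) {x : V d} (hx : (n : ℝ) ≤ k * normInf x) :
    τ x ≤ H * (k ^ E * (n : ℝ) ^ (-E)) := by
  have hn0 : (0 : ℝ) < n := mod_cast hn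
  have hx0 : x ≠ 0 := by
    rintro rfl
    rw [normInf_zero, Nat.cast_zero, mul_zero] at hx
    linarith
  exact (h x hx0).trans (mul_le_mul_of_nonneg_left (rpow_neg_le_of_le_mul hn0 hk hx hE) hH)

theorem PowerDecay.le_of_le {E : ℝ} (h : PowerDecay τ H E) (hH : 0 ≤ H) (hE : 0 ≤ E) {n : ℕ}
    (hn : 1 ≤ n) {x : V d} (hx : n ≤ normInf x) : τ x ≤ H * (n : ℝ) ^ (-E) := by
  simpa using h.le_of_le_mul hH hE hn one_pos (x := x) (by rw [one_mul]; exact_mod_cast hx)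

theorem sum_box_const_le {L r : ℕ} (hr : 1 ≤ r) (hH : 0 ≤ H) :
    ∑ _v ∈ box d r, H * ((L * r : ℕ) : ℝ) ^ (-((d : ℝ) - α)) ≤
      3 ^ d * H * (L : ℝ) ^ (-((d : ℝ) - α)) * (r : ℝ) ^ α := by
  have hr0 : (0 : ℝ) < r := mod_cast hr
  refine ((boxGrowth_const (by positivity)).sum_le r hr).trans_eq ?_
  have hexp : (r : ℝ) ^ α = (r : ℝ) ^ (-((d : ℝ) - α)) * (r : ℝ) ^ (d : ℝ) := by
    rw [← Real.rpow_add hr0]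
    congr 1
    ring
  rw [Nat.cast_mul, Real.mul_rpow (by positivity) hr0.le, hexp]
  ring

theorem PowerDecay.sum_far_box_le (h : PowerDecay τ H (d - α)) (hH : 0 ≤ H) (hαd : α ≤ d)
    {L r : ℕ} (hL : 1 ≤ L) (hr : 1 ≤ r) {z : V d} (hz : (L + 1) * r ≤ normInf z) :
    ∑ v ∈ box d r, τ (z + v) ≤ 3 ^ d * H * (L : ℝ) ^ (-((d : ℝ) - α)) * (r : ℝ) ^ α := by
  refine (Finset.sum_le_sum fun v hv => ?_).trans (sum_box_const_le hr hH)
  have hdiff := normInf_sub_le (z + v) v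
  rw [mem_box] at hv
  rw [add_sub_cancel_right] at hdiff
  exact h.le_of_le hH (sub_nonneg.2 hαd) (Nat.mul_pos hL hr) (by linarith)

theorem exists_sum_near_box_le (hα0 : 0 < α) (hα : α < 1) (hαd : α ≤ d) :
    ∃ K : ℝ, 0 < K ∧ ∀ {A B : ℝ} {τ : V d → ℝ} {t : ℕ → V d → ℝ}, TwoPointBounds α A B τ t →
      0 ≤ B → ∀ {H : ℝ}, 0 ≤ H → PowerDecay τ H (d - α) → ∀ {L r : ℕ}, 1 ≤ L → 1 ≤ r →
      ∀ {z : V d}, normInf z ≤ (L + 1) * r → ∑ v ∈ box d r, τ (z + v) ≤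
        A * (4 * (L + 2)) ^ α * (r : ℝ) ^ α +
          3 ^ d * (A * B * K * H) * (L : ℝ) ^ (-((d : ℝ) - α)) * (r : ℝ) ^ α := by
  obtain ⟨K, hK, hstep⟩ := exists_le_box_add_const hα0 hα d
  refine ⟨K, hK, fun {A B τ t} hτ hB {H} hH hdecay {L r} hL hr {z} hz => ?_⟩
  have hA := hτ.bound_nonneg
  have hLr : 1 ≤ L * r := Nat.mul_pos hL hr
  have hpoint (v : V d) (hv : v ∈ box d r) :
      τ (z + v) ≤ t (2 * (2 * ((L + 2) * r))) (z + v) +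
        A * B * K * H * ((L * r : ℕ) : ℝ) ^ (-((d : ℝ) - α)) := by
    have hnorm := normInf_add_le z v
    rw [mem_box] at hv
    rw [mul_assoc _ H]
    exact hstep hτ hB (by linarith) (by positivity) (by linarith) fun y hy =>
      hdecay.le_of_le hH (sub_nonneg.2 hαd) hLr (by linarith)
  refine (Finset.sum_le_sum hpoint).trans ?_
  rw [Finset.sum_add_distrib]
  refine add_le_add ?_ (sum_box_const_le hr (by positivity))
  calc _ ≤ ∑ v ∈ box d (2 * (2 * ((L + 2) * r))), t (2 * (2 * ((L + 2) * r))) v :=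
        sum_add_le_of_box (hτ.box_nonneg _) (by linarith)
    _ ≤ A * ((2 * (2 * ((L + 2) * r)) : ℕ) : ℝ) ^ α := hτ.sum_box_le _ (by linarith)
    _ = _ := by
        rw [mul_assoc, ← Real.mul_rpow (by positivity) (by positivity)]
        push_cast
        ring_nf

theorem exists_uniformBoxGrowth_of_powerDecay (hα0 : 0 < α) (hα : α < 1) (hαd : α ≤ d) :
    ∃ K : ℝ, ∀ {A B : ℝ} {τ : V d → ℝ} {t : ℕ → V d → ℝ}, TwoPointBounds α A B τ t →
      0 ≤ B → ∀ {H : ℝ}, 0 ≤ H → PowerDecay τ H (d - α) → ∀ {L : ℕ}, 1 ≤ L →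
      UniformBoxGrowth τ (A * (4 * (L + 2)) ^ α +
        3 ^ d * ((1 + A * B * K) * H) * (L : ℝ) ^ (-((d : ℝ) - α))) α := by
  obtain ⟨K, hK, hnear⟩ := exists_sum_near_box_le hα0 hα hαd
  refine ⟨K, fun {A B τ t} hτ hB {H} hH hdecay {L} hL z =>
    ⟨fun v => hτ.nonneg _, fun r hr => ?_⟩⟩
  have hA := hτ.bound_nonneg
  have hfar_nonneg : 0 ≤ 3 ^ d * H * (L : ℝ) ^ (-((d : ℝ) - α)) * (r : ℝ) ^ α := by positivity
  have hnear_nonneg : 0 ≤ A * (4 * (L + 2)) ^ α * (r : ℝ) ^ α +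
      3 ^ d * (A * B * K * H) * (L : ℝ) ^ (-((d : ℝ) - α)) * (r : ℝ) ^ α := by positivity
  rcases le_total ((L + 1) * r) (normInf z) with hz | hz
  · linarith [hdecay.sum_far_box_le hH hαd hL hr hz]
  · linarith [hnear hτ hB hH hdecay hL hr hz]

theorem uniformBoxGrowth_tsum (hα : 0 ≤ α) (hτ : ∀ x, 0 ≤ τ x) (hs : Summable τ) :
    UniformBoxGrowth τ (∑' x, τ x) α := fun z =>
  ⟨fun v => hτ _, fun r hr => by
    calc ∑ v ∈ box d r, τ (z + v) = ∑ v ∈ (box d r).map (addLeftEmbedding z), τ v := by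
          simp [Finset.sum_map]
      _ ≤ ∑' x, τ x := hs.sum_le_tsum _ fun x _ => hτ x
      _ ≤ (∑' x, τ x) * (r : ℝ) ^ α :=
          le_mul_of_one_le_right (tsum_nonneg hτ) (Real.one_le_rpow (mod_cast hr) hα)⟩

theorem UniformBoxGrowth.mono {G G' : ℝ} (h : UniformBoxGrowth τ G α) (hG : G ≤ G') :
    UniformBoxGrowth τ G' α := fun z =>
  ⟨(h z).nonneg, fun r hr =>
    ((h z).sum_le r hr).trans (mul_le_mul_of_nonneg_right hG (by positivity))⟩

theorem uniformBoxGrowth_sInf (h : ∃ G, UniformBoxGrowth τ G α) :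
    UniformBoxGrowth τ (sInf {G | UniformBoxGrowth τ G α}) α := fun z =>
  ⟨fun v => (h.choose_spec z).nonneg v, fun r hr => by
    have hrα : 0 < (r : ℝ) ^ α := Real.rpow_pos_of_pos (mod_cast hr) α
    rw [← div_le_iff₀ hrα]
    exact le_csInf h fun G hG => (div_le_iff₀ hrα).2 ((hG z).sum_le r hr)⟩

theorem uniformBoxGrowth_two_mul_of_improvement {G₀ : ℝ} (h : ∃ G, UniformBoxGrowth τ G α)
    (himprove : ∀ G, UniformBoxGrowth τ G α → UniformBoxGrowth τ (G₀ + G / 2) α) :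
    UniformBoxGrowth τ (2 * G₀) α := by
  have hbdd : BddBelow {G | UniformBoxGrowth τ G α} := ⟨0, fun G hG => (hG 0).bound_nonneg⟩
  have hle := csInf_le hbdd (himprove _ (uniformBoxGrowth_sInf h))
  exact (uniformBoxGrowth_sInf h).mono (by linarith)

theorem exists_uniformBoxGrowth_and_powerDecay (hα0 : 0 < α) (hα : α < 1) (hαd : α < d)
    (hA : 0 ≤ A) (hB : 0 ≤ B) :
    ∃ G H : ℝ, 0 < G ∧ 0 < H ∧ ∀ {τ : V d → ℝ} {t : ℕ → V d → ℝ}, TwoPointBounds α A B τ t →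
      Summable τ → UniformBoxGrowth τ G α ∧ PowerDecay τ H (d - α) := by
  obtain ⟨C₁, hC₁, hdecay⟩ := exists_powerDecay_of_uniformBoxGrowth hα hαd
    (mod_cast hα0.trans hαd) A hB
  obtain ⟨K, hgrowth⟩ := exists_uniformBoxGrowth_of_powerDecay hα0 hα hαd.le
  obtain ⟨L, hL, hL_half⟩ :=
    exists_natCast_mul_rpow_neg_le_half (3 ^ d * (1 + A * B * K) * C₁) (sub_pos.2 hαd)
  set G₀ := A * (4 * (L + 2) : ℝ) ^ α + 1 / 2 with hG₀
  refine ⟨2 * G₀, C₁ * (1 + 2 * G₀), by positivity, by positivity, fun {τ t} hτ hs => ?_⟩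
  have himprove (G : ℝ) (hG : UniformBoxGrowth τ G α) : UniformBoxGrowth τ (G₀ + G / 2) α := by
    have hG0 := (hG 0).bound_nonneg
    refine (hgrowth hτ hB (by positivity) (hdecay hτ hG) hL).mono ?_
    linarith [mul_le_mul_of_nonneg_right hL_half (by positivity : 0 ≤ 1 + G)]
  have htwo := uniformBoxGrowth_two_mul_of_improvement
    ⟨_, uniformBoxGrowth_tsum hα0.le hτ.nonneg hs⟩ himprove
  exact ⟨htwo, hdecay hτ htwo⟩

end UniformGrowth

/-! ### The triangle diagram -/

section OrderedTriangles

variable {d : ℕ}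

/-- The contribution to the triangle diagram of the triangle with vertices `0`, `x`, `y`, kept only
if `‖x‖ ≤ ‖y‖` and the side from `x` to `y` has at least half the length of the side from `0` to
`y`. Permuting its vertices, every triangle can be brought into this form. -/
noncomputable def orderedTriangleTerm (f : V d → ℝ≥0∞) (x y : V d) : ℝ≥0∞ :=
  if normInf x ≤ normInf y ∧ normInf y ≤ 2 * normInf (y - x) then f x * f (y - x) * f y else 0

theorem mul_mul_le_orderedTriangleTerm {f : V d → ℝ≥0∞} (hf : ∀ x, f (-x) = f x) (x y : V d) :
    f x * f (y - x) * f y ≤ orderedTriangleTerm f x y + orderedTriangleTerm f y x +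
      orderedTriangleTerm f (y - x) y := by
  have hadd := normInf_add_le (y - x) x
  have hsub := normInf_sub_le y (y - x)
  rw [sub_add_cancel] at hadd
  rw [_root_.sub_sub_cancel] at hsub
  have hf_comm : f (x - y) = f (y - x) := by rw [← hf, neg_sub]
  simp only [orderedTriangleTerm, _root_.sub_sub_cancel, normInf_sub_comm x y, hf_comm]
  by_cases hxy : normInf x ≤ normInf y ∧ normInf y ≤ 2 * normInf (y - x)
  · rw [if_pos hxy, add_assoc]
    exact le_self_add
  by_cases hyx : normInf y ≤ normInf x ∧ normInf x ≤ 2 * normInf (y - x)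
  · rw [if_pos hyx, mul_right_comm, mul_comm (f x), mul_right_comm]
    exact le_add_self.trans le_self_add
  · rw [if_pos (by omega : normInf (y - x) ≤ normInf y ∧ normInf y ≤ 2 * normInf x),
      mul_comm (f (y - x))]
    exact le_add_self

theorem tsum_mul_mul_le_three_mul {f : V d → ℝ≥0∞} (hf : ∀ x, f (-x) = f x) :
    ∑' x, ∑' y, f x * f (y - x) * f y ≤ 3 * ∑' y, ∑' x, orderedTriangleTerm f x y := by
  have hreflect : ∑' x, ∑' y, orderedTriangleTerm f (y - x) y =
      ∑' y, ∑' x, orderedTriangleTerm f x y := by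
    rw [ENNReal.tsum_comm]
    exact tsum_congr fun y => (Equiv.subLeft y).tsum_eq fun x => orderedTriangleTerm f x y
  calc _ ≤ ∑' x, ∑' y, (orderedTriangleTerm f x y + orderedTriangleTerm f y x +
          orderedTriangleTerm f (y - x) y) :=
        ENNReal.tsum_le_tsum fun x => ENNReal.tsum_le_tsum (mul_mul_le_orderedTriangleTerm hf x)
    _ = _ := by
        simp_rw [ENNReal.tsum_add]
        rw [hreflect, ENNReal.tsum_comm]
        ring

variable {α G H : ℝ} {τ : V d → ℝ}

theorem tsum_orderedTriangleTerm_le (hτ : ∀ x, 0 ≤ τ x) {y : V d} {b : ℝ} (hb : 0 ≤ b)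
    (hle : ∀ z, normInf y ≤ 2 * normInf z → τ z ≤ b) :
    ∑' x, orderedTriangleTerm (fun z => ENNReal.ofReal (τ z)) x y ≤
      ENNReal.ofReal ((∑ x ∈ box d (normInf y), τ x) * b * τ y) := by
  have hsupport (x) (hx : x ∉ box d (normInf y)) :
      orderedTriangleTerm (fun z => ENNReal.ofReal (τ z)) x y = 0 :=
    if_neg fun h => hx (mem_box.2 h.1)
  rw [tsum_eq_sum hsupport, Finset.sum_mul, Finset.sum_mul, ENNReal.ofReal_sum_of_nonneg
    fun x _ => mul_nonneg (mul_nonneg (hτ x) hb) (hτ y)]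
  refine Finset.sum_le_sum fun x _ => ?_
  unfold orderedTriangleTerm
  split_ifs with h
  · rw [← ENNReal.ofReal_mul (hτ _), ← ENNReal.ofReal_mul (mul_nonneg (hτ _) (hτ _))]
    exact ENNReal.ofReal_le_ofReal (mul_le_mul_of_nonneg_right
      (mul_le_mul_of_nonneg_left (hle _ h.2) (hτ x)) (hτ y))
  · exact zero_le

theorem box_zero (d : ℕ) : box d 0 = {0} :=
  Finset.eq_singleton_iff_unique_mem.2 ⟨zero_mem_box d 0, fun x hx => by
    by_contra hx0
    have := one_le_normInf hx0
    rw [mem_box] at hx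
    omega⟩

theorem tsum_orderedTriangleTerm_zero_le_one (hτ0 : ∀ x, 0 ≤ τ x) (hτ1 : ∀ x, τ x ≤ 1) :
    ∑' x, orderedTriangleTerm (fun z => ENNReal.ofReal (τ z)) x 0 ≤ 1 := by
  refine (tsum_orderedTriangleTerm_le hτ0 zero_le_one fun z _ => hτ1 z).trans ?_
  rw [normInf_zero, box_zero, Finset.sum_singleton, mul_one, ENNReal.ofReal_le_one]
  exact mul_le_one₀ (hτ1 0) (hτ0 0) (hτ1 0)

theorem tsum_orderedTriangleTerm_le_of_le_normInf (hτ : ∀ x, 0 ≤ τ x) (hαd : α ≤ d) (hH : 0 ≤ H)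
    (hdecay : PowerDecay τ H (d - α)) {n : ℕ} (hn : 1 ≤ n) {y : V d} (hy : n ≤ normInf y) :
    ∑' x, orderedTriangleTerm (fun z => ENNReal.ofReal (τ z)) x y ≤
      ENNReal.ofReal ((∑ x ∈ box d (normInf y), τ x) *
        (H * (2 ^ ((d : ℝ) - α) * (n : ℝ) ^ (-((d : ℝ) - α)))) * τ y) :=
  tsum_orderedTriangleTerm_le hτ (by positivity) fun z hz =>
    hdecay.le_of_le_mul hH (sub_nonneg.2 hαd) hn two_pos (mod_cast hy.trans hz)

theorem sum_near_orderedTriangleTerm_le (hαd : α ≤ d) (hH : 0 ≤ H) (hgrowth : BoxGrowth τ G α)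
    (hdecay : PowerDecay τ H (d - α)) (n : ℕ) :
    ∑ y ∈ box d n \ box d 0, ∑' x, orderedTriangleTerm (fun z => ENNReal.ofReal (τ z)) x y ≤
      ENNReal.ofReal (H * 2 ^ ((d : ℝ) - α) * G *
        ∑ y ∈ box d n \ box d 0, (normInf y : ℝ) ^ (-((d : ℝ) - 2 * α)) * τ y) := by
  have hτ := hgrowth.nonneg
  have hG := hgrowth.bound_nonneg
  rw [Finset.mul_sum, ENNReal.ofReal_sum_of_nonneg fun y _ =>
    mul_nonneg (by positivity) (mul_nonneg (by positivity) (hτ y))]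
  refine Finset.sum_le_sum fun y hy => ?_
  have hy1 : 1 ≤ normInf y := by
    rw [Finset.mem_sdiff, mem_box, mem_box] at hy
    omega
  have hy0 : (0 : ℝ) < normInf y := mod_cast hy1
  refine (tsum_orderedTriangleTerm_le_of_le_normInf hτ hαd hH hdecay hy1 le_rfl).trans
    (ENNReal.ofReal_le_ofReal ?_)
  have hrpow : (normInf y : ℝ) ^ (-((d : ℝ) - 2 * α)) =
      (normInf y : ℝ) ^ α * (normInf y : ℝ) ^ (-((d : ℝ) - α)) := by
    rw [← Real.rpow_add hy0]
    ring_nf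
  calc _ ≤ G * (normInf y : ℝ) ^ α *
        (H * (2 ^ ((d : ℝ) - α) * (normInf y : ℝ) ^ (-((d : ℝ) - α)))) * τ y :=
        mul_le_mul_of_nonneg_right (mul_le_mul_of_nonneg_right (hgrowth.sum_le _ hy1)
          (by positivity)) (hτ y)
    _ = _ := by
        rw [hrpow]
        ring

theorem tsum_far_orderedTriangleTerm_le (hτ : ∀ x, 0 ≤ τ x) (hs : Summable τ) (hαd : α ≤ d)
    (hH : 0 ≤ H) (hdecay : PowerDecay τ H (d - α)) {n : ℕ} (hn : 1 ≤ n) :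
    ∑' y : ↥(box d n : Set (V d))ᶜ, ∑' x, orderedTriangleTerm (fun z => ENNReal.ofReal (τ z)) x y ≤
      ENNReal.ofReal (H * 2 ^ ((d : ℝ) - α) * (n : ℝ) ^ (-((d : ℝ) - α)) * (∑' x, τ x) ^ 2) := by
  set b := H * (2 ^ ((d : ℝ) - α) * (n : ℝ) ^ (-((d : ℝ) - α)))
  have hb : 0 ≤ b := by positivity
  have hχ : 0 ≤ ∑' x, τ x := tsum_nonneg hτ
  have hterm (y : ↥(box d n : Set (V d))ᶜ) :
      ∑' x, orderedTriangleTerm (fun z => ENNReal.ofReal (τ z)) x y ≤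
        ENNReal.ofReal ((∑' x, τ x) * b * τ y) := by
    have hy : n ≤ normInf (y : V d) := (not_le.1 (mt mem_box.2 y.2)).le
    refine (tsum_orderedTriangleTerm_le_of_le_normInf hτ hαd hH hdecay hn hy).trans
      (ENNReal.ofReal_le_ofReal ?_)
    exact mul_le_mul_of_nonneg_right (mul_le_mul_of_nonneg_right
      (hs.sum_le_tsum _ fun x _ => hτ x) hb) (hτ y)
  calc _ ≤ ∑' y : ↥(box d n : Set (V d))ᶜ, ENNReal.ofReal ((∑' x, τ x) * b * τ y) :=
        ENNReal.tsum_le_tsum hterm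
    _ ≤ ∑' y, ENNReal.ofReal ((∑' x, τ x) * b * τ y) :=
        ENNReal.tsum_comp_le_tsum_of_injective Subtype.val_injective _
    _ = ENNReal.ofReal ((∑' x, τ x) * b * ∑' y, τ y) := by
        rw [← ENNReal.ofReal_tsum_of_nonneg (fun y => mul_nonneg (mul_nonneg hχ hb) (hτ y))
          (hs.mul_left _), tsum_mul_left]
    _ = _ := by
        congr 1
        ring

theorem BoxGrowth.rpow_neg_mul_sq_tsum_le (hgrowth : BoxGrowth τ G α) {n : ℕ} (hn : 1 ≤ n)
    (hχ : ∑' x, τ x ≤ 2 * ∑ x ∈ box d n, τ x) :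
    (n : ℝ) ^ (-((d : ℝ) - α)) * (∑' x, τ x) ^ 2 ≤ 4 * G ^ 2 * (n : ℝ) ^ (3 * α - d) := by
  have hn0 : (0 : ℝ) < n := mod_cast hn
  have hχ0 : 0 ≤ ∑' x, τ x := tsum_nonneg hgrowth.nonneg
  have hχ_le : ∑' x, τ x ≤ 2 * (G * (n : ℝ) ^ α) := by linarith [hgrowth.sum_le n hn]
  calc _ ≤ (n : ℝ) ^ (-((d : ℝ) - α)) * (2 * (G * (n : ℝ) ^ α)) ^ 2 := by gcongr
    _ = 4 * G ^ 2 * ((n : ℝ) ^ (-((d : ℝ) - α)) * (n : ℝ) ^ α * (n : ℝ) ^ α) := by ring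
    _ = _ := by
        rw [← Real.rpow_add hn0, ← Real.rpow_add hn0]
        ring_nf

theorem tsum_eq_zero_add_near_add_far (F : V d → ℝ≥0∞) (n : ℕ) :
    ∑' y, F y = F 0 + ∑ y ∈ box d n \ box d 0, F y + ∑' y : ↥(box d n : Set (V d))ᶜ, F y := by
  rw [← ENNReal.sum_add_tsum_compl (box d n),
    ← Finset.sum_sdiff (box_mono n.zero_le), box_zero, Finset.sum_singleton, add_comm (F 0)]

theorem exists_tsum_orderedTriangleTerm_le (hαd : α ≤ d) (hG : 0 < G) (hH : 0 < H) :
    ∃ C₀ : ℝ, 0 < C₀ ∧ ∀ {τ : V d → ℝ}, (∀ x, τ x ≤ 1) → Summable τ → BoxGrowth τ G α →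
      PowerDecay τ H (d - α) → ∀ {n : ℕ}, 1 ≤ n → ∑' x, τ x ≤ 2 * ∑ x ∈ box d n, τ x →
      ∑' y, ∑' x, orderedTriangleTerm (fun z => ENNReal.ofReal (τ z)) x y ≤
        ENNReal.ofReal (C₀ * dyadicRate (3 * α - d) n) := by
  obtain ⟨K, hK, hnear⟩ := exists_sum_punctured_box_le d α (d - 2 * α)
  set H₂ := H * 2 ^ ((d : ℝ) - α)
  refine ⟨1 + H₂ * G * (K * G) + H₂ * (4 * G ^ 2), by positivity,
    fun {τ} hτ1 hs hgrowth hdecay {n} hn hχ => ?_⟩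
  set F : V d → ℝ≥0∞ := fun y => ∑' x, orderedTriangleTerm (fun z => ENNReal.ofReal (τ z)) x y
  set rate := dyadicRate (3 * α - d) n
  have hrate_one : 1 ≤ rate := one_le_dyadicRate _ hn
  have hF_zero : F 0 ≤ ENNReal.ofReal rate :=
    (tsum_orderedTriangleTerm_zero_le_one hgrowth.nonneg hτ1).trans
      (ENNReal.one_le_ofReal.2 hrate_one)
  have hF_near : ∑ y ∈ box d n \ box d 0, F y ≤ ENNReal.ofReal (H₂ * G * (K * G * rate)) := by
    refine (sum_near_orderedTriangleTerm_le hαd hH.le hgrowth hdecay n).trans ?_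
    have hsum := hnear τ G hgrowth n hn
    rw [show α - (d - 2 * α) = 3 * α - d by ring] at hsum
    exact ENNReal.ofReal_le_ofReal (mul_le_mul_of_nonneg_left hsum (by positivity))
  have hF_far : ∑' y : ↥(box d n : Set (V d))ᶜ, F y ≤ ENNReal.ofReal (H₂ * (4 * G ^ 2 * rate)) := by
    refine (tsum_far_orderedTriangleTerm_le hgrowth.nonneg hs hαd hH.le hdecay hn).trans
      (ENNReal.ofReal_le_ofReal ?_)
    rw [mul_assoc]
    exact mul_le_mul_of_nonneg_left ((hgrowth.rpow_neg_mul_sq_tsum_le hn hχ).trans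
      (mul_le_mul_of_nonneg_left (rpow_le_dyadicRate _ hn) (by positivity))) (by positivity)
  rw [tsum_eq_zero_add_near_add_far F n]
  refine (add_le_add (add_le_add hF_zero hF_near) hF_far).trans_eq ?_
  rw [← ENNReal.ofReal_add (by positivity) (by positivity),
    ← ENNReal.ofReal_add (by positivity) (by positivity)]
  ring_nf

theorem exists_tsum_triangle_le (hαd : α ≤ d) (hG : 0 < G) (hH : 0 < H) :
    ∃ C₁ : ℝ, 0 < C₁ ∧ ∀ {τ : V d → ℝ}, (∀ x, τ x ≤ 1) → (∀ x, τ (-x) = τ x) → Summable τ →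
      BoxGrowth τ G α → PowerDecay τ H (d - α) → ∀ {n : ℕ}, 1 ≤ n →
      ∑' x, τ x ≤ 2 * ∑ x ∈ box d n, τ x →
      ∑' x, ∑' y, ENNReal.ofReal (τ x) * ENNReal.ofReal (τ (y - x)) * ENNReal.ofReal (τ y) ≤
        ENNReal.ofReal (C₁ * dyadicRate (3 * α - d) n) := by
  obtain ⟨C₀, hC₀, hordered⟩ := exists_tsum_orderedTriangleTerm_le hαd hG hH
  refine ⟨3 * C₀, by positivity, fun {τ} hτ1 hev hs hgrowth hdecay {n} hn hχ => ?_⟩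
  refine (tsum_mul_mul_le_three_mul (f := fun x => ENNReal.ofReal (τ x))
    fun x => by rw [hev]).trans ?_
  rw [mul_assoc, ENNReal.ofReal_mul zero_le_three, ENNReal.ofReal_ofNat]
  exact mul_le_mul_right (hordered hτ1 hs hgrowth hdecay hn hχ) 3

end OrderedTriangles

/-! ### The correlation length -/

section CorrelationLength

variable {d : ℕ} {P : ℝ → Measure (Config d)} {β : ℝ} {τ : V d → ℝ}

theorem chi_eq_ofReal (hτ : ∀ x, 0 ≤ τ x) (hs : Summable τ)
    (h : ∀ x, twoPoint P β 0 x = ENNReal.ofReal (τ x)) :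
    chi P β = ENNReal.ofReal (∑' x, τ x) :=
  (tsum_congr h).trans (ENNReal.ofReal_tsum_of_nonneg hτ hs).symm

theorem boxSum_eq_ofReal (hτ : ∀ x, 0 ≤ τ x) (h : ∀ x, twoPoint P β 0 x = ENNReal.ofReal (τ x))
    (n : ℕ) : boxSum P β n = ENNReal.ofReal (∑ x ∈ box d n, τ x) := by
  unfold boxSum
  rw [tsum_eq_sum fun x hx => if_neg (mt mem_box.2 hx),
    ENNReal.ofReal_sum_of_nonneg fun x _ => hτ x]
  exact Finset.sum_congr rfl fun x hx => (if_pos (mem_box.1 hx)).trans (h x)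

theorem chi_le_two_mul_boxSum_iff (hτ : ∀ x, 0 ≤ τ x) (hs : Summable τ)
    (h : ∀ x, twoPoint P β 0 x = ENNReal.ofReal (τ x)) (n : ℕ) :
    chi P β ≤ 2 * boxSum P β n ↔ ∑' x, τ x ≤ 2 * ∑ x ∈ box d n, τ x := by
  have hnonneg : 0 ≤ ∑ x ∈ box d n, τ x := Finset.sum_nonneg fun x _ => hτ x
  rw [chi_eq_ofReal hτ hs h, boxSum_eq_ofReal hτ h, ← ENNReal.ofReal_ofNat 2,
    ← ENNReal.ofReal_mul zero_le_two, ENNReal.ofReal_le_ofReal_iff (by positivity)]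

theorem exists_tsum_le_two_mul_sum_box (hτ : ∀ x, 0 ≤ τ x) (hs : Summable τ) :
    ∃ n : ℕ, 1 ≤ n ∧ ∑' x, τ x ≤ 2 * ∑ x ∈ box d n, τ x := by
  rcases (tsum_nonneg hτ).eq_or_lt with hzero | hpos
  · refine ⟨1, le_rfl, ?_⟩
    rw [← hzero]
    exact mul_nonneg zero_le_two (Finset.sum_nonneg fun x _ => hτ x)
  · obtain ⟨s, hhalf⟩ := (hs.hasSum.eventually_const_lt (half_lt_self hpos)).exists
    obtain ⟨r, hr⟩ := exists_subset_box s
    have hle : ∑ x ∈ s, τ x ≤ ∑ x ∈ box d (r + 1), τ x :=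
      Finset.sum_le_sum_of_subset_of_nonneg (hr.trans (box_mono r.le_succ)) fun x _ _ => hτ x
    exact ⟨r + 1, by omega, by linarith⟩

theorem exists_xi_eq_natCast (hτ : ∀ x, 0 ≤ τ x) (hs : Summable τ)
    (h : ∀ x, twoPoint P β 0 x = ENNReal.ofReal (τ x)) :
    ∃ n : ℕ, 1 ≤ n ∧ xi P β = n ∧ ∑' x, τ x ≤ 2 * ∑ x ∈ box d n, τ x := by
  classical
  have hex := exists_tsum_le_two_mul_sum_box hτ hs
  have hiff := chi_le_two_mul_boxSum_iff hτ hs h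
  obtain ⟨hone, hhalf⟩ := Nat.find_spec hex
  refine ⟨Nat.find hex, hone, IsLeast.csInf_eq ⟨⟨_, rfl, hone, (hiff _).2 hhalf⟩, ?_⟩, hhalf⟩
  rintro _ ⟨n, rfl, hn, hχ⟩
  exact_mod_cast Nat.find_min' hex ⟨hn, (hiff n).1 hχ⟩

end CorrelationLength

section MainTheorem

variable {d : ℕ} {J : V d → V d → ℝ} {α c C : ℝ} {P : ℝ → Measure (Config d)}

theorem triangle_eq_tsum_ofReal_tau (hJ : KernelHyp d J α c C) (hP : IsLRP J P) {β : ℝ}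
    (hβ : 0 ≤ β) :
    triangle P β = ∑' x, ∑' y, ENNReal.ofReal (tau (openProb (edgeRate J) β) 0 x) *
      ENNReal.ofReal (tau (openProb (edgeRate J) β) 0 (y - x)) *
      ENNReal.ofReal (tau (openProb (edgeRate J) β) 0 y) := by
  have hp := openProb_mem_Icc (edgeRate_nonneg hJ.nonneg) hβ
  have hT := translationInvariant_openProb hJ.transInv β
  unfold triangle
  refine tsum_congr fun x => tsum_congr fun y => ?_
  rw [twoPoint_eq_ofReal hP hp, twoPoint_eq_ofReal hP hp, twoPoint_eq_ofReal hP hp,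
    tau_eq_tau_zero_sub hp hT x y, tau_symm _ y 0]

theorem exists_triangle_le_dyadicRate_xi (hJ : KernelHyp d J α c C) (hP : IsLRP J P) (hα : α < 1)
    (hβc : 0 < betaC P) :
    ∃ C₁ : ℝ, 0 < C₁ ∧ ∀ β, betaC P / 2 ≤ β → β < betaC P → ∃ n : ℕ, 1 ≤ n ∧ xi P β = n ∧
      triangle P β ≤ ENNReal.ofReal (C₁ * dyadicRate (3 * α - d) n) := by
  have hC : 0 < C := hJ.c_pos.trans_le hJ.c_le_C
  obtain ⟨A, hA, hbox⟩ := exists_sum_tauIn_box_le hJ (half_pos hβc)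
  obtain ⟨G, H, hG, hH, hbounds⟩ := exists_uniformBoxGrowth_and_powerDecay hJ.alpha_pos hα
    hJ.alpha_lt_d hA.le (mul_pos hβc hC).le
  obtain ⟨C₁, hC₁, htriangle⟩ := exists_tsum_triangle_le hJ.alpha_lt_d.le hG hH
  refine ⟨C₁, hC₁, fun β hβ_half hβ_lt => ?_⟩
  have hβ : 0 ≤ β := (half_pos hβc).le.trans hβ_half
  have hs := summable_tau_of_lt_betaC hP hJ.nonneg hJ.transInv hβ hβ_lt
  have hτ := twoPointBounds_tau hJ hβ (mul_le_mul_of_nonneg_right hβ_lt.le hC.le)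
    (hbox β hβ_half hs)
  obtain ⟨hgrowth, hdecay⟩ := hbounds hτ hs
  obtain ⟨n, hn, hxi, hχ⟩ := exists_xi_eq_natCast hτ.nonneg hs
    (twoPoint_eq_ofReal hP (openProb_mem_Icc (edgeRate_nonneg hJ.nonneg) hβ) 0)
  refine ⟨n, hn, hxi, ?_⟩
  rw [triangle_eq_tsum_ofReal_tau hJ hP hβ]
  exact htriangle hτ.le_one hτ.map_neg hs (by simpa using hgrowth 0) hdecay hn hχ

end MainTheorem

/-- Triangle diagram in terms of the correlation length: for `β_c/2 ≤ β < β_c`,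
`∇_β ≤ C₁` if `α < d/3`, `∇_β ≤ C₁(1 + log ξ(β))` if `α = d/3`, and
`∇_β ≤ C₁ ξ(β)^{3α-d}` if `α > d/3`. -/
theorem triangle_correlation_length_bound {d : ℕ} {J : V d → V d → ℝ} {α c C : ℝ}
    (hJ : KernelHyp d J α c C)
    (P : ℝ → Measure (Config d)) (hP : IsLRP J P)
    (hα : α < 1) :
    ∃ C₁ : ℝ, 0 < C₁ ∧ ∀ β : ℝ, betaC P / 2 ≤ β → β < betaC P →
      (α < (d : ℝ) / 3 → triangle P β ≤ ENNReal.ofReal C₁) ∧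
      (α = (d : ℝ) / 3 →
        triangle P β ≤ ENNReal.ofReal (C₁ * (1 + Real.log (xi P β).toReal))) ∧
      ((d : ℝ) / 3 < α →
        triangle P β ≤ ENNReal.ofReal C₁ * xi P β ^ (3 * α - (d : ℝ))) := by
  rcases le_or_gt (betaC P) 0 with hβc | hβc
  · exact ⟨1, one_pos, fun β hβ_half hβ_lt => by linarith⟩
  obtain ⟨C₁, hC₁, hbound⟩ := exists_triangle_le_dyadicRate_xi hJ hP hα hβc
  refine ⟨C₁, hC₁, fun β hβ_half hβ_lt => ?_⟩
  obtain ⟨n, hn, hxi, htriangle⟩ := hbound β hβ_half hβ_lt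
  refine ⟨fun hsmall => ?_, fun hcritical => ?_, fun hlarge => ?_⟩
  · rwa [dyadicRate_of_neg (by linarith), mul_one] at htriangle
  · rwa [show 3 * α - d = 0 by linarith, dyadicRate_zero, ← ENNReal.toReal_natCast n, ← hxi]
      at htriangle
  · rwa [dyadicRate_of_pos (by linarith), ENNReal.ofReal_mul hC₁.le,
      ← ENNReal.ofReal_rpow_of_pos (mod_cast hn), ENNReal.ofReal_natCast, ← hxi] at htriangle

end LRP
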